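/- arXiv:1906.07169 — 6 statements merged into one kernel-verified Lean document; each statement's English description precedes it below -/
import Mathlib

section
/- For every fixed integer m ≥ 1, as n → ∞, ℰ(Y_{m,n}) ∼ (n/ζ(2))^{(m+1)/2} · m! · ζ(m+1). Equivalently, Σ_{λ partition of n} Σ_j λ_j^m ∼ p(n) · (6n/π²)^{(m+1)/2} · m! · ζ(m+1). -/
open Filter Asymptotics Topology

noncomputable def pr (n : ℕ) : ℝ := (Fintype.card (Nat.Partition n) : ℝ)
noncomputable def Qp (n k : ℕ) : ℝ := if k ≤ n then pr (n - k) else 0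
noncomputable def Sm (m n : ℕ) : ℝ := ∑ k ∈ Finset.range n, ((k : ℝ) + 1) ^ m * Qp n (k + 1)
noncomputable def Gm (m j n : ℕ) : ℝ :=
  ∑ d ∈ Finset.range n, ((d : ℝ) + 1) ^ m * Qp n ((d + 1) * j)

lemma pr_pos (n : ℕ) : 0 < pr n := by
  unfold pr
  exact_mod_cast Fintype.card_pos

lemma Qp_nonneg (n k : ℕ) : 0 ≤ Qp n k := by
  unfold Qp; split_ifs
  · exact (pr_pos _).le
  · exact le_rfl

lemma pr_succ (n : ℕ) : pr n ≤ pr (n + 1) := by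
  unfold pr
  have : Function.Injective (fun l : Nat.Partition n =>
      (⟨1 ::ₘ l.parts, by
        intro i hi
        rcases Multiset.mem_cons.1 hi with h | h
        · omega
        · exact l.parts_pos h, by simp [l.parts_sum, add_comm]⟩ : Nat.Partition (n + 1))) := by
    intro a b h
    have h2 := congrArg Nat.Partition.parts h
    simp only at h2
    exact Nat.Partition.ext ((Multiset.cons_inj_right 1).1 h2)
  exact_mod_cast Fintype.card_le_of_injective _ this

lemma pr_mono : Monotone pr := monotone_nat_of_le_succ pr_succ

lemma Qp_anti (n : ℕ) : Antitone (Qp n) := by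
  intro a b hab
  unfold Qp
  split_ifs with h1 h2 h2
  · exact pr_mono (by omega)
  · omega
  · exact (pr_pos _).le
  · exact le_rfl

lemma msum_le {s t : Multiset ℕ} (h : s ≤ t) : s.sum ≤ t.sum := by
  obtain ⟨u, rfl⟩ := Multiset.le_iff_exists_add.1 h
  rw [Multiset.sum_add]; omega

lemma card_count (n d j : ℕ) (hd : 1 ≤ d) :
    (((Finset.univ : Finset (Nat.Partition n)).filter
      (fun l => j ≤ l.parts.count d)).card : ℝ) = Qp n (d * j) := by
  unfold Qp
  split_ifs with h
  · unfold pr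
    rw [← Finset.card_univ (α := Nat.Partition (n - d * j))]
    norm_cast
    symm
    refine Finset.card_bij (fun l _ => (⟨Multiset.replicate j d + l.parts, ?_, ?_⟩ : Nat.Partition n)) ?_ ?_ ?_
    · intro i hi
      rcases Multiset.mem_add.1 hi with h | h
      · rw [Multiset.eq_of_mem_replicate h]; omega
      · exact l.parts_pos h
    · rw [Multiset.sum_add, l.parts_sum, Multiset.sum_replicate, smul_eq_mul, mul_comm j d]; omega
    · intro l _
      simp
    · intro a _ b _ hab
      have h2 := congrArg Nat.Partition.parts hab
      simp only at h2
      exact Nat.Partition.ext (add_left_cancel h2)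
    · intro b hb
      have hb' : Multiset.replicate j d ≤ b.parts := by
        rw [← Multiset.le_count_iff_replicate_le]; simpa using hb
      have hadd : Multiset.replicate j d + (b.parts - Multiset.replicate j d) = b.parts :=
        add_tsub_cancel_of_le hb'
      refine ⟨⟨b.parts - Multiset.replicate j d, ?_, ?_⟩, Finset.mem_univ _, ?_⟩
      · intro i hi
        exact b.parts_pos (Multiset.mem_of_le (Multiset.sub_le_self _ _) hi)
      · have := congrArg Multiset.sum hadd
        rw [Multiset.sum_add, b.parts_sum, Multiset.sum_replicate, smul_eq_mul, mul_comm j d] at this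
        omega
      · exact Nat.Partition.ext hadd
  · norm_cast
    rw [Finset.card_eq_zero, Finset.filter_eq_empty_iff]
    intro l _ hl
    apply h
    rw [Multiset.le_count_iff_replicate_le] at hl
    have := msum_le hl
    rw [l.parts_sum, Multiset.sum_replicate, smul_eq_mul, mul_comm j d] at this
    exact this

lemma map_sum_eq (m n : ℕ) (l : Nat.Partition n) :
    (((l.parts.map (fun p => p ^ m)).sum : ℕ) : ℝ) =
      ∑ j ∈ Finset.range n, ∑ d ∈ Finset.range n,
        ((d : ℝ) + 1) ^ m * (if j + 1 ≤ l.parts.count (d + 1) then 1 else 0) := by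
  have hcount : ∀ d, l.parts.count (d + 1) ≤ n := by
    intro d
    have hl : Multiset.replicate (l.parts.count (d + 1)) (d + 1) ≤ l.parts :=
      Multiset.le_count_iff_replicate_le.1 le_rfl
    have := msum_le hl
    rw [l.parts_sum, Multiset.sum_replicate, smul_eq_mul] at this
    nlinarith
  rw [Finset.sum_comm, Finset.sum_multiset_map_count]
  have h1 : ∑ x ∈ l.parts.toFinset, l.parts.count x • x ^ m =
      ∑ d ∈ Finset.range n, l.parts.count (d + 1) * (d + 1) ^ m := by
    rw [Finset.sum_subset (s₂ := (Finset.range n).image (· + 1))]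
    · rw [Finset.sum_image (by intro a _ b _ h; simpa using h)]
      simp
    · intro x hx
      rw [Multiset.mem_toFinset] at hx
      have h0 := l.parts_pos hx
      have h1 := Multiset.le_sum_of_mem hx
      rw [l.parts_sum] at h1
      simp only [Finset.mem_image, Finset.mem_range]
      exact ⟨x - 1, by omega, by omega⟩
    · intro x _ hx
      rw [Multiset.mem_toFinset] at hx
      rw [Multiset.count_eq_zero_of_notMem hx, zero_smul]
  rw [h1]
  push_cast
  refine Finset.sum_congr rfl fun d _ => ?_
  rw [← Finset.mul_sum, mul_comm]
  congr 1
  rw [Finset.sum_ite, Finset.sum_const_zero, add_zero, Finset.sum_const, nsmul_eq_mul, mul_one]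
  norm_cast
  have : (Finset.range n).filter (fun j => j + 1 ≤ l.parts.count (d + 1)) =
      Finset.range (l.parts.count (d + 1)) := by
    ext j
    have := hcount d
    simp only [Finset.mem_filter, Finset.mem_range]
    omega
  rw [this, Finset.card_range]

lemma ident (m n : ℕ) :
    ((∑ lam : Nat.Partition n, (lam.parts.map (fun p => p ^ m)).sum : ℕ) : ℝ) =
      ∑ j ∈ Finset.range n, Gm m (j + 1) n := by
  push_cast [map_sum_eq]
  rw [Finset.sum_congr rfl (fun l _ => by
    have := map_sum_eq m n l
    push_cast at this
    exact this)]
  rw [Finset.sum_comm]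
  refine Finset.sum_congr rfl fun j _ => ?_
  rw [Finset.sum_comm]
  unfold Gm
  refine Finset.sum_congr rfl fun d _ => ?_
  rw [← Finset.mul_sum, ← card_count n (d + 1) (j + 1) (by omega)]
  simp

lemma ident_one (n : ℕ) : (n : ℝ) * pr n = ∑ j ∈ Finset.range n, Gm 1 (j + 1) n := by
  rw [← ident 1 n]
  simp [Nat.Partition.parts_sum, pr, mul_comm]

lemma Sm_eq (m n : ℕ) : Sm m n = Gm m 1 n := by simp [Sm, Gm]

lemma Gm_nonneg (m j n : ℕ) : 0 ≤ Gm m j n :=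
  Finset.sum_nonneg fun _ _ => mul_nonneg (by positivity) (Qp_nonneg _ _)

lemma Sm_nonneg (m n : ℕ) : 0 ≤ Sm m n := by rw [Sm_eq]; exact Gm_nonneg _ _ _

lemma Sm_one_le (n : ℕ) : Sm 1 n ≤ n * pr n := by
  rw [ident_one, Sm_eq]
  rcases Nat.eq_zero_or_pos n with h | h
  · subst h; simp [Gm]
  · exact Finset.single_le_sum (f := fun j => Gm 1 (j + 1) n)
      (fun j _ => Gm_nonneg _ _ _) (Finset.mem_range.2 h)

lemma Qp_add (n a b : ℕ) (h : a ≤ n) : Qp n (a + b) = Qp (n - a) b := by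
  unfold Qp
  by_cases h1 : a + b ≤ n
  · rw [if_pos h1, if_pos (by omega), Nat.sub_sub]
  · rw [if_neg h1, if_neg (by omega)]

lemma half_step (n h : ℕ) (h0 : 4 * n ≤ h ^ 2) (hh : 0 < h) : Qp n h ≤ pr n / 2 := by
  by_cases hn : h ≤ n
  · have h1 := Sm_one_le n
    have h2 : ∑ k ∈ Finset.range h, ((k : ℝ) + 1) * Qp n h ≤ Sm 1 n := by
      unfold Sm
      calc _ ≤ ∑ k ∈ Finset.range h, ((k : ℝ) + 1) ^ 1 * Qp n (k + 1) := by
            refine Finset.sum_le_sum fun k hk => ?_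
            rw [pow_one]
            exact mul_le_mul_of_nonneg_left (Qp_anti n (by simpa using hk)) (by positivity)
        _ ≤ _ := Finset.sum_le_sum_of_subset_of_nonneg (by simpa using hn)
            (fun _ _ _ => mul_nonneg (by positivity) (Qp_nonneg _ _))
    rw [← Finset.sum_mul] at h2
    have h3 : ∀ N : ℕ, ∑ k ∈ Finset.range N, ((k : ℝ) + 1) = N * (N + 1) / 2 := by
      intro N
      induction N with
      | zero => simp
      | succ N ih => rw [Finset.sum_range_succ, ih]; push_cast; ring
    rw [h3] at h2
    have h4 : (4 * n : ℝ) ≤ h ^ 2 := by exact_mod_cast h0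
    have hnpos : (0 : ℝ) < n := by exact_mod_cast (by omega : 0 < n)
    have h5 : (2 * n : ℝ) * Qp n h ≤ n * pr n := by
      have : (0 : ℝ) ≤ h := by positivity
      have hq := Qp_nonneg n h
      nlinarith
    have : (2 : ℝ) * Qp n h ≤ pr n := by
      by_contra hc
      push Not at hc
      nlinarith
    linarith
  · unfold Qp
    rw [if_neg hn]
    have := pr_pos n
    linarith

lemma half_iter (n h : ℕ) (h0 : 4 * n ≤ h ^ 2) (hh : 0 < h) (i : ℕ) :
    Qp n (i * h) ≤ pr n / 2 ^ i := by
  induction i with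
  | zero => simp [Qp]
  | succ i ih =>
    by_cases hi : i * h ≤ n
    · rw [Nat.succ_mul, Qp_add _ _ _ hi]
      have h1 := half_step (n - i * h) h (by omega) hh
      have h2 : Qp n (i * h) = pr (n - i * h) := by unfold Qp; rw [if_pos hi]
      rw [h2] at ih
      calc _ ≤ _ := h1
        _ ≤ pr n / 2 ^ i / 2 := by linarith
        _ = _ := by rw [pow_succ]; field_simp
    · have : Qp n ((i + 1) * h) = 0 := by
        unfold Qp
        rw [if_neg]
        rw [Nat.succ_mul]
        omega
      rw [this]
      have := pr_pos n
      positivity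

lemma decay : ∃ a : ℝ, 0 < a ∧ ∀ n : ℕ, 1 ≤ n → ∀ k : ℕ,
    Qp n k ≤ 2 * Real.exp (-(a / √n * k)) * pr n := by
  refine ⟨Real.log 2 / 3, by positivity, ?_⟩
  intro n hn k
  have hs : 1 ≤ √(n : ℝ) := by
    rw [Real.one_le_sqrt]; exact_mod_cast hn
  set h := ⌈2 * √(n : ℝ)⌉₊ with hh
  have h1 : 2 * √(n : ℝ) ≤ h := Nat.le_ceil _
  have h2 : (h : ℝ) ≤ 3 * √n := by
    have := Nat.ceil_lt_add_one (show 0 ≤ 2 * √(n : ℝ) by positivity)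
    linarith
  have hpos : 0 < h := by
    have : (0 : ℝ) < h := by linarith
    exact_mod_cast this
  have h3 : 4 * n ≤ h ^ 2 := by
    have : (4 * n : ℝ) ≤ h ^ 2 := by
      have := Real.sq_sqrt (show (0 : ℝ) ≤ n by positivity)
      nlinarith
    exact_mod_cast this
  have h4 := half_iter n h h3 hpos (k / h)
  have h5 : Qp n k ≤ Qp n (k / h * h) := Qp_anti n (Nat.div_mul_le_self k h)
  have h6 : (k : ℝ) / h ≤ ((k / h : ℕ) : ℝ) + 1 := by
    rw [div_le_iff₀ (by exact_mod_cast hpos)]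
    have := Nat.lt_div_mul_add (a := k) hpos
    have : k ≤ (k / h + 1) * h := by rw [Nat.succ_mul]; omega
    exact_mod_cast this
  have h7 : (k : ℝ) / (3 * √n) ≤ k / h := by
    apply div_le_div_of_nonneg_left (by positivity) (by exact_mod_cast hpos) h2
  have h8 : (1 : ℝ) / 2 ^ (k / h) ≤ 2 * Real.exp (-(Real.log 2 / 3 / √n * k)) := by
    have e1 : (1 : ℝ) / 2 ^ (k / h) = Real.exp (- (Real.log 2 * ((k / h : ℕ) : ℝ))) := by
      rw [Real.exp_neg, mul_comm, Real.exp_nat_mul, Real.exp_log (by norm_num)]; simp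
    have e2 : (2 : ℝ) * Real.exp (-(Real.log 2 / 3 / √n * k)) =
        Real.exp (Real.log 2 -(Real.log 2 / 3 / √n * k)) := by
      rw [sub_eq_add_neg, Real.exp_add, Real.exp_log (by norm_num)]
    rw [e1, e2]
    apply Real.exp_le_exp.2
    have hl : 0 < Real.log 2 := by positivity
    have : Real.log 2 / 3 / √n * k = Real.log 2 * (k / (3 * √n)) := by field_simp
    rw [this]
    nlinarith
  calc Qp n k ≤ pr n / 2 ^ (k / h) := h5.trans h4
    _ = 1 / 2 ^ (k / h) * pr n := by ring
    _ ≤ _ := mul_le_mul_of_nonneg_right h8 (pr_pos n).le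

lemma geom_bound (x : ℝ) (hx : 0 < x) (N : ℕ) :
    ∑ d ∈ Finset.range N, Real.exp (-(x * ((d : ℝ) + 1))) ≤ 1 / x := by
  have hr : Real.exp (-x) < 1 := by simpa using hx
  have h1 : ∑ d ∈ Finset.range N, Real.exp (-(x * ((d : ℝ) + 1))) =
      Real.exp (-x) * ∑ d ∈ Finset.range N, Real.exp (-x) ^ d := by
    rw [Finset.mul_sum]
    refine Finset.sum_congr rfl fun d _ => ?_
    rw [← Real.exp_nat_mul, ← Real.exp_add]
    congr 1; ring
  rw [h1]
  have h2 : ∑ d ∈ Finset.range N, Real.exp (-x) ^ d ≤ (1 - Real.exp (-x))⁻¹ := by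
    rw [← tsum_geometric_of_lt_one (Real.exp_pos _).le hr]
    exact (summable_geometric_of_lt_one (Real.exp_pos _).le hr).sum_le_tsum _
      (fun _ _ => by positivity)
  calc _ ≤ Real.exp (-x) * (1 - Real.exp (-x))⁻¹ :=
        mul_le_mul_of_nonneg_left h2 (Real.exp_pos _).le
    _ ≤ 1 / x := by
        rw [← div_eq_mul_inv, div_le_div_iff₀ (by linarith) hx]
        have h3 := Real.add_one_le_exp x
        have h4 : Real.exp (-x) * Real.exp x = 1 := by rw [← Real.exp_add]; simp
        have := Real.exp_pos (-x)
        nlinarith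

noncomputable def Nm (m n : ℕ) : ℝ := √(n : ℝ) ^ (m + 1) * pr n

lemma Gm_bound (m : ℕ) : ∃ C : ℝ, 0 < C ∧ ∀ n : ℕ, 1 ≤ n → ∀ j : ℕ, 1 ≤ j →
    Gm m j n ≤ C / (j : ℝ) ^ (m + 1) * Nm m n := by
  obtain ⟨a, ha, hdec⟩ := decay
  refine ⟨2 * m.factorial * (2 / a) ^ (m + 1), by positivity, ?_⟩
  intro n hn j hj
  have hs : 0 < √(n : ℝ) := by
    rw [Real.sqrt_pos]; exact_mod_cast hn
  have hj' : (0 : ℝ) < j := by exact_mod_cast hj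
  set x : ℝ := a / √n * j / 2 with hx
  have hxp : 0 < x := by positivity
  have hterm : ∀ d : ℕ, ((d : ℝ) + 1) ^ m * Qp n ((d + 1) * j) ≤
      (2 * m.factorial * (1 / x) ^ m * pr n) * Real.exp (-(x * ((d : ℝ) + 1))) := by
    intro d
    have h1 := hdec n hn ((d + 1) * j)
    have h2 := Real.pow_div_factorial_le_exp (x * ((d : ℝ) + 1)) (by positivity) m
    have e : Real.exp (-(a / √n * (((d + 1) * j : ℕ) : ℝ))) =
        Real.exp (-(x * ((d : ℝ) + 1))) * Real.exp (-(x * ((d : ℝ) + 1))) := by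
      rw [← Real.exp_add]; congr 1; rw [hx]; push_cast; ring
    rw [e] at h1
    set E := Real.exp (-(x * ((d : ℝ) + 1))) with hE
    have hEp : 0 < E := Real.exp_pos _
    have h3 : (x * ((d : ℝ) + 1)) ^ m * E ≤ m.factorial := by
      rw [div_le_iff₀ (by positivity)] at h2
      have : Real.exp (x * ((d : ℝ) + 1)) * E = 1 := by rw [hE, ← Real.exp_add]; simp
      calc _ ≤ Real.exp (x * ((d : ℝ) + 1)) * m.factorial * E :=
            mul_le_mul_of_nonneg_right h2 hEp.le
        _ = (Real.exp (x * ((d : ℝ) + 1)) * E) * m.factorial := by ring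
        _ = _ := by rw [this, one_mul]
    have h4 : ((d : ℝ) + 1) ^ m * E ≤ m.factorial * (1 / x) ^ m := by
      rw [mul_pow] at h3
      rw [one_div, inv_pow, ← div_eq_mul_inv, le_div_iff₀ (by positivity)]
      linarith
    have hp := pr_pos n
    calc _ ≤ ((d : ℝ) + 1) ^ m * (2 * (E * E) * pr n) :=
          mul_le_mul_of_nonneg_left h1 (by positivity)
      _ = (((d : ℝ) + 1) ^ m * E) * (2 * E * pr n) := by ring
      _ ≤ (m.factorial * (1 / x) ^ m) * (2 * E * pr n) :=
          mul_le_mul_of_nonneg_right h4 (by positivity)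
      _ = _ := by ring
  have hp := pr_pos n
  calc Gm m j n ≤ ∑ d ∈ Finset.range n,
        (2 * m.factorial * (1 / x) ^ m * pr n) * Real.exp (-(x * ((d : ℝ) + 1))) :=
        Finset.sum_le_sum fun d _ => hterm d
    _ = (2 * m.factorial * (1 / x) ^ m * pr n) *
        ∑ d ∈ Finset.range n, Real.exp (-(x * ((d : ℝ) + 1))) := by rw [Finset.mul_sum]
    _ ≤ (2 * m.factorial * (1 / x) ^ m * pr n) * (1 / x) :=
        mul_le_mul_of_nonneg_left (geom_bound x hxp n) (by positivity)
    _ = 2 * m.factorial * (1 / x) ^ (m + 1) * pr n := by ring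
    _ = _ := by
        have : 1 / x = (2 / a) * (√n / j) := by rw [hx]; field_simp
        rw [this, mul_pow, div_pow (√(n : ℝ)), Nm]; ring

lemma Nm_pos (m n : ℕ) (hn : 1 ≤ n) : 0 < Nm m n := by
  have hs : 0 < √(n : ℝ) := by
    rw [Real.sqrt_pos]; exact_mod_cast hn
  have := pr_pos n
  unfold Nm; positivity

lemma Qp_zero (n k : ℕ) (h : n < k) : Qp n k = 0 := by
  unfold Qp; rw [if_neg (by omega)]

lemma block_upper (f : ℕ → ℝ) (hf : Antitone f) (hf0 : ∀ k, 0 ≤ f k) (m j N : ℕ) :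
    (j : ℝ) ^ (m + 1) * ∑ d ∈ Finset.range N, ((d : ℝ) + 1) ^ m * f ((d + 1) * j) ≤
      ∑ k ∈ Finset.range (N * j), ((k : ℝ) + 1 + j) ^ m * f (k + 1) := by
  induction N with
  | zero => simp
  | succ N ih =>
    rw [Finset.sum_range_succ, mul_add, Nat.succ_mul, Finset.sum_range_add]
    refine add_le_add ih ?_
    calc _ = ∑ r ∈ Finset.range j, ((N * j + j : ℕ) : ℝ) ^ m * f ((N + 1) * j) := by
          rw [Finset.sum_const, Finset.card_range, nsmul_eq_mul]
          have : ((N * j + j : ℕ) : ℝ) = j * (N + 1) := by push_cast; ring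
          rw [this, mul_pow]; ring
      _ ≤ _ := by
          refine Finset.sum_le_sum fun r hr => ?_
          rw [Finset.mem_range] at hr
          refine mul_le_mul ?_ ?_ (hf0 _) (by positivity)
          · apply pow_le_pow_left₀ (by positivity)
            push_cast; linarith [(Nat.cast_nonneg r : (0 : ℝ) ≤ r)]
          · apply hf; rw [Nat.succ_mul]; omega

lemma block_lower (f : ℕ → ℝ) (hf : Antitone f) (hf0 : ∀ k, 0 ≤ f k) (m j N : ℕ) :
      ∑ k ∈ Finset.range ((N + 1) * j), ((k + 1 - j : ℕ) : ℝ) ^ (m + 1) * f (k + 1) ≤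
    (j : ℝ) ^ (m + 2) * ∑ d ∈ Finset.range N, ((d : ℝ) + 1) ^ (m + 1) * f ((d + 1) * j) := by
  induction N with
  | zero =>
    simp only [zero_add, one_mul, Finset.range_zero, Finset.sum_empty, mul_zero]
    refine le_of_eq (Finset.sum_eq_zero fun k hk => ?_)
    rw [Finset.mem_range] at hk
    have : k + 1 - j = 0 := by omega
    simp [this]
  | succ N ih =>
    rw [Finset.sum_range_succ, mul_add, Nat.succ_mul (N + 1), Finset.sum_range_add]
    refine add_le_add ih ?_
    calc _ ≤ ∑ r ∈ Finset.range j, (((N + 1) * j : ℕ) : ℝ) ^ (m + 1) * f ((N + 1) * j) := by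
          refine Finset.sum_le_sum fun r hr => ?_
          rw [Finset.mem_range] at hr
          refine mul_le_mul ?_ ?_ (hf0 _) (by positivity)
          · apply pow_le_pow_left₀ (by positivity)
            exact_mod_cast (by omega)
          · apply hf; omega
      _ = _ := by
          rw [Finset.sum_const, Finset.card_range, nsmul_eq_mul]
          push_cast
          rw [mul_pow]; ring

lemma Sm_ext (g : ℕ → ℝ) (n N : ℕ) (h : n ≤ N) :
    ∑ k ∈ Finset.range N, g k * Qp n (k + 1) = ∑ k ∈ Finset.range n, g k * Qp n (k + 1) := by
  symm
  apply Finset.sum_subset (by simpa using h)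
  intro k _ hk
  rw [Finset.mem_range] at hk
  rw [Qp_zero _ _ (by omega), mul_zero]

lemma pow_up (m : ℕ) (x j : ℝ) (hx : 1 ≤ x) (hj : 0 ≤ j) :
    (x + j) ^ (m + 1) ≤ x ^ (m + 1) + (m + 1) * j * (1 + j) ^ m * x ^ m := by
  induction m with
  | zero => simp; 
  | succ m ih =>
    have h1 : x + j ≤ (1 + j) * x := by nlinarith
    have h2 : (x + j) ^ (m + 1) ≤ (1 + j) ^ (m + 1) * x ^ (m + 1) := by
      rw [← mul_pow]; exact pow_le_pow_left₀ (by positivity) h1 _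
    have h3 : (1 + j) ^ m ≤ (1 + j) ^ (m + 1) := pow_le_pow_right₀ (by linarith) (by omega)
    calc (x + j) ^ (m + 1 + 1) = x * (x + j) ^ (m + 1) + j * (x + j) ^ (m + 1) := by ring
      _ ≤ x * (x ^ (m + 1) + (m + 1) * j * (1 + j) ^ m * x ^ m) +
          j * ((1 + j) ^ (m + 1) * x ^ (m + 1)) := by gcongr
      _ ≤ x * (x ^ (m + 1) + (m + 1) * j * (1 + j) ^ (m + 1) * x ^ m) +
          j * ((1 + j) ^ (m + 1) * x ^ (m + 1)) := by gcongr
      _ = _ := by push_cast; ring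

lemma pow_down (m k j : ℕ) :
    (k : ℝ) ^ (m + 1) - (m + 1) * j * (1 + j) ^ m * (k : ℝ) ^ m ≤ ((k - j : ℕ) : ℝ) ^ (m + 1) := by
  have hj : (0 : ℝ) ≤ j := by positivity
  have h1 : (1 : ℝ) ≤ (1 + j) ^ m := one_le_pow₀ (by linarith)
  rcases le_total k j with h | h
  · have : (k : ℝ) ≤ j := by exact_mod_cast h
    have h0 : (0 : ℝ) ≤ ((k - j : ℕ) : ℝ) ^ (m + 1) := by positivity
    refine le_trans ?_ h0
    have : (k : ℝ) ^ (m + 1) ≤ (m + 1) * j * (1 + j) ^ m * (k : ℝ) ^ m := by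
      calc (k : ℝ) ^ (m + 1) = 1 * k * 1 * k ^ m := by ring
        _ ≤ _ := by gcongr; linarith [(Nat.cast_nonneg m : (0 : ℝ) ≤ m)]
    linarith
  · have hb : (k : ℝ) ^ (m + 1) - (m + 1) * j * (k : ℝ) ^ m ≤ ((k : ℝ) - j) ^ (m + 1) := by
      have hkj : (0 : ℝ) ≤ (k : ℝ) - j := by
        have : (j : ℝ) ≤ k := by exact_mod_cast h
        linarith
      clear h1
      induction m with
      | zero => simp
      | succ m ih =>
        have e := mul_le_mul_of_nonneg_left ih hkj
        have e2 : (0 : ℝ) ≤ (m + 1) * j * k ^ m * j := by positivity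
        push_cast
        calc _ ≤ ((k : ℝ) - j) * ((k : ℝ) ^ (m + 1) - (m + 1) * j * (k : ℝ) ^ m) := by
              have : ((k : ℝ) - j) * ((k : ℝ) ^ (m + 1) - (m + 1) * j * (k : ℝ) ^ m) =
                (k : ℝ) ^ (m + 1 + 1) - (m + 1 + 1) * j * (k : ℝ) ^ (m + 1) + (m + 1) * j * k ^ m * j := by
                ring
              rw [this]; linarith
          _ ≤ _ := e
          _ = _ := by ring
    rw [Nat.cast_sub h]
    refine le_trans ?_ hb
    have : (m + 1) * j * (k : ℝ) ^ m ≤ (m + 1) * j * (1 + j) ^ m * (k : ℝ) ^ m := by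
      calc (m + 1) * j * (k : ℝ) ^ m = (m + 1) * j * 1 * (k : ℝ) ^ m := by ring
        _ ≤ _ := by gcongr
    linarith

lemma blk (m j n : ℕ) (hj : 1 ≤ j) :
    |(j : ℝ) ^ (m + 2) * Gm (m + 1) j n - Sm (m + 1) n| ≤
      (m + 1) * j * (1 + j) ^ m * Sm m n := by
  have hu := block_upper (Qp n) (Qp_anti n) (Qp_nonneg n) (m + 1) j n
  have hl := block_lower (Qp n) (Qp_anti n) (Qp_nonneg n) m j n
  rw [Sm_ext (fun k => ((k : ℝ) + 1 + j) ^ (m + 1)) n (n * j) (by nlinarith)] at hu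
  rw [Sm_ext (fun k => ((k + 1 - j : ℕ) : ℝ) ^ (m + 1)) n ((n + 1) * j) (by nlinarith)] at hl
  change (j : ℝ) ^ (m + 2) * Gm (m + 1) j n ≤ _ at hu
  change _ ≤ (j : ℝ) ^ (m + 2) * Gm (m + 1) j n at hl
  have h1 : ∑ k ∈ Finset.range n, ((k : ℝ) + 1 + j) ^ (m + 1) * Qp n (k + 1) ≤
      Sm (m + 1) n + (m + 1) * j * (1 + j) ^ m * Sm m n := by
    unfold Sm
    rw [Finset.mul_sum, ← Finset.sum_add_distrib]
    refine Finset.sum_le_sum fun k _ => ?_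
    have := mul_le_mul_of_nonneg_right (pow_up m ((k : ℝ) + 1) j
      (by linarith [(Nat.cast_nonneg k : (0 : ℝ) ≤ k)]) (by positivity)) (Qp_nonneg n (k + 1))
    linarith
  have h2 : Sm (m + 1) n - (m + 1) * j * (1 + j) ^ m * Sm m n ≤
      ∑ k ∈ Finset.range n, ((k + 1 - j : ℕ) : ℝ) ^ (m + 1) * Qp n (k + 1) := by
    unfold Sm
    rw [Finset.mul_sum, ← Finset.sum_sub_distrib]
    refine Finset.sum_le_sum fun k _ => ?_
    have := mul_le_mul_of_nonneg_right (pow_down m (k + 1) j) (Qp_nonneg n (k + 1))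
    push_cast at this
    linarith
  rw [abs_le]
  constructor <;> linarith

lemma Sm_bound (m : ℕ) : ∃ C : ℝ, 0 < C ∧ ∀ n : ℕ, 1 ≤ n → Sm m n ≤ C * Nm m n := by
  obtain ⟨C, hC, h⟩ := Gm_bound m
  refine ⟨C, hC, fun n hn => ?_⟩
  have := h n hn 1 le_rfl
  rw [Sm_eq]; simpa using this

lemma Sm_bigO (m : ℕ) : (Sm m) =O[atTop] (Nm m) := by
  obtain ⟨C, hC, h⟩ := Sm_bound m
  refine IsBigO.of_bound C ?_
  filter_upwards [eventually_ge_atTop 1] with n hn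
  rw [Real.norm_of_nonneg (Sm_nonneg m n), Real.norm_of_nonneg (Nm_pos m n hn).le]
  exact h n hn

lemma sqrt_tendsto : Tendsto (fun n : ℕ => √(n : ℝ)) atTop atTop :=
  Real.tendsto_sqrt_atTop.comp tendsto_natCast_atTop_atTop

lemma Nm_littleO (m : ℕ) : (Nm m) =o[atTop] (Nm (m + 1)) := by
  have h : (fun _ : ℕ => (1 : ℝ)) =o[atTop] (fun n : ℕ => √(n : ℝ)) := by
    rw [isLittleO_one_left_iff]
    exact tendsto_norm_atTop_atTop.comp sqrt_tendsto
  have := h.mul_isBigO (isBigO_refl (Nm m) atTop)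
  refine this.congr (fun n => by simp) (fun n => by simp only [Nm]; ring)

lemma Nm_littleO_lt {i m : ℕ} (h : i < m) : (Nm i) =o[atTop] (Nm m) := by
  induction m, h using Nat.le_induction with
  | base => exact Nm_littleO i
  | succ m _ ih => exact ih.trans (Nm_littleO m)

noncomputable def zs (m : ℕ) : ℝ := ∑' j : ℕ, (1 : ℝ) / (j + 1) ^ (m + 1)

lemma zs_summable (m : ℕ) : Summable (fun j : ℕ => (1 : ℝ) / (j + 1) ^ (m + 2)) := by
  have := (summable_nat_add_iff (f := fun n : ℕ => 1 / (n : ℝ) ^ (m + 2)) 1).2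
    (Real.summable_one_div_nat_pow.2 (by omega))
  simpa using this

noncomputable def Ym (m n : ℕ) : ℝ := ∑ j ∈ Finset.range n, Gm m (j + 1) n

lemma main_U (m : ℕ) :
    (fun n => Ym (m + 1) n - zs (m + 1) * Sm (m + 1) n) =o[atTop] (Nm (m + 1)) := by
  obtain ⟨C, hC, hG⟩ := Gm_bound (m + 1)
  rw [isLittleO_iff_tendsto' (by
    filter_upwards [eventually_ge_atTop 1] with n hn h0
    exact absurd h0 (Nm_pos _ n hn).ne')]
  have key : Tendsto (fun n : ℕ => ∑' j : ℕ,
      (Gm (m + 1) (j + 1) n - 1 / ((j : ℝ) + 1) ^ (m + 2) * Sm (m + 1) n) / Nm (m + 1) n)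
      atTop (𝓝 (∑' j : ℕ, (0 : ℝ))) := by
    refine tendsto_tsum_of_dominated_convergence
      (bound := fun j : ℕ => 2 * C * (1 / ((j : ℝ) + 1) ^ (m + 2)))
      ((zs_summable m).mul_left _) ?_ ?_
    · intro j
      have h1 : (fun n => Gm (m + 1) (j + 1) n - 1 / ((j : ℝ) + 1) ^ (m + 2) * Sm (m + 1) n)
          =O[atTop] (Sm m) := by
        refine IsBigO.of_bound ((m + 1) * ((j : ℝ) + 1) * (1 + ((j : ℝ) + 1)) ^ m) ?_
        refine Eventually.of_forall fun n => ?_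
        have hb := blk m (j + 1) n (by omega)
        push_cast at hb
        have hp : (1 : ℝ) ≤ ((j : ℝ) + 1) ^ (m + 2) :=
          one_le_pow₀ (by linarith [(Nat.cast_nonneg j : (0 : ℝ) ≤ j)])
        rw [Real.norm_of_nonneg (Sm_nonneg m n), Real.norm_eq_abs]
        refine le_trans ?_ hb
        have e : ((j : ℝ) + 1) ^ (m + 2) * Gm (m + 1) (j + 1) n - Sm (m + 1) n =
          ((j : ℝ) + 1) ^ (m + 2) *
            (Gm (m + 1) (j + 1) n - 1 / ((j : ℝ) + 1) ^ (m + 2) * Sm (m + 1) n) := by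
          field_simp
        rw [e, abs_mul, abs_of_nonneg (zero_le_one.trans hp)]
        exact le_mul_of_one_le_left (abs_nonneg _) hp
      exact (h1.trans_isLittleO ((Sm_bigO m).trans_isLittleO (Nm_littleO m))).tendsto_div_nhds_zero
    · filter_upwards [eventually_ge_atTop 1] with n hn j
      have hN := Nm_pos (m + 1) n hn
      have h1 := hG n hn (j + 1) (by omega)
      have h2 := hG n hn 1 le_rfl
      rw [← Sm_eq] at h2
      push_cast at h1 h2
      rw [one_pow, div_one] at h2
      rw [norm_div, Real.norm_of_nonneg hN.le, div_le_iff₀ hN, Real.norm_eq_abs]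
      have h3 := Gm_nonneg (m + 1) (j + 1) n
      have h4 := Sm_nonneg (m + 1) n
      have hz : (0 : ℝ) ≤ 1 / ((j : ℝ) + 1) ^ (m + 2) := by positivity
      have h5 := mul_le_mul_of_nonneg_left h2 hz
      have h6 := mul_nonneg hz h4
      have e : C / ((j : ℝ) + 1) ^ (m + 1 + 1) * Nm (m + 1) n =
        1 / ((j : ℝ) + 1) ^ (m + 2) * (C * Nm (m + 1) n) := by ring
      rw [e] at h1
      rw [abs_le]
      constructor <;> nlinarith
  rw [tsum_zero] at key
  refine key.congr fun n => ?_
  rw [tsum_div_const]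
  congr 1
  have hs1 : Summable fun j : ℕ => Gm (m + 1) (j + 1) n := by
    apply summable_of_ne_finset_zero (s := Finset.range n)
    intro j hj
    rw [Finset.mem_range] at hj
    refine Finset.sum_eq_zero fun d _ => ?_
    rw [Qp_zero _ _ (by nlinarith), mul_zero]
  rw [hs1.tsum_sub ((zs_summable m).mul_right _), tsum_mul_right]
  congr 1
  rw [tsum_eq_sum (s := Finset.range n)]
  · rfl
  · intro j hj
    rw [Finset.mem_range] at hj
    refine Finset.sum_eq_zero fun d _ => ?_
    rw [Qp_zero _ _ (by nlinarith), mul_zero]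

lemma stolz (f g : ℕ → ℝ) (f0 : f 0 = 0) (g0 : g 0 = 0) (hg : ∀ n, g n ≤ g (n + 1))
    (ht : Tendsto g atTop atTop)
    (h : (fun n => (f (n + 1) - f n) - (g (n + 1) - g n)) =o[atTop]
      (fun n => g (n + 1) - g n)) : IsEquivalent atTop f g := by
  have := h.sum_range (fun n => sub_nonneg.2 (hg n))
    (by simpa only [Finset.sum_range_sub, g0, sub_zero] using ht)
  refine this.congr (fun n => ?_) (fun n => ?_)
  · rw [Finset.sum_sub_distrib, Finset.sum_range_sub, Finset.sum_range_sub, g0, f0]; simp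
  · rw [Finset.sum_range_sub, g0, sub_zero]

lemma Qp_succ (n k : ℕ) : Qp (n + 1) (k + 1) = Qp n k := by
  unfold Qp
  simp

lemma Sm_zero' (m : ℕ) : Sm m 0 = 0 := by simp [Sm]

lemma Sm_succ (m n : ℕ) : Sm m (n + 1) =
    pr n + ∑ i ∈ Finset.range (m + 1), (m.choose i : ℝ) * Sm i n := by
  unfold Sm
  simp only [Qp_succ]
  rw [Finset.sum_range_succ', add_comm]
  congr 1
  · simp [Qp]
  · simp only [Finset.mul_sum]
    rw [Finset.sum_comm]
    refine Finset.sum_congr rfl fun k _ => ?_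
    push_cast
    rw [add_pow ((k : ℝ) + 1) 1 m, Finset.sum_mul]
    refine Finset.sum_congr rfl fun i _ => ?_
    simp; ring

lemma A_succ (n : ℕ) : Sm 0 (n + 1) = Sm 0 n + pr n := by
  rw [Sm_succ]; simp; ring

lemma B_succ (n : ℕ) : Sm 1 (n + 1) = Sm 1 n + Sm 0 (n + 1) := by
  rw [Sm_succ, A_succ]; simp [Finset.sum_range_succ]; ring

lemma Sm_mono (m n : ℕ) : Sm m n ≤ Sm m (n + 1) := by
  rw [Sm_succ, Finset.sum_range_succ]
  have h1 := pr_pos n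
  have h2 : 0 ≤ ∑ i ∈ Finset.range m, (m.choose i : ℝ) * Sm i n :=
    Finset.sum_nonneg fun i _ => mul_nonneg (by positivity) (Sm_nonneg _ _)
  simp only [Nat.choose_self, Nat.cast_one, one_mul]
  linarith

lemma one_le_pr (n : ℕ) : 1 ≤ pr n := by
  unfold pr
  exact_mod_cast Fintype.card_pos

lemma Sm_ge (m n : ℕ) : (n : ℝ) ≤ Sm m n := by
  induction n with
  | zero => simp [Sm]
  | succ n ih =>
    rw [Sm_succ, Finset.sum_range_succ]
    have h1 := one_le_pr n
    have h2 : 0 ≤ ∑ i ∈ Finset.range m, (m.choose i : ℝ) * Sm i n :=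
      Finset.sum_nonneg fun i _ => mul_nonneg (by positivity) (Sm_nonneg _ _)
    simp only [Nat.choose_self, Nat.cast_one, one_mul]
    push_cast
    linarith

lemma Sm_tendsto (m : ℕ) : Tendsto (Sm m) atTop atTop :=
  tendsto_atTop_mono (Sm_ge m) tendsto_natCast_atTop_atTop

lemma Ym_one (n : ℕ) : Ym 1 n = Nm 1 n := by
  unfold Ym Nm
  rw [← ident_one, one_add_one_eq_two, Real.sq_sqrt (by positivity)]

lemma zs_one : zs 1 = Real.pi ^ 2 / 6 := by
  have h := hasSum_zeta_two
  have h2 := (hasSum_nat_add_iff' (f := fun n : ℕ => 1 / (n : ℝ) ^ 2) 1).2 h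
  have := h2.tsum_eq
  simpa [zs] using this

lemma zs_one_pos : 0 < zs 1 := by rw [zs_one]; positivity

lemma B_equiv : IsEquivalent atTop (fun n => zs 1 * Sm 1 n) (Nm 1) := by
  have h := main_U 0
  simp only [zero_add, Ym_one] at h
  have h2 := h.neg_left
  exact h2.congr_left fun n => by simp

lemma Nm_one_bigO_B : (Nm 1) =O[atTop] (Sm 1) :=
  B_equiv.symm.isBigO.trans (isBigO_const_mul_self _ _ _)

lemma A_littleO_B : (Sm 0) =o[atTop] (Sm 1) :=
  ((Sm_bigO 0).trans_isLittleO (Nm_littleO 0)).trans_isBigO Nm_one_bigO_B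

lemma CS (n : ℕ) : Sm 1 n ^ 2 ≤ Sm 0 n * Sm 2 n := by
  unfold Sm
  apply Finset.sum_sq_le_sum_mul_sum_of_sq_le_mul
  · intro k _; exact mul_nonneg (by positivity) (Qp_nonneg _ _)
  · intro k _; exact mul_nonneg (by positivity) (Qp_nonneg _ _)
  · intro k _; exact le_of_eq (by ring)

lemma Nm_zero_bigO_A : (Nm 0) =O[atTop] (Sm 0) := by
  obtain ⟨C, hC, h2⟩ := Sm_bound 2
  obtain ⟨D, hD, h1⟩ := Nm_one_bigO_B.exists_pos
  rw [IsBigOWith_def] at h1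
  refine IsBigO.of_bound (D ^ 2 * C) ?_
  filter_upwards [h1, eventually_ge_atTop 1] with n h1 hn
  have hN0 := Nm_pos 0 n hn
  have hN1 := Nm_pos 1 n hn
  have hN2 := Nm_pos 2 n hn
  have hA := Sm_nonneg 0 n
  have hB := Sm_nonneg 1 n
  rw [Real.norm_of_nonneg hN1.le, Real.norm_of_nonneg hB] at h1
  rw [Real.norm_of_nonneg hN0.le, Real.norm_of_nonneg hA]
  have e : Nm 1 n ^ 2 = Nm 0 n * Nm 2 n := by simp only [Nm]; ring
  have h3 : Nm 0 n * Nm 2 n ≤ (D ^ 2 * C * Sm 0 n) * Nm 2 n := by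
    rw [← e]
    calc Nm 1 n ^ 2 ≤ (D * Sm 1 n) ^ 2 := pow_le_pow_left₀ hN1.le h1 2
      _ = D ^ 2 * Sm 1 n ^ 2 := by ring
      _ ≤ D ^ 2 * (Sm 0 n * Sm 2 n) := by gcongr; exact CS n
      _ ≤ D ^ 2 * (Sm 0 n * (C * Nm 2 n)) := by gcongr; exact h2 n hn
      _ = _ := by ring
  exact le_of_mul_le_mul_right h3 hN2

lemma one_littleO_sqrt : (fun _ : ℕ => (1 : ℝ)) =o[atTop] (fun n : ℕ => √(n : ℝ)) := by
  rw [isLittleO_one_left_iff]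
  exact tendsto_norm_atTop_atTop.comp sqrt_tendsto

lemma pr_littleO_N : pr =o[atTop] (Nm 0) := by
  have := one_littleO_sqrt.mul_isBigO (isBigO_refl pr atTop)
  refine this.congr (fun n => by simp) (fun n => by simp [Nm])

lemma pr_littleO_A : pr =o[atTop] (Sm 0) := pr_littleO_N.trans_isBigO Nm_zero_bigO_A

lemma A_shift : IsEquivalent atTop (fun n => Sm 0 (n + 1)) (Sm 0) := by
  refine pr_littleO_A.congr_left fun n => ?_
  simp [A_succ]

lemma n_equiv : IsEquivalent atTop (fun n : ℕ => ((n : ℝ) + 1)⁻¹) (fun n : ℕ => (n : ℝ)⁻¹) := by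
  apply IsEquivalent.inv
  have : (fun _ : ℕ => (1 : ℝ)) =o[atTop] (fun n : ℕ => (n : ℝ)) := by
    rw [isLittleO_one_left_iff]
    exact tendsto_norm_atTop_atTop.comp tendsto_natCast_atTop_atTop
  exact this.congr_left fun n => by simp

/-- `n * p(n) / n = p(n)` eventually. -/
lemma Nm_one_inv : (fun n : ℕ => Nm 1 n * (n : ℝ)⁻¹) =ᶠ[atTop] pr := by
  filter_upwards [eventually_ge_atTop 1] with n hn
  have : (n : ℝ) ≠ 0 := by positivity
  rw [← Ym_one, Ym, ← ident_one]; field_simp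

lemma energy : IsEquivalent atTop (fun n : ℕ => zs 1 * (Sm 1 n ^ 2 * (n : ℝ)⁻¹))
    (fun n => Sm 0 n ^ 2) := by
  have hA2 : (fun n => Sm 0 (n + 1) ^ 2 - Sm 0 n ^ 2 - 2 * (pr n * Sm 0 n)) =o[atTop]
      (fun n => pr n * Sm 0 n) := by
    refine ((isBigO_refl pr atTop).mul_isLittleO pr_littleO_A).congr_left fun n => ?_
    rw [A_succ]; ring
  have hA3 : (fun n => 2 * (pr n * Sm 0 n)) =O[atTop]
      (fun n => Sm 0 (n + 1) ^ 2 - Sm 0 n ^ 2) := by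
    refine IsBigO.of_bound 1 (Eventually.of_forall fun n => ?_)
    have h1 := (pr_pos n).le
    have h2 := Sm_nonneg 0 n
    have e : Sm 0 (n + 1) ^ 2 - Sm 0 n ^ 2 = 2 * (pr n * Sm 0 n) + pr n ^ 2 := by
      rw [A_succ]; ring
    rw [e, Real.norm_of_nonneg (by positivity), Real.norm_of_nonneg (by positivity)]
    nlinarith
  have hA4 : (fun n => pr n * Sm 0 n) =O[atTop]
      (fun n => Sm 0 (n + 1) ^ 2 - Sm 0 n ^ 2) :=
    (isBigO_self_const_mul (two_ne_zero) _ _).trans hA3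
  -- main term
  have t1 : IsEquivalent atTop
      (fun n : ℕ => (2 : ℝ) * ((zs 1 * Sm 1 n) * ((n : ℝ) + 1)⁻¹ * Sm 0 (n + 1)))
      (fun n => 2 * (pr n * Sm 0 n)) := by
    have h := ((B_equiv.mul n_equiv).congr_right Nm_one_inv).mul A_shift
    exact (IsEquivalent.refl (u := fun _ : ℕ => (2 : ℝ))).mul h
  have t1' := t1.isLittleO.trans_isBigO (isBigO_const_mul_self (2 : ℝ) _ _)
  have hinv : (fun n : ℕ => Nm 1 n * ((n : ℝ) + 1)⁻¹) =O[atTop] pr :=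
    (((IsEquivalent.refl (u := Nm 1)).mul n_equiv).congr_right Nm_one_inv).isBigO
  have t2 : (fun n : ℕ => zs 1 * (Sm 0 (n + 1) ^ 2 * ((n : ℝ) + 1)⁻¹)) =o[atTop]
      (fun n => pr n * Sm 0 n) := by
    refine IsLittleO.const_mul_left ?_ _
    have h1 : (fun n => Sm 0 (n + 1)) =o[atTop] (Nm 1) :=
      (A_shift.isBigO.trans (Sm_bigO 0)).trans_isLittleO (Nm_littleO 0)
    have h2 : (fun n : ℕ => Sm 0 (n + 1) * ((n : ℝ) + 1)⁻¹) =o[atTop] pr :=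
      (h1.mul_isBigO (isBigO_refl _ _)).trans_isBigO hinv
    refine (h2.mul_isBigO A_shift.isBigO).congr_left fun n => ?_
    ring
  have t3 : (fun n : ℕ => zs 1 * ((Sm 1 n * (n : ℝ)⁻¹) * (Sm 1 n * ((n : ℝ) + 1)⁻¹))) =o[atTop]
      (fun n => pr n * Sm 0 n) := by
    refine IsLittleO.const_mul_left ?_ _
    have h1 : (fun n : ℕ => Sm 1 n * (n : ℝ)⁻¹) =O[atTop] pr :=
      ((Sm_bigO 1).mul (isBigO_refl _ _)).trans Nm_one_inv.isBigO
    have h2 : (fun n : ℕ => Sm 1 n * ((n : ℝ) + 1)⁻¹) =O[atTop] pr :=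
      ((Sm_bigO 1).mul (isBigO_refl _ _)).trans hinv
    exact (h1.mul h2).trans_isLittleO ((isBigO_refl pr atTop).mul_isLittleO pr_littleO_A)
  refine stolz _ _ (by simp [Sm_zero']) (by simp [Sm_zero']) ?_ ?_ ?_
  · intro n
    exact pow_le_pow_left₀ (Sm_nonneg _ _) (Sm_mono 0 n) 2
  · exact (tendsto_pow_atTop (two_ne_zero)).comp (Sm_tendsto 0)
  · refine IsLittleO.trans_isBigO ?_ hA4
    refine (((t1'.add t2).sub t3).sub hA2).congr' ?_ EventuallyEq.rfl
    filter_upwards [eventually_ge_atTop 1] with n hn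
    have hn0 : (n : ℝ) ≠ 0 := by positivity
    have hn1 : (n : ℝ) + 1 ≠ 0 := by positivity
    simp only [Pi.sub_apply]
    rw [B_succ]
    push_cast
    field_simp
    ring

lemma A_limit : Tendsto (fun n => Sm 0 n / Nm 0 n) atTop (𝓝 (1 / √(zs 1))) := by
  have hz := zs_one_pos
  have hB : Tendsto (fun n => zs 1 * Sm 1 n / Nm 1 n) atTop (𝓝 1) :=
    (isEquivalent_iff_tendsto_one (by
      filter_upwards [eventually_ge_atTop 1] with n hn
      exact (Nm_pos 1 n hn).ne')).1 B_equiv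
  have hE : Tendsto (fun n : ℕ => Sm 0 n ^ 2 / (zs 1 * (Sm 1 n ^ 2 * (n : ℝ)⁻¹))) atTop (𝓝 1) :=
    (isEquivalent_iff_tendsto_one (by
      filter_upwards [eventually_ge_atTop 1] with n hn
      have h1 : (0 : ℝ) < n := by exact_mod_cast hn
      have h2 := lt_of_lt_of_le h1 (Sm_ge 1 n)
      positivity)).1 energy.symm
  have h := ((hE.mul (hB.pow 2)).mul_const (1 / zs 1)).sqrt
  have e : √(1 * 1 ^ 2 * (1 / zs 1)) = 1 / √(zs 1) := by
    simp
  rw [e] at h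
  refine h.congr' ?_
  filter_upwards [eventually_ge_atTop 1] with n hn
  have h1 : (0 : ℝ) < n := by exact_mod_cast hn
  have h2 := lt_of_lt_of_le h1 (Sm_ge 1 n)
  have hp := pr_pos n
  rw [← Real.sqrt_sq (div_nonneg (Sm_nonneg 0 n) (Nm_pos 0 n hn).le)]
  congr 1
  have e1 : Nm 1 n = n * pr n := by rw [← Ym_one, Ym, ← ident_one]
  have e0 : Nm 0 n ^ 2 = n * pr n ^ 2 := by
    simp only [Nm, zero_add, pow_one]
    rw [mul_pow, Real.sq_sqrt h1.le]
  rw [div_pow (Sm 0 n), e0, e1]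
  field_simp

lemma A_equiv : IsEquivalent atTop (Sm 0) (fun n => 1 / √(zs 1) * Nm 0 n) := by
  have hz : 0 < √(zs 1) := Real.sqrt_pos.2 zs_one_pos
  rw [isEquivalent_iff_tendsto_one (by
    filter_upwards [eventually_ge_atTop 1] with n hn
    have := Nm_pos 0 n hn
    positivity)]
  have h := A_limit.mul_const (√(zs 1))
  rw [one_div, inv_mul_cancel₀ hz.ne'] at h
  refine h.congr fun n => ?_
  simp only [Pi.div_apply]
  by_cases h0 : Nm 0 n = 0
  · simp [h0]
  · field_simp

lemma sqrt_diff (m : ℕ) : (fun n : ℕ => √((n : ℝ) + 1) ^ (m + 1) - √(n : ℝ) ^ (m + 1)) =o[atTop]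
    (fun n : ℕ => √(n : ℝ) ^ m) := by
  have h1 : (fun n : ℕ => √((n : ℝ) + 1) - √(n : ℝ)) =o[atTop] (fun _ : ℕ => (1 : ℝ)) := by
    rw [isLittleO_one_iff]
    refine squeeze_zero' (g := fun n : ℕ => (√(n : ℝ))⁻¹) ?_ ?_ sqrt_tendsto.inv_tendsto_atTop
    · exact Eventually.of_forall fun n => sub_nonneg.2 (Real.sqrt_le_sqrt (by linarith))
    · filter_upwards [eventually_ge_atTop 1] with n hn
      have hs : 0 < √(n : ℝ) := by
        rw [Real.sqrt_pos]; exact_mod_cast hn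
      have hs1 : √(n : ℝ) ≤ √((n : ℝ) + 1) := Real.sqrt_le_sqrt (by linarith)
      have e1 := Real.sq_sqrt (show (0 : ℝ) ≤ n by positivity)
      have e2 := Real.sq_sqrt (show (0 : ℝ) ≤ (n : ℝ) + 1 by positivity)
      rw [← one_div, le_div_iff₀ hs]
      nlinarith
  have h2 : (fun n : ℕ => √((n : ℝ) + 1)) =O[atTop] (fun n : ℕ => √(n : ℝ)) := by
    have := (h1.trans one_littleO_sqrt).isBigO.add (isBigO_refl (fun n : ℕ => √(n : ℝ)) atTop)
    exact this.congr_left fun n => by ring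
  have h3 : (fun n : ℕ => ∑ i ∈ Finset.range (m + 1), √((n : ℝ) + 1) ^ i * √(n : ℝ) ^ (m - i))
      =O[atTop] (fun n : ℕ => √(n : ℝ) ^ m) := by
    refine IsBigO.fun_sum fun i hi => ?_
    rw [Finset.mem_range] at hi
    refine ((h2.pow i).mul (isBigO_refl (fun n : ℕ => √(n : ℝ) ^ (m - i)) atTop)).congr_right ?_
    intro n
    rw [← pow_add]; congr 1; omega
  refine (h3.mul_isLittleO h1).congr (fun n => ?_) (fun n => by simp)
  rw [← geom_sum₂_mul]
  simp

lemma Sm_equiv (m : ℕ) :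
    IsEquivalent atTop (Sm m) (fun n => (m.factorial / √(zs 1) ^ (m + 1)) * Nm m n) := by
  have hz : 0 < √(zs 1) := Real.sqrt_pos.2 zs_one_pos
  induction m with
  | zero => simpa using A_equiv
  | succ m ih =>
    set K : ℝ := (m + 1).factorial / √(zs 1) ^ (m + 1) with hK
    have hKpos : 0 < K := by positivity
    -- increments of `Sm (m+1)`
    have hS : (fun n => Sm (m + 1) (n + 1) - Sm (m + 1) n - K * Nm m n) =o[atTop] (Nm m) := by
      have h1 : (fun n => ∑ i ∈ Finset.range m, ((m + 1).choose i : ℝ) * Sm i n) =o[atTop]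
          (Nm m) := by
        refine IsLittleO.fun_sum fun i hi => ?_
        rw [Finset.mem_range] at hi
        exact ((Sm_bigO i).trans_isLittleO (Nm_littleO_lt hi)).const_mul_left _
      have h2 : pr =o[atTop] (Nm m) := by
        rcases Nat.eq_zero_or_pos m with h | h
        · rw [h]; exact pr_littleO_N
        · exact pr_littleO_N.trans (Nm_littleO_lt h)
      have h3 := (ih.isLittleO.trans_isBigO (isBigO_const_mul_self _ (Nm m) atTop)).const_mul_left
        ((m : ℝ) + 1)
      refine ((h1.add h2).add h3).congr_left fun n => ?_
      rw [Sm_succ, Finset.sum_range_succ, Finset.sum_range_succ]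
      simp only [Pi.sub_apply, Nat.choose_self, Nat.choose_succ_self_right, hK, Nat.factorial_succ]
      push_cast
      ring
    have hV : (fun n : ℕ => K * (√((n + 1 : ℕ) : ℝ) ^ (m + 1) * Sm 0 (n + 1)) -
        K * (√(n : ℝ) ^ (m + 1) * Sm 0 n) - K * Nm m n) =o[atTop] (Nm m) := by
      have h1 := (sqrt_diff m).mul_isBigO (A_shift.isBigO.trans (Sm_bigO 0))
      refine (h1.const_mul_left K).congr (fun n => ?_) (fun n => ?_)
      · rw [A_succ]; push_cast; simp only [Nm]; ring
      · simp only [Nm]; ring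
    have hN : (Nm m) =O[atTop] (fun n => Sm (m + 1) (n + 1) - Sm (m + 1) n) := by
      have h1 : IsEquivalent atTop (fun n => Sm (m + 1) (n + 1) - Sm (m + 1) n)
          (fun n => K * Nm m n) :=
        hS.trans_isBigO (isBigO_self_const_mul hKpos.ne' (Nm m) atTop)
      exact (isBigO_self_const_mul hKpos.ne' (Nm m) atTop).trans h1.symm.isBigO
    have hequiv : IsEquivalent atTop (fun n : ℕ => K * (√(n : ℝ) ^ (m + 1) * Sm 0 n))
        (Sm (m + 1)) := by
      refine stolz _ _ (by simp [Sm_zero']) (Sm_zero' _) (Sm_mono _) (Sm_tendsto _) ?_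
      refine ((hV.sub hS).trans_isBigO hN).congr_left fun n => ?_
      ring
    refine hequiv.symm.trans ?_
    have h5 := (IsEquivalent.refl (u := fun n : ℕ => K * √(n : ℝ) ^ (m + 1)) (l := atTop)).mul A_equiv
    refine (h5.congr_left ?_).congr_right ?_
    · exact Eventually.of_forall fun n => by simp only [Pi.mul_apply]; ring
    · refine Eventually.of_forall fun n => ?_
      simp only [Pi.mul_apply, hK, Nm]
      field_simp
      ring

lemma zs_pos (m : ℕ) : 0 < zs (m + 1) := by
  refine (zs_summable m).tsum_pos (fun j => by positivity) 0 (by positivity)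

/-- **Asymptotics of the moments of a random partition** (formula (26) of the paper):
for every fixed `m ≥ 1`, as `n → ∞`,
`Σ_{λ ⊢ n} Σ_j λ_j^m ∼ p(n)·(n/ζ(2))^{(m+1)/2}·m!·ζ(m+1)`, with `ζ(2) = π²/6`. -/
theorem moment_statistic_asymptotics (m : ℕ) (hm : 1 ≤ m) :
    Asymptotics.IsEquivalent atTop
      (fun n : ℕ =>
        ((∑ lam : Nat.Partition n, (lam.parts.map (fun p => p ^ m)).sum : ℕ) : ℝ))
      (fun n : ℕ =>
        (Fintype.card (Nat.Partition n) : ℝ) *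
          (6 * n / Real.pi ^ 2) ^ (((m : ℝ) + 1) / 2) *
          (m.factorial : ℝ) * ∑' j : ℕ, (1 : ℝ) / (j + 1) ^ (m + 1)) := by
  have hz : 0 < √(zs 1) := Real.sqrt_pos.2 zs_one_pos
  obtain ⟨k, rfl⟩ : ∃ k, m = k + 1 := ⟨m - 1, by omega⟩
  simp only [ident]
  change IsEquivalent atTop (Ym (k + 1)) _
  have hzp := zs_pos k
  set K : ℝ := (k + 1).factorial / √(zs 1) ^ (k + 1 + 1) with hK
  have hKp : 0 < K := by positivity
  have h1 : IsEquivalent atTop (fun n => zs (k + 1) * Sm (k + 1) n)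
      (fun n => zs (k + 1) * (K * Nm (k + 1) n)) :=
    (IsEquivalent.refl (u := fun _ : ℕ => zs (k + 1))).mul (Sm_equiv (k + 1))
  have hO : (Nm (k + 1)) =O[atTop] (fun n => zs (k + 1) * Sm (k + 1) n) := by
    refine IsBigO.trans ?_ h1.symm.isBigO
    exact (isBigO_self_const_mul hKp.ne' (Nm (k + 1)) atTop).trans (isBigO_self_const_mul hzp.ne' _ _)
  have h2 : IsEquivalent atTop (Ym (k + 1)) (fun n => zs (k + 1) * Sm (k + 1) n) :=
    (main_U k).trans_isBigO hO
  refine (h2.trans h1).congr_right (Eventually.of_forall fun n => ?_)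
  have e : (6 * (n : ℝ) / Real.pi ^ 2) ^ ((((k + 1 : ℕ) : ℝ) + 1) / 2) =
      √(n : ℝ) ^ (k + 1 + 1) / √(zs 1) ^ (k + 1 + 1) := by
    have e1 : 6 * (n : ℝ) / Real.pi ^ 2 = n / zs 1 := by
      rw [zs_one]; field_simp
    rw [e1, ← div_pow, ← Real.sqrt_div (by positivity), Real.sqrt_eq_rpow, ← Real.rpow_natCast,
      ← Real.rpow_mul (div_nonneg (by positivity) zs_one_pos.le)]
    congr 1
    push_cast; ring
  beta_reduce
  rw [e]
  change zs (k + 1) * (K * Nm (k + 1) n) = pr n * _ * _ * zs (k + 1)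
  rw [hK, Nm]
  ring
end

section
/- The function a(d) = Σ_{j=1}^∞ j·e^{−jd}/(1 − e^{−jd}) is, for d ∈ (0,∞), a continuous strictly decreasing function with a(d) → ∞ as d → 0⁺ and a(d) → 0 as d → ∞; consequently, for every positive integer n the equation a(d) = n has a unique solution d_n ∈ (0,∞). -/
open Filter Asymptotics Topology

/-- `aFun d = Σ_{j≥1} j·e^{−jd}/(1 − e^{−jd})`, the value of `r·g′(r)/g(r)` at `r = e^{−d}`. -/
noncomputable def aFun (d : ℝ) : ℝ :=
  ∑' j : ℕ, (j + 1 : ℝ) * Real.exp (-(j + 1) * d) / (1 - Real.exp (-(j + 1) * d))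

/-- The `j`-th term in a convenient form. -/
noncomputable def aTerm (j : ℕ) (d : ℝ) : ℝ := (j + 1 : ℝ) / (Real.exp ((j + 1) * d) - 1)

lemma aFun_eq (d : ℝ) : aFun d = ∑' j : ℕ, aTerm j d := by
  unfold aFun aTerm
  refine tsum_congr fun j => ?_
  have h : Real.exp (-((j : ℝ) + 1) * d) = (Real.exp ((j + 1) * d))⁻¹ := by
    rw [neg_mul, Real.exp_neg]
  rw [h]
  have hp := Real.exp_pos (((j : ℝ) + 1) * d)
  generalize Real.exp (((j : ℝ) + 1) * d) = E at hp
  by_cases hE : E = 1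
  · simp [hE]
  · have h1 : E - 1 ≠ 0 := sub_ne_zero.mpr hE
    have h2 : 1 - E⁻¹ = (E - 1) / E := by field_simp
    rw [h2]
    field_simp

lemma aTerm_den_pos (j : ℕ) {d : ℝ} (hd : 0 < d) : 0 < Real.exp ((j + 1) * d) - 1 := by
  have : 1 < Real.exp (((j : ℝ) + 1) * d) := Real.one_lt_exp_iff.mpr (by positivity)
  linarith

lemma aTerm_pos (j : ℕ) {d : ℝ} (hd : 0 < d) : 0 < aTerm j d :=
  div_pos (by positivity) (aTerm_den_pos j hd)

lemma aTerm_lt (j : ℕ) {c d : ℝ} (hc : 0 < c) (h : c < d) : aTerm j d < aTerm j c := by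
  unfold aTerm
  apply div_lt_div_of_pos_left (by positivity) (aTerm_den_pos j hc)
  have : Real.exp (((j : ℝ) + 1) * c) < Real.exp (((j : ℝ) + 1) * d) :=
    Real.exp_lt_exp.mpr (mul_lt_mul_of_pos_left h (by positivity))
  linarith

lemma aTerm_le (j : ℕ) {c d : ℝ} (hc : 0 < c) (h : c ≤ d) : aTerm j d ≤ aTerm j c := by
  rcases h.eq_or_lt with rfl | h
  · exact le_rfl
  · exact (aTerm_lt j hc h).le

lemma aTerm_summable {d : ℝ} (hd : 0 < d) : Summable (fun j => aTerm j d) := by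
  have hr : Real.exp (-d) < 1 := by simpa using hd
  have h0 : Summable (fun n : ℕ => (n : ℝ) ^ 1 * Real.exp (-d) ^ n) :=
    summable_pow_mul_geometric_of_norm_lt_one 1
      (by rwa [Real.norm_eq_abs, abs_of_pos (Real.exp_pos _)])
  have h1 := ((summable_nat_add_iff 1).mpr h0).mul_right (1 - Real.exp (-d))⁻¹
  refine Summable.of_nonneg_of_le (fun j => (aTerm_pos j hd).le) (fun j => ?_) h1
  have hq : Real.exp (-d) ^ (j + 1) = (Real.exp ((j + 1) * d))⁻¹ := by
    rw [← Real.exp_nat_mul, ← Real.exp_neg]; push_cast; ring_nf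
  have hle : Real.exp (-d) ^ (j + 1) ≤ Real.exp (-d) :=
    pow_le_of_le_one (Real.exp_pos _).le hr.le (by omega)
  have hE := Real.exp_pos (((j : ℝ) + 1) * d)
  have hD := aTerm_den_pos j hd
  have e : aTerm j d = ((j + 1 : ℝ) * Real.exp (-d) ^ (j + 1))
      * (1 - Real.exp (-d) ^ (j + 1))⁻¹ := by
    rw [hq]; unfold aTerm
    generalize Real.exp (((j : ℝ) + 1) * d) = E at hE hD
    have h2 : 1 - E⁻¹ = (E - 1) / E := by field_simp
    rw [h2]
    field_simp
  rw [e]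
  push_cast
  rw [pow_one]
  have : 0 < 1 - Real.exp (-d) := by linarith
  gcongr

lemma aTerm_continuousOn (j : ℕ) : ContinuousOn (aTerm j) (Set.Ioi 0) := by
  unfold aTerm
  apply ContinuousOn.div (by fun_prop) (by fun_prop)
  intro x hx
  exact (aTerm_den_pos j hx).ne'

lemma aTerm_tendsto (j : ℕ) : Tendsto (aTerm j) atTop (nhds 0) := by
  unfold aTerm
  apply Tendsto.div_atTop tendsto_const_nhds
  apply tendsto_atTop_add_const_right
  apply Real.tendsto_exp_atTop.comp
  exact tendsto_id.const_mul_atTop (by positivity)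

lemma aFun_continuousOn : ContinuousOn aFun (Set.Ioi 0) := by
  intro d hd
  have hd' : (0 : ℝ) < d := hd
  have hf : aFun = fun d => ∑' j : ℕ, aTerm j d := funext aFun_eq
  have hc : ContinuousOn aFun (Set.Ioi (d / 2)) := by
    rw [hf]
    refine continuousOn_tsum (u := fun j => aTerm j (d / 2))
      (fun j => (aTerm_continuousOn j).mono ?_) (aTerm_summable (by linarith)) ?_
    · intro x hx
      exact lt_trans (by linarith : (0 : ℝ) < d / 2) hx
    · intro j x hx
      have hx' : d / 2 < x := hx
      rw [Real.norm_eq_abs, abs_of_pos (aTerm_pos j (by linarith))]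
      exact aTerm_le j (by linarith) hx'.le
  exact (hc.continuousAt (Ioi_mem_nhds (by linarith))).continuousWithinAt

lemma aFun_strictAntiOn : StrictAntiOn aFun (Set.Ioi 0) := by
  intro c hc d hd h
  rw [aFun_eq, aFun_eq]
  exact Summable.tsum_lt_tsum (i := 0) (fun j => aTerm_le j hc h.le) (aTerm_lt 0 hc h)
    (aTerm_summable hd) (aTerm_summable hc)

lemma aFun_tendsto_zero_right : Tendsto aFun (nhdsWithin 0 (Set.Ioi 0)) atTop := by
  have h1 : Tendsto (fun d : ℝ => Real.exp d - 1) (nhdsWithin 0 (Set.Ioi 0))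
      (nhdsWithin 0 (Set.Ioi 0)) := by
    apply tendsto_nhdsWithin_of_tendsto_nhds_of_eventually_within
    · have : Continuous (fun d : ℝ => Real.exp d - 1) := by fun_prop
      have h := this.tendsto 0
      simp only [Real.exp_zero, sub_self] at h
      exact h.mono_left nhdsWithin_le_nhds
    · filter_upwards [self_mem_nhdsWithin] with d hd
      simpa using hd
  refine tendsto_atTop_mono' _ ?_ (tendsto_inv_nhdsGT_zero.comp h1)
  filter_upwards [self_mem_nhdsWithin] with d hd
  rw [aFun_eq]
  have h := (aTerm_summable hd).le_tsum 0 (fun j _ => (aTerm_pos j hd).le)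
  simpa [aTerm] using h

lemma aFun_tendsto_atTop : Tendsto aFun atTop (nhds 0) := by
  have hf : aFun = fun d => ∑' j : ℕ, aTerm j d := funext aFun_eq
  rw [hf]
  have := tendsto_tsum_of_dominated_convergence (𝓕 := atTop) (f := fun (d : ℝ) j => aTerm j d)
    (g := fun _ => 0) (aTerm_summable one_pos) aTerm_tendsto (by
      filter_upwards [eventually_ge_atTop 1] with d hd j
      rw [Real.norm_eq_abs, abs_of_pos (aTerm_pos j (by linarith))]
      exact aTerm_le j one_pos hd)
  simpa using this

/-- On `(0,∞)`, the function `a(d) = Σ_{j≥1} j·e^{−jd}/(1 − e^{−jd})` is continuous and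
strictly decreasing, with `a(d) → ∞` as `d → 0⁺` and `a(d) → 0` as `d → ∞`; consequently,
for every positive integer `n` the saddle point equation `a(d) = n` has a unique solution
`d ∈ (0,∞)`. -/
theorem saddle_point_equation_unique_solution :
    ContinuousOn aFun (Set.Ioi 0)
      ∧ StrictAntiOn aFun (Set.Ioi 0)
      ∧ Tendsto aFun (nhdsWithin 0 (Set.Ioi 0)) atTop
      ∧ Tendsto aFun atTop (nhds 0)
      ∧ ∀ n : ℕ, 0 < n → ∃! d : ℝ, d ∈ Set.Ioi (0 : ℝ) ∧ aFun d = n := by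
  refine ⟨aFun_continuousOn, aFun_strictAntiOn, aFun_tendsto_zero_right, aFun_tendsto_atTop, ?_⟩
  intro n hn
  have hn' : (0 : ℝ) < n := by exact_mod_cast hn
  obtain ⟨c, hc, hc0⟩ := ((aFun_tendsto_zero_right.eventually_ge_atTop (n : ℝ)).and
    self_mem_nhdsWithin).exists
  obtain ⟨e, he, he0⟩ := ((aFun_tendsto_atTop.eventually_lt_const hn').and
    (eventually_gt_atTop (0 : ℝ))).exists
  obtain ⟨d, hd, hdn⟩ := isPreconnected_Ioi.intermediate_value (Set.mem_Ioi.mpr he0) hc0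
    aFun_continuousOn ⟨he.le, hc⟩
  exact ⟨d, ⟨hd, hdn⟩, fun y hy =>
    aFun_strictAntiOn.injOn hy.1 hd (hy.2.trans hdn.symm)⟩
end

section
/- Let d_n denote the unique positive solution of Σ_{j=1}^∞ j·e^{−jd}/(1 − e^{−jd}) = n. Then there is a fixed constant β > 0 such that, as n → ∞, d_n = π/√(6n) − 1/(4n) + O(n^{−1−β}). -/
open Filter Asymptotics Topology

theorem sp_cube (y : ℝ) (hy : 0 ≤ y) : y ^ 3 * Real.cosh y ≤ Real.sinh y ^ 3 := by
  have hder : ∀ x : ℝ, HasDerivAt (fun x => Real.sinh x * (Real.cosh x) ^ (-(1/3) : ℝ) - x)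
      (Real.cosh x * (Real.cosh x) ^ (-(1/3) : ℝ) + Real.sinh x *
        (Real.sinh x * (-(1/3)) * (Real.cosh x) ^ (-(1/3) - 1 : ℝ)) - 1) x := by
    intro x
    exact ((Real.hasDerivAt_sinh x).mul ((Real.hasDerivAt_cosh x).rpow_const
      (Or.inl (Real.cosh_pos x).ne'))).sub (hasDerivAt_id x)
  have hmono : Monotone (fun x => Real.sinh x * (Real.cosh x) ^ (-(1/3) : ℝ) - x) := by
    apply monotone_of_deriv_nonneg (fun x => (hder x).differentiableAt)
    intro x
    rw [(hder x).deriv]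
    have hc := Real.cosh_pos x
    obtain ⟨v, hv⟩ : ∃ v, v = (Real.cosh x) ^ (-(1/3) : ℝ) := ⟨_, rfl⟩
    have hvpos : 0 < v := hv ▸ Real.rpow_pos_of_pos hc _
    have hv3 : v ^ 3 * Real.cosh x = 1 := by
      rw [hv, ← Real.rpow_natCast, ← Real.rpow_mul hc.le]
      norm_num [Real.rpow_neg_one, hc.ne']
    rw [Real.rpow_sub hc, Real.rpow_one, ← hv]
    have hcv : Real.cosh x = 1 / v ^ 3 := by field_simp; linarith
    have hs : Real.sinh x ^ 2 = (1 / v ^ 3) ^ 2 - 1 := by rw [← hcv, Real.sinh_sq]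
    have : Real.cosh x * v + Real.sinh x * (Real.sinh x * (-(1/3)) * (v / Real.cosh x)) - 1
        = (1 - v ^ 2) ^ 2 * (2 + v ^ 2) / (3 * v ^ 2) := by
      have : Real.cosh x * v + Real.sinh x * (Real.sinh x * (-(1/3)) * (v / Real.cosh x)) - 1
        = Real.cosh x * v - Real.sinh x ^ 2 * (1/3) * (v / Real.cosh x) - 1 := by ring
      rw [this, hs, hcv]
      field_simp
      ring
    rw [this]
    positivity
  have h := hmono hy
  simp only [Real.sinh_zero, zero_mul, sub_zero] at h
  have hc := Real.cosh_pos y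
  have h1 : y ≤ Real.sinh y * (Real.cosh y) ^ (-(1/3) : ℝ) := by linarith
  have h2 := pow_le_pow_left₀ hy h1 3
  rw [mul_pow, ← Real.rpow_natCast (_ ^ _), ← Real.rpow_mul hc.le] at h2
  norm_num [Real.rpow_neg_one] at h2
  calc _ ≤ (Real.sinh y ^ 3 * (Real.cosh y)⁻¹) * Real.cosh y := by gcongr
    _ = _ := by field_simp

theorem sp_sinh_le (y : ℝ) (hy : 0 ≤ y) : Real.sinh y ≤ y * Real.cosh y := by
  have hder : ∀ x : ℝ, HasDerivAt (fun x => x * Real.cosh x - Real.sinh x)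
      (1 * Real.cosh x + x * Real.sinh x - Real.cosh x) x := fun x =>
    ((hasDerivAt_id x).mul (Real.hasDerivAt_cosh x)).sub (Real.hasDerivAt_sinh x)
  have hmono : Monotone (fun x => x * Real.cosh x - Real.sinh x) := by
    apply monotone_of_deriv_nonneg (fun x => (hder x).differentiableAt)
    intro x
    rw [(hder x).deriv]
    simp only [one_mul, add_sub_cancel_left]
    rcases le_total 0 x with h | h
    · exact mul_nonneg h (Real.sinh_nonneg_iff.2 h)
    · exact mul_nonneg_of_nonpos_of_nonpos h (Real.sinh_nonpos_iff.2 h)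
  have := hmono hy
  simp at this
  linarith

theorem sp_cosh_le (y : ℝ) (hy : 0 ≤ y) : Real.cosh y - 1 ≤ y * Real.sinh y := by
  have h := sp_sinh_le (y/2) (by linarith)
  have e1 : Real.cosh y = Real.cosh (y/2) ^ 2 + Real.sinh (y/2) ^ 2 := by
    rw [← Real.cosh_two_mul]; ring_nf
  have e2 : Real.sinh y = 2 * Real.sinh (y/2) * Real.cosh (y/2) := by
    rw [← Real.sinh_two_mul]; ring_nf
  have e3 := Real.cosh_sq (y/2)
  have hs : 0 ≤ Real.sinh (y/2) := Real.sinh_nonneg_iff.2 (by linarith)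
  have hc := Real.cosh_pos (y/2)
  rw [e1, e2]
  nlinarith [mul_le_mul_of_nonneg_right h hs, mul_nonneg hy (mul_nonneg hs hc.le)]

noncomputable def spH (y : ℝ) : ℝ := 1 / Real.sinh y ^ 2 - 1 / y ^ 2
noncomputable def spG (y : ℝ) : ℝ := 1 / y - Real.cosh y / Real.sinh y

theorem spG_deriv (y : ℝ) (hy : 0 < y) : HasDerivAt spG (spH y) y := by
  have hs : 0 < Real.sinh y := Real.sinh_pos_iff.2 hy
  have h := ((hasDerivAt_const y (1:ℝ)).div (hasDerivAt_id y) hy.ne').sub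
    ((Real.hasDerivAt_cosh y).div (Real.hasDerivAt_sinh y) hs.ne')
  convert! h using 1
  have := Real.cosh_sq y
  simp only [spH, id]
  field_simp
  rw [this]; ring

theorem spH_mono : MonotoneOn spH (Set.Ioi 0) := by
  have hder : ∀ x : ℝ, 0 < x → HasDerivAt spH
      (2 / x ^ 3 - 2 * Real.cosh x / Real.sinh x ^ 3) x := by
    intro y hy
    have hs : 0 < Real.sinh y := Real.sinh_pos_iff.2 hy
    have h := ((hasDerivAt_const y (1:ℝ)).div ((Real.hasDerivAt_sinh y).pow 2)
      (pow_pos hs 2).ne').sub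
      ((hasDerivAt_const y (1:ℝ)).div ((hasDerivAt_id y).pow 2) (pow_pos hy 2).ne')
    convert! h using 1
    simp only [id, Pi.pow_apply]
    field_simp
    ring
  apply monotoneOn_of_deriv_nonneg (convex_Ioi 0)
  · exact fun x hx => (hder x hx).continuousAt.continuousWithinAt
  · rw [interior_Ioi]
    exact fun x hx => (hder x hx).differentiableAt.differentiableWithinAt
  · rw [interior_Ioi]
    intro x hx
    have hx : 0 < x := hx
    have hs : 0 < Real.sinh x := Real.sinh_pos_iff.2 hx
    rw [(hder x hx).deriv, sub_nonneg, div_le_div_iff₀ (by positivity) (by positivity)]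
    linarith [sp_cube x hx.le]

theorem spH_nonpos (y : ℝ) (hy : 0 < y) : spH y ≤ 0 := by
  have := Real.self_le_sinh_iff.2 hy.le
  unfold spH
  rw [sub_nonpos]
  gcongr

theorem spH_ge (y : ℝ) (hy : 0 < y) : -1 ≤ spH y := by
  have hs : 0 < Real.sinh y := Real.sinh_pos_iff.2 hy
  have h := sp_sinh_le y hy.le
  have h2 := pow_le_pow_left₀ hs.le h 2
  rw [mul_pow, Real.cosh_sq] at h2
  have : spH y + 1 = (y ^ 2 - Real.sinh y ^ 2 + y ^ 2 * Real.sinh y ^ 2)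
      / (y ^ 2 * Real.sinh y ^ 2) := by
    unfold spH; field_simp
  have : 0 ≤ spH y + 1 := by
    rw [this]; apply div_nonneg _ (by positivity); linarith
  linarith

theorem spG_abs (y : ℝ) (hy : 0 < y) : -y ≤ spG y ∧ spG y ≤ 0 := by
  have hs : 0 < Real.sinh y := Real.sinh_pos_iff.2 hy
  have h := sp_sinh_le y hy.le
  have h1 := sp_cosh_le y hy.le
  have h0 := Real.self_le_sinh_iff.2 hy.le
  have e : spG y = (Real.sinh y - y * Real.cosh y) / (y * Real.sinh y) := by
    unfold spG; field_simp
  rw [e]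
  constructor
  · rw [le_div_iff₀ (by positivity)]
    nlinarith
  · apply div_nonpos_of_nonpos_of_nonneg (by linarith) (by positivity)

theorem spG_lim (y : ℝ) (hy : 0 < y) : |spG y + 1| ≤ 1 / y := by
  have hs : 0 < Real.sinh y := Real.sinh_pos_iff.2 hy
  have h0 := Real.self_le_sinh_iff.2 hy.le
  have e : spG y + 1 = 1 / y - Real.exp (-y) / Real.sinh y := by
    unfold spG; rw [← Real.cosh_sub_sinh]; field_simp; ring
  have h1 : Real.exp (-y) / Real.sinh y ≤ 1 / y := by
    have : Real.exp (-y) ≤ 1 := Real.exp_le_one_iff.2 (by linarith)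
    gcongr
  have h2 : 0 ≤ Real.exp (-y) / Real.sinh y := by positivity
  have h3 : 0 ≤ 1 / y := by positivity
  rw [e, abs_le]; constructor <;> linarith

theorem spG_step (x y : ℝ) (hx : 0 < x) (hy : 0 < y) :
    y * spH x ≤ spG (x + y) - spG x ∧ spG (x + y) - spG x ≤ y * spH (x + y) := by
  obtain ⟨c, hc, h⟩ := exists_hasDerivAt_eq_slope spG spH (show x < x + y by linarith)
    (fun z hz => (spG_deriv z (by linarith [hz.1])).continuousAt.continuousWithinAt)
    (fun z hz => spG_deriv z (by linarith [hz.1]))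
  have hc0 : 0 < c := by linarith [hc.1]
  have e : spG (x + y) - spG x = y * spH c := by
    rw [h, add_sub_cancel_left]; field_simp
  rw [e]
  exact ⟨mul_le_mul_of_nonneg_left (spH_mono (Set.mem_Ioi.2 hx) (Set.mem_Ioi.2 hc0) hc.1.le) hy.le,
    mul_le_mul_of_nonneg_left (spH_mono (Set.mem_Ioi.2 hc0)
      (Set.mem_Ioi.2 (by linarith)) hc.2.le) hy.le⟩

theorem sp_partial (y : ℝ) (hy : 0 < y) (N : ℕ) :
    y * ∑ k ∈ Finset.range N, spH ((k + 1) * y) ≤ spG ((N + 1) * y) - spG y ∧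
    spG ((N + 1) * y) - spG y + y * spH y ≤
      y * ∑ k ∈ Finset.range (N + 1), spH ((k + 1) * y) := by
  induction N with
  | zero => simp
  | succ N ih =>
    have h := spG_step ((N + 1) * y) y (by positivity) hy
    have e : ((N:ℝ) + 1) * y + y = (((N + 1 : ℕ) : ℝ) + 1) * y := by push_cast; ring
    rw [e] at h
    rw [Finset.sum_range_succ _ (N + 1)]
    constructor
    · rw [Finset.sum_range_succ, mul_add]; linarith [ih.1]
    · rw [mul_add]; linarith [ih.2]

theorem sp_sum (y S : ℝ) (hy : 0 < y) (hS : HasSum (fun k : ℕ => spH ((k + 1) * y)) S) :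
    |S + 1 / y| ≤ 1 := by
  have hGl : Tendsto (fun N : ℕ => spG ((N + 1) * y)) atTop (𝓝 (-1)) := by
    rw [tendsto_iff_norm_sub_tendsto_zero]
    have hl : Tendsto (fun N : ℕ => (1 / y) * (1 / ((N:ℝ) + 1))) atTop (𝓝 0) := by
      simpa using (tendsto_one_div_add_atTop_nhds_zero_nat (𝕜 := ℝ)).const_mul (1 / y)
    refine squeeze_zero (fun _ => norm_nonneg _) (fun N => ?_) hl
    have := spG_lim ((N + 1) * y) (by positivity)
    rw [Real.norm_eq_abs, sub_neg_eq_add]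
    refine this.trans (le_of_eq ?_)
    field_simp
  have hT := hS.tendsto_sum_nat
  have h1 : y * S ≤ -1 - spG y :=
    le_of_tendsto_of_tendsto' (hT.const_mul y) (hGl.sub_const _) (fun N => (sp_partial y hy N).1)
  have h2 : -1 - spG y + y * spH y ≤ y * S :=
    le_of_tendsto_of_tendsto' ((hGl.sub_const _).add_const _)
      ((hT.comp (tendsto_add_atTop_nat 1)).const_mul y) (fun N => (sp_partial y hy N).2)
  have h3 := spG_abs y hy
  have h4 := spH_ge y hy
  have h5 : S + 1 / y = (y * S + 1) / y := by field_simp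
  rw [h5, abs_le, le_div_iff₀ hy, div_le_iff₀ hy]
  constructor <;> nlinarith

theorem sp_swap (y : ℝ) (hy : 0 < y) :
    HasSum (fun k : ℕ => 1 / (4 * Real.sinh ((k + 1) * y) ^ 2)) (aFun (2 * y)) := by
  obtain ⟨r, hr⟩ : ∃ r, r = Real.exp (-(2 * y)) := ⟨_, rfl⟩
  have hr0 : 0 < r := hr ▸ Real.exp_pos _
  have hr1 : r < 1 := by rw [hr]; exact Real.exp_lt_one_iff.2 (by linarith)
  have hrn : ‖r‖ < 1 := by rwa [Real.norm_of_nonneg hr0.le]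
  have hpow : ∀ k : ℕ, ‖r ^ (k + 1)‖ < 1 := fun k => by
    rw [norm_pow]; exact pow_lt_one₀ (norm_nonneg _) hrn (by omega)
  have hexp : ∀ k : ℕ, Real.exp (-((k:ℝ) + 1) * (2 * y)) = r ^ (k + 1) := fun k => by
    rw [hr, ← Real.exp_nat_mul]; push_cast; ring_nf
  have hsum : Summable (fun p : ℕ × ℕ => ((p.2:ℝ) + 1) * r ^ ((p.1 + 1) * (p.2 + 1))) := by
    have h := summable_prod_mul_pow 1 hrn
    rw [← (Equiv.prodCongr Equiv.pnatEquivNat.symm Equiv.pnatEquivNat.symm).summable_iff] at h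
    refine h.congr fun p => ?_
    simp [Equiv.pnatEquivNat]
  have hk : ∀ k : ℕ, HasSum (fun j : ℕ => ((j:ℝ) + 1) * r ^ ((k + 1) * (j + 1)))
      (1 / (4 * Real.sinh ((k + 1) * y) ^ 2)) := by
    intro k
    have h := hasSum_coe_mul_geometric_of_norm_lt_one (hpow k)
    rw [← hasSum_nat_add_iff' 1] at h
    convert! h using 1
    · ext j; push_cast; rw [← pow_mul]
    · simp only [Finset.range_one, Finset.sum_singleton, Nat.cast_zero, zero_mul, sub_zero]
      rw [← hexp]
      obtain ⟨u, hu⟩ : ∃ u, u = Real.exp (-((k + 1) * y)) := ⟨_, rfl⟩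
      have hu0 : 0 < u := hu ▸ Real.exp_pos _
      have hu1 : u < 1 := by
        rw [hu]; apply Real.exp_lt_one_iff.2
        have : 0 < ((k:ℝ) + 1) * y := by positivity
        linarith
      have e1 : Real.exp (-((k:ℝ) + 1) * (2 * y)) = u ^ 2 := by
        rw [hu, ← Real.exp_nat_mul]; push_cast; ring_nf
      have e2 : Real.exp ((k + 1) * y) = 1 / u := by
        rw [hu, Real.exp_neg]; simp
      rw [e1, Real.sinh_eq, ← hu, e2]
      have : 1 - u ^ 2 ≠ 0 := by nlinarith
      have e3 : (1 / u - u) / 2 = (1 - u ^ 2) / (2 * u) := by field_simp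
      rw [e3]
      field_simp
      ring
  have hj : ∀ j : ℕ, HasSum (fun k : ℕ => ((j:ℝ) + 1) * r ^ ((k + 1) * (j + 1)))
      ((j + 1 : ℝ) * Real.exp (-(j + 1) * (2 * y)) / (1 - Real.exp (-(j + 1) * (2 * y)))) := by
    intro j
    have h := (hasSum_geometric_of_norm_lt_one (hpow j)).mul_left (((j:ℝ) + 1) * r ^ (j + 1))
    rw [hexp, div_eq_mul_inv]
    convert! h using 1
    ext k
    rw [mul_assoc, ← pow_mul, ← pow_add]
    congr 2
    ring
  have hA := hsum.hasSum.prod_fiberwise hk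
  have hB := (hsum.prod_symm.hasSum).prod_fiberwise hj
  have e : aFun (2 * y) = ∑' p : ℕ × ℕ, ((p.2:ℝ) + 1) * r ^ ((p.1 + 1) * (p.2 + 1)) := by
    unfold aFun
    rw [hB.tsum_eq]
    exact (Equiv.prodComm ℕ ℕ).tsum_eq
      (fun p : ℕ × ℕ => ((p.2:ℝ) + 1) * r ^ ((p.1 + 1) * (p.2 + 1)))
  rw [e]; exact hA

theorem sp_aFun (d : ℝ) (hd : 0 < d) :
    |aFun d - (Real.pi ^ 2 / 6 / d ^ 2 - 1 / (2 * d))| ≤ 1 / 4 := by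
  have hy : 0 < d / 2 := by linarith
  have h1 := (sp_swap (d / 2) hy).mul_left 4
  have hz := hasSum_zeta_two
  rw [← hasSum_nat_add_iff' 1] at hz
  simp only [Finset.range_one, Finset.sum_singleton, Nat.cast_zero, ne_eq, OfNat.ofNat_ne_zero,
    not_false_eq_true, zero_pow, div_zero, sub_zero] at hz
  have h2 := hz.mul_left (1 / (d / 2) ^ 2)
  have h3 : HasSum (fun k : ℕ => spH ((k + 1) * (d / 2)))
      (4 * aFun (2 * (d / 2)) - 1 / (d / 2) ^ 2 * (Real.pi ^ 2 / 6)) := by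
    convert! h1.sub h2 using 1
    ext k
    have : Real.sinh (((k:ℝ) + 1) * (d / 2)) ≠ 0 :=
      (Real.sinh_pos_iff.2 (by positivity)).ne'
    unfold spH
    push_cast
    field_simp
  have h := sp_sum _ _ hy h3
  have e : 4 * aFun (2 * (d / 2)) - 1 / (d / 2) ^ 2 * (Real.pi ^ 2 / 6) + 1 / (d / 2)
      = 4 * (aFun d - (Real.pi ^ 2 / 6 / d ^ 2 - 1 / (2 * d))) := by
    rw [show 2 * (d / 2) = d by ring]; field_simp; ring
  rw [e, abs_mul] at h
  norm_num at h ⊢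
  linarith

theorem sp_final (n d : ℝ) (hn : 1 ≤ n) (hd : 0 < d) (h : aFun d = n) :
    |d - (Real.pi / Real.sqrt (6 * n) - 1 / (4 * n))| ≤ 2 * (1 / (n * Real.sqrt n)) := by
  have hE := sp_aFun d hd
  rw [h] at hE
  obtain ⟨E, hEd⟩ : ∃ E, E = n - (Real.pi ^ 2 / 6 / d ^ 2 - 1 / (2 * d)) := ⟨_, rfl⟩
  rw [← hEd] at hE
  obtain ⟨s, hs⟩ : ∃ s, s = Real.sqrt n := ⟨_, rfl⟩
  obtain ⟨q, hq⟩ : ∃ q, q = Real.pi / Real.sqrt 6 := ⟨_, rfl⟩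
  have hs0 : 0 < s := hs ▸ Real.sqrt_pos.2 (by linarith)
  have hs2 : n = s ^ 2 := by rw [hs, Real.sq_sqrt (by linarith)]
  have hq2 : q ^ 2 = Real.pi ^ 2 / 6 := by
    rw [hq, div_pow, Real.sq_sqrt (by norm_num)]
  have hq0 : 0 < q := by rw [hq]; positivity
  have hpi := Real.pi_gt_three
  have hpi2 := Real.pi_lt_d2
  have hq1 : 1 ≤ q := by nlinarith
  have hq3 : q ^ 2 ≤ 5 / 3 := by rw [hq2]; nlinarith
  have hD : Real.pi / Real.sqrt (6 * n) = q / s := by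
    rw [Real.sqrt_mul (by norm_num), ← hs, hq, div_div]
  rw [hD, ← hs, hs2]
  rw [← hq2, hs2] at hEd
  rw [abs_le] at hE
  have hs1 : 1 ≤ s ^ 2 := hs2 ▸ hn
  have heq : s ^ 2 * d ^ 2 + d / 2 = q ^ 2 + E * d ^ 2 := by
    rw [hEd]; field_simp; ring
  have hd2 : s ^ 2 * d ^ 2 ≤ 3 := by nlinarith [sq_nonneg d]
  have hkey : (d - (q / s - 1 / (4 * s ^ 2))) * (s ^ 2 * (s ^ 2 * d + q * s + 1 / 4))
      = E * (s ^ 2 * d ^ 2) + 1 / 16 := by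
    have : E * (s ^ 2 * d ^ 2) = s ^ 2 * (s ^ 2 * d ^ 2 + d / 2 - q ^ 2) := by
      rw [heq]; ring
    rw [this]; field_simp; ring
  have hR : |E * (s ^ 2 * d ^ 2) + 1 / 16| ≤ 2 := by
    have : 0 ≤ s ^ 2 * d ^ 2 := by positivity
    rw [abs_le]; constructor <;> nlinarith
  rw [← hkey, abs_mul] at hR
  have hM : s ^ 2 * s ≤ |s ^ 2 * (s ^ 2 * d + q * s + 1 / 4)| := by
    rw [abs_of_pos (by positivity)]
    have : 0 < s ^ 2 * d := by positivity
    gcongr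
    nlinarith
  rw [mul_one_div, le_div_iff₀ (by positivity)]
  exact (mul_le_mul_of_nonneg_left hM (abs_nonneg _)).trans hR

/-- **Asymptotic expansion of the saddle point** (formula (19) of the paper): if `d_n` is
the unique positive solution of `Σ_{j≥1} j·e^{−jd}/(1 − e^{−jd}) = n`, then there is a
fixed `β > 0` such that `d_n = π/√(6n) − 1/(4n) + O(n^{−1−β})` as `n → ∞`. -/
theorem saddle_point_asymptotics (d : ℕ → ℝ)
    (hd : ∀ n : ℕ, 0 < n → 0 < d n ∧ aFun (d n) = n) :
    ∃ β : ℝ, 0 < β ∧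
      (fun n : ℕ => d n - (Real.pi / Real.sqrt (6 * n) - 1 / (4 * n)))
        =O[atTop] (fun n : ℕ => (n : ℝ) ^ (-1 - β)) := by
  refine ⟨1 / 2, by norm_num, ?_⟩
  apply IsBigO.of_bound 2
  filter_upwards [eventually_ge_atTop 1] with n hn
  have hn1 : (1:ℝ) ≤ n := by exact_mod_cast hn
  have hn0 : (0:ℝ) < n := by linarith
  obtain ⟨h1, h2⟩ := hd n hn
  have h := sp_final n (d n) hn1 h1 h2
  have e : (n:ℝ) ^ (-1 - 1 / 2 : ℝ) = 1 / (n * Real.sqrt n) := by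
    rw [Real.rpow_sub hn0, Real.rpow_neg_one, ← Real.sqrt_eq_rpow]
    field_simp
  rw [e, Real.norm_eq_abs, Real.norm_of_nonneg (by positivity)]
  exact h
end

section
/- As d → 0⁺, Σ_{j=1}^∞ j²·e^{−jd}/(1 − e^{−jd})² = 2ζ(2)·d^{−3} + O(d^{−2}). In particular, with d = d_n the unique positive solution of Σ_{j=1}^∞ j·e^{−jd}/(1 − e^{−jd}) = n, one has Σ_{j=1}^∞ j²·e^{−j d_n}/(1 − e^{−j d_n})² ∼ (2√6/π)·n^{3/2} as n → ∞. -/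
open Filter Asymptotics Topology

/-- `bFun d = Σ_{j≥1} j²·e^{−jd}/(1 − e^{−jd})²`. -/
noncomputable def bFun (d : ℝ) : ℝ :=
  ∑' j : ℕ, (j + 1 : ℝ) ^ 2 * Real.exp (-(j + 1) * d) / (1 - Real.exp (-(j + 1) * d)) ^ 2


theorem aux_sinh_upper {v : ℝ} (h0 : 0 < v) (h1 : v ≤ 1) : Real.sinh v - v ≤ v ^ 3 := by
  have e1 := Real.exp_bound (x := v) (by rw [abs_of_pos h0]; exact h1) (n := 3) (by norm_num)
  have e2 := Real.exp_bound (x := -v) (by rw [abs_neg, abs_of_pos h0]; exact h1) (n := 3) (by norm_num)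
  rw [abs_neg] at e2
  rw [abs_of_pos h0] at e1 e2
  rw [abs_le] at e1 e2
  norm_num [Finset.sum_range_succ, Nat.factorial] at e1 e2
  have : 0 < v ^ 3 := by positivity
  rw [Real.sinh_eq]
  nlinarith [e1.2, e2.1]

theorem aux_sinh_lower {v : ℝ} (h0 : 0 < v) : v ^ 2 / 4 ≤ Real.sinh v := by
  have e1 := Real.quadratic_le_exp_of_nonneg h0.le
  have e2 : Real.exp (-v) ≤ 1 := Real.exp_le_one_iff.2 (by linarith)
  rw [Real.sinh_eq]
  nlinarith

theorem aux_key {v : ℝ} (h0 : 0 < v) :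
    |Real.cosh v / (4 * Real.sinh v ^ 3) - 1 / (4 * v ^ 3)| ≤ 64 / (v * (1 + v) ^ 2) := by
  have hs : v ≤ Real.sinh v := Real.self_le_sinh_iff.2 h0.le
  have hc2 := Real.cosh_sq v
  have hc1 := Real.one_le_cosh v
  have hl := aux_sinh_lower h0
  have hu : v ≤ 1 → Real.sinh v - v ≤ v ^ 3 := aux_sinh_upper h0
  generalize Real.sinh v = s at *
  generalize Real.cosh v = c at *
  have hs0 : 0 < s := by linarith
  have hcA : c ≤ 1 + s ^ 2 / 2 := by
    by_contra! h
    nlinarith [sq_nonneg (s ^ 2)]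
  have hcB : c ≤ 1 + s := by
    by_contra! h
    nlinarith
  have hsv3 : 1 / s ^ 3 ≤ 1 / v ^ 3 := by gcongr
  have hE : c / (4 * s ^ 3) - 1 / (4 * v ^ 3) = (c / s ^ 3 - 1 / v ^ 3) / 4 := by
    field_simp
  rw [hE, abs_le]
  rcases le_total v 1 with h | h
  · have hb : 1 / v ≤ 4 / (v * (1 + v) ^ 2) := by
      rw [div_le_div_iff₀ (by positivity) (by positivity)]
      nlinarith [mul_nonneg h0.le (by nlinarith : 0 ≤ 4 - (1 + v) ^ 2)]
    have hb' : 64 / (v * (1 + v) ^ 2) = 16 * (4 / (v * (1 + v) ^ 2)) := by ring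
    have hv : 0 < 1 / v := by positivity
    have hU : c / s ^ 3 ≤ 1 / s ^ 3 + 1 / v := by
      have : c / s ^ 3 ≤ (1 + s ^ 2 / 2) / s ^ 3 := by gcongr
      have e : (1 + s ^ 2 / 2) / s ^ 3 = 1 / s ^ 3 + (1 / 2) * (1 / s) := by field_simp
      have : 1 / s ≤ 1 / v := by gcongr
      have : 0 < 1 / s := by positivity
      linarith
    have hL : 1 / v ^ 3 ≤ 1 / s ^ 3 + 3 * (1 / v) := by
      have h2 : s ^ 3 - v ^ 3 ≤ 3 * s ^ 3 * v ^ 2 := by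
        have a1 : s ^ 3 - v ^ 3 = (s - v) * (s ^ 2 + s * v + v ^ 2) := by ring
        have a2 : s ^ 2 + s * v + v ^ 2 ≤ 3 * s ^ 2 := by nlinarith
        have a3 : (s - v) * (s ^ 2 + s * v + v ^ 2) ≤ v ^ 3 * (3 * s ^ 2) :=
          mul_le_mul (hu h) a2 (by positivity) (by positivity)
        have a4 : v * (v ^ 2 * s ^ 2) ≤ s * (v ^ 2 * s ^ 2) := by gcongr
        nlinarith
      have e : 1 / s ^ 3 + 3 * (1 / v) - 1 / v ^ 3 = (3 * s ^ 3 * v ^ 2 - (s ^ 3 - v ^ 3)) / (s ^ 3 * v ^ 3) := by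
        field_simp
        ring
      have : 0 ≤ (3 * s ^ 3 * v ^ 2 - (s ^ 3 - v ^ 3)) / (s ^ 3 * v ^ 3) :=
        div_nonneg (by linarith) (by positivity)
      linarith
    have hcs : 1 / s ^ 3 ≤ c / s ^ 3 := by gcongr
    constructor <;> linarith
  · have hb : 1 / v ^ 3 ≤ 4 / (v * (1 + v) ^ 2) := by
      rw [div_le_div_iff₀ (by positivity) (by positivity)]
      nlinarith [mul_nonneg h0.le (by nlinarith : 0 ≤ 4 * v ^ 2 - (1 + v) ^ 2)]
    have hb' : 64 / (v * (1 + v) ^ 2) = 16 * (4 / (v * (1 + v) ^ 2)) := by ring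
    have hv : 0 < 1 / v ^ 3 := by positivity
    have hU : c / s ^ 3 ≤ 1 / s ^ 3 + 16 * (1 / v ^ 3) := by
      have : c / s ^ 3 ≤ (1 + s) / s ^ 3 := by gcongr
      have e : (1 + s) / s ^ 3 = 1 / s ^ 3 + 1 / s ^ 2 := by field_simp
      have h3 : 1 / s ^ 2 ≤ 1 / (v ^ 2 / 4) ^ 2 := by gcongr
      have h4 : 1 / (v ^ 2 / 4) ^ 2 = 16 * (1 / v ^ 4) := by field_simp; norm_num
      have h5 : 1 / v ^ 4 ≤ 1 / v ^ 3 := by gcongr <;> first | exact h | norm_num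
      linarith
    have hcs : 0 ≤ c / s ^ 3 := by positivity
    constructor <;> linarith

theorem aux_tel {d : ℝ} (hd : 0 < d) :
    Summable (fun k : ℕ => 1 / (1 + (k + 1 : ℝ) * d) ^ 2) ∧
    ∑' k : ℕ, 1 / (1 + (k + 1 : ℝ) * d) ^ 2 ≤ 1 / d := by
  have hb : ∀ n : ℕ, ∑ k ∈ Finset.range n, 1 / (1 + (k + 1 : ℝ) * d) ^ 2 ≤ 1 / d := by
    intro n
    have : ∑ k ∈ Finset.range n, 1 / (1 + (k + 1 : ℝ) * d) ^ 2 ≤ 1 / d - 1 / d * (1 / (1 + n * d)) := by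
      induction n with
      | zero => simp
      | succ n ih =>
        rw [Finset.sum_range_succ]
        have : 1 / (1 + (n + 1 : ℝ) * d) ^ 2 ≤ 1 / d * (1 / (1 + n * d)) - 1 / d * (1 / (1 + (n + 1 : ℝ) * d)) := by
          have e : 1 / d * (1 / (1 + n * d)) - 1 / d * (1 / (1 + (n + 1 : ℝ) * d)) = 1 / ((1 + n * d) * (1 + (n + 1 : ℝ) * d)) := by
            field_simp
            ring
          rw [e, sq]
          gcongr
          linarith
        push_cast
        linarith
    have : 0 ≤ 1 / d * (1 / (1 + n * d)) := by positivity
    linarith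
  have h0 : ∀ k : ℕ, 0 ≤ 1 / (1 + (k + 1 : ℝ) * d) ^ 2 := fun k => by positivity
  exact ⟨summable_of_sum_range_le h0 hb, Real.tsum_le_of_sum_range_le h0 hb⟩

theorem aux_geo1 {q : ℝ} (h0 : 0 ≤ q) (h1 : q < 1) :
    HasSum (fun j : ℕ => (j + 1 : ℝ) * q ^ (j + 1)) (q / (1 - q) ^ 2) := by
  have h := (hasSum_choose_mul_geometric_of_norm_lt_one (r := q) 1
    (by rwa [Real.norm_of_nonneg h0])).mul_left q
  have e : (fun j : ℕ => (j + 1 : ℝ) * q ^ (j + 1))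
      = fun i : ℕ => q * (((i + 1).choose 1 : ℕ) * q ^ i) := by
    funext j
    rw [Nat.choose_one_right]
    push_cast
    ring
  rw [e, show q / (1 - q) ^ 2 = q * (1 / (1 - q) ^ (1 + 1)) by ring]
  exact h

theorem aux_geo2 {q : ℝ} (h0 : 0 ≤ q) (h1 : q < 1) :
    HasSum (fun j : ℕ => (j + 1 : ℝ) ^ 2 * q ^ (j + 1)) (q * (1 + q) / (1 - q) ^ 3) := by
  have hn : ‖q‖ < 1 := by rwa [Real.norm_of_nonneg h0]
  have h2 := (hasSum_choose_mul_geometric_of_norm_lt_one (r := q) 2 hn).mul_left (2 * q)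
  have h := h2.sub (aux_geo1 h0 h1)
  have h3 : (1 - q) ≠ 0 := by linarith
  have e : (fun j : ℕ => (j + 1 : ℝ) ^ 2 * q ^ (j + 1))
      = fun b : ℕ => 2 * q * (((b + 2).choose 2 : ℕ) * q ^ b) - (b + 1 : ℝ) * q ^ (b + 1) := by
    funext j
    rw [Nat.cast_choose_two]
    push_cast
    ring
  have e2 : q * (1 + q) / (1 - q) ^ 3 = 2 * q * (1 / (1 - q) ^ (2 + 1)) - q / (1 - q) ^ 2 := by
    field_simp
    ring
  rw [e, e2]
  exact h

theorem aux_geo0 {q : ℝ} (h0 : 0 ≤ q) (h1 : q < 1) :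
    HasSum (fun j : ℕ => q ^ (j + 1)) (q / (1 - q)) := by
  have h := (hasSum_geometric_of_lt_one h0 h1).mul_left q
  have e : (fun j : ℕ => q ^ (j + 1)) = fun j : ℕ => q * q ^ j := by
    funext j
    ring
  rw [e, div_eq_mul_inv]
  exact h

theorem aux_h1 {v : ℝ} (h0 : 0 < v) :
    Real.exp (-(2 * v)) / (1 - Real.exp (-(2 * v))) ^ 2 = 1 / (4 * Real.sinh v ^ 2) := by
  have hs : 0 < Real.sinh v := Real.sinh_pos_iff.2 h0
  have e1 : Real.exp (-(2 * v)) = Real.exp (-v) ^ 2 := by rw [← Real.exp_nat_mul]; congr 1; push_cast; ring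
  have e2 : 1 - Real.exp (-(2 * v)) = Real.exp (-v) * (2 * Real.sinh v) := by
    rw [Real.sinh_eq, e1]
    have : Real.exp (-v) * Real.exp v = 1 := by rw [← Real.exp_add]; simp
    linear_combination -this
  have := Real.exp_pos (-v)
  rw [e2, e1]
  field_simp
  norm_num

theorem aux_h2 {v : ℝ} (h0 : 0 < v) :
    Real.exp (-(2 * v)) * (1 + Real.exp (-(2 * v))) / (1 - Real.exp (-(2 * v))) ^ 3
      = Real.cosh v / (4 * Real.sinh v ^ 3) := by
  have hs : 0 < Real.sinh v := Real.sinh_pos_iff.2 h0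
  have e1 : Real.exp (-(2 * v)) = Real.exp (-v) ^ 2 := by rw [← Real.exp_nat_mul]; congr 1; push_cast; ring
  have this : Real.exp (-v) * Real.exp v = 1 := by rw [← Real.exp_add]; simp
  have e2 : 1 - Real.exp (-(2 * v)) = Real.exp (-v) * (2 * Real.sinh v) := by
    rw [Real.sinh_eq, e1]
    linear_combination -this
  have e3 : 1 + Real.exp (-(2 * v)) = Real.exp (-v) * (2 * Real.cosh v) := by
    rw [Real.cosh_eq, e1]
    linear_combination -this
  have := Real.exp_pos (-v)
  rw [e3, e2, e1]
  field_simp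
  norm_num

/-- swap -/
theorem aux_swap (f : ℕ → ℕ → ℝ) (hf : ∀ j k, 0 ≤ f j k) (A B : ℕ → ℝ)
    (hA : ∀ j, HasSum (fun k => f j k) (A j)) (hB : ∀ k, HasSum (fun j => f j k) (B k))
    (hs : Summable B) : ∑' j, A j = ∑' k, B k := by
  have h1 : Summable (Function.uncurry (fun k j => f j k)) := by
    refine (summable_prod_of_nonneg (fun p => hf _ _)).2 ⟨fun k => (hB k).summable, ?_⟩
    simpa [Function.uncurry, (hB _).tsum_eq] using hs
  have := h1.tsum_comm
  simpa [(hB _).tsum_eq, (hA _).tsum_eq] using this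

theorem aux_q {d : ℝ} (hd : 0 < d) (k : ℕ) :
    0 ≤ Real.exp (-(k + 1 : ℝ) * d) ∧ Real.exp (-(k + 1 : ℝ) * d) < 1 := by
  refine ⟨(Real.exp_pos _).le, ?_⟩
  have h : 0 < (k + 1 : ℝ) * d := by positivity
  have h2 : Real.exp (-(k + 1 : ℝ) * d) < Real.exp 0 := Real.exp_lt_exp.2 (by linarith)
  rwa [Real.exp_zero] at h2

theorem aux_pow (d : ℝ) (j k : ℕ) :
    Real.exp (-(j + 1 : ℝ) * d) ^ (k + 1) = Real.exp (-(k + 1 : ℝ) * d) ^ (j + 1) := by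
  rw [← Real.exp_nat_mul, ← Real.exp_nat_mul]
  congr 1
  push_cast
  ring

theorem aux_zeta : HasSum (fun k : ℕ => 1 / (k + 1 : ℝ) ^ 2) (Real.pi ^ 2 / 6) := by
  have h := (hasSum_nat_add_iff' 1).2 hasSum_zeta_two
  simpa using h

theorem aux_a_term {d : ℝ} (hd : 0 < d) (k : ℕ) :
    0 ≤ 1 / (4 * Real.sinh ((k + 1 : ℝ) * d / 2) ^ 2) ∧
    1 / (4 * Real.sinh ((k + 1 : ℝ) * d / 2) ^ 2) ≤ 1 / d ^ 2 * (1 / (k + 1 : ℝ) ^ 2) := by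
  have hv : 0 < (k + 1 : ℝ) * d / 2 := by positivity
  refine ⟨by positivity, ?_⟩
  have hs := Real.self_le_sinh_iff.2 hv.le
  have e : 1 / d ^ 2 * (1 / (k + 1 : ℝ) ^ 2) = 1 / (4 * ((k + 1 : ℝ) * d / 2) ^ 2) := by
    field_simp
    norm_num
  rw [e]
  gcongr

theorem aux_a_eq {d : ℝ} (hd : 0 < d) :
    aFun d = ∑' k : ℕ, 1 / (4 * Real.sinh ((k + 1 : ℝ) * d / 2) ^ 2) := by
  unfold aFun
  refine aux_swap (fun j k => (j + 1 : ℝ) * Real.exp (-(j + 1 : ℝ) * d) ^ (k + 1))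
    (fun j k => by positivity) _ _ ?_ ?_ ?_
  · intro j
    have h := (aux_geo0 (aux_q hd j).1 (aux_q hd j).2).mul_left (j + 1 : ℝ)
    rw [mul_div_assoc]
    exact h
  · intro k
    have h := (aux_geo1 (aux_q hd k).1 (aux_q hd k).2)
    have hv : 0 < (k + 1 : ℝ) * d / 2 := by positivity
    have e := aux_h1 hv
    rw [show -(2 * ((k + 1 : ℝ) * d / 2)) = -(k + 1 : ℝ) * d by ring] at e
    rw [← e]
    simp only [aux_pow d _ k]
    exact h
  · exact Summable.of_nonneg_of_le (fun k => (aux_a_term hd k).1) (fun k => (aux_a_term hd k).2)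
      (aux_zeta.summable.mul_left _)

theorem aux_b_term {d : ℝ} (hd : 0 < d) (k : ℕ) :
    |(k + 1 : ℝ) * (Real.cosh ((k + 1 : ℝ) * d / 2) / (4 * Real.sinh ((k + 1 : ℝ) * d / 2) ^ 3))
      - 2 / d ^ 3 * (1 / (k + 1 : ℝ) ^ 2)| ≤ 128 / d * (1 / (1 + (k + 1 : ℝ) * (d / 2)) ^ 2) := by
  have hv : 0 < (k + 1 : ℝ) * d / 2 := by positivity
  have h := mul_le_mul_of_nonneg_left (aux_key hv) (by positivity : 0 ≤ (k + 1 : ℝ))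
  have e1 : 2 / d ^ 3 * (1 / (k + 1 : ℝ) ^ 2)
      = (k + 1 : ℝ) * (1 / (4 * ((k + 1 : ℝ) * d / 2) ^ 3)) := by
    field_simp
    norm_num
  have e2 : 128 / d * (1 / (1 + (k + 1 : ℝ) * (d / 2)) ^ 2)
      = (k + 1 : ℝ) * (64 / ((k + 1 : ℝ) * d / 2 * (1 + (k + 1 : ℝ) * d / 2) ^ 2)) := by
    rw [← mul_div_assoc (k + 1 : ℝ) d 2]
    field_simp
    norm_num
  rw [e1, e2, ← mul_sub, abs_mul, abs_of_pos (by positivity : 0 < (k + 1 : ℝ))]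
  exact h

theorem aux_b_bound {d : ℝ} (hd : 0 < d) :
    |bFun d - 2 * (Real.pi ^ 2 / 6) / d ^ 3| ≤ 256 * (1 / d ^ 2) := by
  obtain ⟨hT, hT'⟩ := aux_tel (half_pos hd)
  have hT2 := hT.mul_left (128 / d)
  have hz := aux_zeta.mul_left (2 / d ^ 3)
  have hdiff : Summable (fun k : ℕ => (k + 1 : ℝ) *
      (Real.cosh ((k + 1 : ℝ) * d / 2) / (4 * Real.sinh ((k + 1 : ℝ) * d / 2) ^ 3))
      - 2 / d ^ 3 * (1 / (k + 1 : ℝ) ^ 2)) :=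
    Summable.of_norm_bounded hT2 (fun k => aux_b_term hd k)
  have hB : Summable (fun k : ℕ => (k + 1 : ℝ) *
      (Real.cosh ((k + 1 : ℝ) * d / 2) / (4 * Real.sinh ((k + 1 : ℝ) * d / 2) ^ 3))) := by
    simpa using hdiff.add hz.summable
  have hb : bFun d = ∑' k : ℕ, (k + 1 : ℝ) *
      (Real.cosh ((k + 1 : ℝ) * d / 2) / (4 * Real.sinh ((k + 1 : ℝ) * d / 2) ^ 3)) := by
    unfold bFun
    refine aux_swap (fun j k => (j + 1 : ℝ) ^ 2 * ((k + 1 : ℝ) *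
      Real.exp (-(j + 1 : ℝ) * d) ^ (k + 1))) (fun j k => by positivity) _ _ ?_ ?_ hB
    · intro j
      have h := (aux_geo1 (aux_q hd j).1 (aux_q hd j).2).mul_left ((j + 1 : ℝ) ^ 2)
      rw [mul_div_assoc]
      exact h
    · intro k
      have h := (aux_geo2 (aux_q hd k).1 (aux_q hd k).2).mul_left (k + 1 : ℝ)
      have hv : 0 < (k + 1 : ℝ) * d / 2 := by positivity
      have e := aux_h2 hv
      rw [show -(2 * ((k + 1 : ℝ) * d / 2)) = -(k + 1 : ℝ) * d by ring] at e
      rw [← e]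
      simp only [aux_pow d _ k, mul_left_comm _ (k + 1 : ℝ) _]
      exact h
  have e : 2 * (Real.pi ^ 2 / 6) / d ^ 3 = ∑' k : ℕ, 2 / d ^ 3 * (1 / (k + 1 : ℝ) ^ 2) := by
    rw [hz.tsum_eq]
    ring
  rw [hb, e, ← hB.tsum_sub hz.summable]
  rw [← Real.norm_eq_abs]
  refine (tsum_of_norm_bounded hT2.hasSum (fun k => ?_)).trans ?_
  · rw [Real.norm_eq_abs]
    exact aux_b_term hd k
  rw [tsum_mul_left]
  calc _ ≤ 128 / d * (1 / (d / 2)) := by gcongr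
    _ = _ := by field_simp; norm_num

theorem aux_sinh_lim {c : ℝ} (hc : 0 < c) :
    Tendsto (fun t : ℝ => t ^ 2 * (1 / (4 * Real.sinh (c * t / 2) ^ 2))) (𝓝[>] 0)
      (𝓝 (1 / c ^ 2)) := by
  have h1 : HasDerivAt (fun t : ℝ => Real.sinh (c * t / 2)) (c / 2) 0 := by
    have h := ((hasDerivAt_id (0 : ℝ)).const_mul c).div_const 2
    have := h.sinh
    simpa using this
  have h2 := h1.tendsto_slope_zero_right
  have h3 := ((h2.pow 2).const_mul 4).inv₀ (by positivity)
  rw [show (4 * (c / 2) ^ 2)⁻¹ = 1 / c ^ 2 by field_simp; norm_num] at h3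
  refine h3.congr' ?_
  filter_upwards [self_mem_nhdsWithin] with t ht
  have ht : 0 < t := ht
  have : 0 < Real.sinh (c * t / 2) := Real.sinh_pos_iff.2 (by positivity)
  simp
  field_simp

theorem aux_a_lim : Tendsto (fun t : ℝ => t ^ 2 * aFun t) (𝓝[>] 0) (𝓝 (Real.pi ^ 2 / 6)) := by
  rw [← aux_zeta.tsum_eq]
  have h := tendsto_tsum_of_dominated_convergence (𝓕 := 𝓝[>] (0 : ℝ))
    (f := fun (t : ℝ) (k : ℕ) => t ^ 2 * (1 / (4 * Real.sinh ((k + 1 : ℝ) * t / 2) ^ 2)))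
    (g := fun k : ℕ => 1 / (k + 1 : ℝ) ^ 2) aux_zeta.summable
    (fun k => aux_sinh_lim (by positivity)) ?_
  · refine h.congr' ?_
    filter_upwards [self_mem_nhdsWithin] with t ht
    rw [tsum_mul_left, aux_a_eq ht]
  · filter_upwards [self_mem_nhdsWithin] with t ht k
    have ht : 0 < t := ht
    have h1 := aux_a_term ht k
    rw [Real.norm_of_nonneg (mul_nonneg (by positivity) h1.1)]
    calc _ ≤ t ^ 2 * (1 / t ^ 2 * (1 / (k + 1 : ℝ) ^ 2)) := by gcongr; exact h1.2
      _ = _ := by field_simp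

theorem aux_a_le {d : ℝ} (hd : 0 < d) : aFun d ≤ 1 / d ^ 2 * (Real.pi ^ 2 / 6) := by
  have hz := aux_zeta.mul_left (1 / d ^ 2)
  rw [aux_a_eq hd, ← hz.tsum_eq]
  exact Summable.tsum_le_tsum (fun k => (aux_a_term hd k).2)
    (Summable.of_nonneg_of_le (fun k => (aux_a_term hd k).1) (fun k => (aux_a_term hd k).2)
      hz.summable) hz.summable

theorem aux_b_lim : Tendsto (fun t : ℝ => t ^ 3 * bFun t) (𝓝[>] 0)
    (𝓝 (2 * (Real.pi ^ 2 / 6))) := by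
  rw [tendsto_iff_norm_sub_tendsto_zero]
  have h0 : Tendsto (fun t : ℝ => 256 * t) (𝓝[>] 0) (𝓝 0) := by
    have : Tendsto (fun t : ℝ => 256 * t) (𝓝 0) (𝓝 (256 * 0)) := by
      exact tendsto_id.const_mul 256
    rw [mul_zero] at this
    exact this.mono_left nhdsWithin_le_nhds
  refine squeeze_zero' (Eventually.of_forall fun _ => norm_nonneg _) ?_ h0
  filter_upwards [self_mem_nhdsWithin] with t ht
  have ht : 0 < t := ht
  have h := mul_le_mul_of_nonneg_left (aux_b_bound ht) (by positivity : 0 ≤ t ^ 3)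
  have e : t ^ 3 * bFun t - 2 * (Real.pi ^ 2 / 6)
      = t ^ 3 * (bFun t - 2 * (Real.pi ^ 2 / 6) / t ^ 3) := by
    field_simp
  rw [e, norm_mul, Real.norm_of_nonneg (by positivity : 0 ≤ t ^ 3), Real.norm_eq_abs]
  refine h.trans (le_of_eq ?_)
  field_simp

/-- **Asymptotics of `b`** (formula (20) of the paper): as `d → 0⁺`,
`b(d) = 2ζ(2)·d⁻³ + O(d⁻²)` (with `ζ(2) = π²/6`); in particular, along the saddle points
`d_n` solving `a(d) = n`, `b(d_n) ∼ (2√6/π)·n^{3/2}` as `n → ∞`. -/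
theorem bFun_asymptotics (d : ℕ → ℝ)
    (hd : ∀ n : ℕ, 0 < n → 0 < d n ∧ aFun (d n) = n) :
    ((fun t : ℝ => bFun t - 2 * (Real.pi ^ 2 / 6) / t ^ 3)
        =O[nhdsWithin 0 (Set.Ioi 0)] (fun t : ℝ => 1 / t ^ 2))
      ∧ Asymptotics.IsEquivalent atTop
          (fun n : ℕ => bFun (d n))
          (fun n : ℕ => (2 * Real.sqrt 6 / Real.pi) * (n : ℝ) ^ ((3 : ℝ) / 2)) := by
  constructor
  · refine IsBigO.of_bound 256 ?_
    filter_upwards [self_mem_nhdsWithin] with t ht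
    have ht : 0 < t := ht
    rw [Real.norm_eq_abs, Real.norm_of_nonneg (by positivity : 0 ≤ 1 / t ^ 2)]
    exact aux_b_bound ht
  · have hpi := Real.pi_pos
    have hpos : ∀ᶠ n : ℕ in atTop, 0 < n := eventually_gt_atTop 0
    have hd0 : Tendsto d atTop (𝓝[>] 0) := by
      rw [tendsto_nhdsWithin_iff]
      refine ⟨?_, hpos.mono fun n hn => (hd n hn).1⟩
      have hl : Tendsto (fun n : ℕ => Real.sqrt (Real.pi ^ 2 / 6 / (n : ℝ))) atTop (𝓝 0) := by
        have := (tendsto_const_div_atTop_nhds_zero_nat (Real.pi ^ 2 / 6)).sqrt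
        rwa [Real.sqrt_zero] at this
      refine squeeze_zero' (hpos.mono fun n hn => (hd n hn).1.le) ?_ hl
      filter_upwards [hpos] with n hn
      obtain ⟨h1, h2⟩ := hd n hn
      have h3 := aux_a_le h1
      rw [h2, one_div, inv_mul_eq_div, le_div_iff₀ (by positivity)] at h3
      have hn' : (0 : ℝ) < n := by exact_mod_cast hn
      refine Real.le_sqrt_of_sq_le ?_
      rw [le_div_iff₀ hn']
      linarith
    have hA := aux_a_lim.comp hd0
    have hB := aux_b_lim.comp hd0
    have hA' := hA.rpow_const (p := (3 : ℝ) / 2) (Or.inl (by positivity))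
    have hR := hB.div hA' (by positivity)
    have hval : 2 * (Real.pi ^ 2 / 6) / (Real.pi ^ 2 / 6) ^ ((3 : ℝ) / 2)
        = 2 * Real.sqrt 6 / Real.pi := by
      have h32 : (Real.pi ^ 2 / 6) ^ ((3 : ℝ) / 2)
          = (Real.pi ^ 2 / 6) * (Real.pi / Real.sqrt 6) := by
        rw [show (3 : ℝ) / 2 = 1 + 1 / 2 by norm_num, Real.rpow_add (by positivity),
          Real.rpow_one, ← Real.sqrt_eq_rpow, Real.sqrt_div (by positivity),
          Real.sqrt_sq hpi.le]
      rw [h32]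
      field_simp
    rw [hval] at hR
    have hc : 2 * Real.sqrt 6 / Real.pi ≠ 0 := by positivity
    refine (isEquivalent_iff_tendsto_one ?_).2 ?_
    · filter_upwards [hpos] with n hn
      have hn' : (0 : ℝ) < n := by exact_mod_cast hn
      positivity
    · have hR2 := hR.div_const (2 * Real.sqrt 6 / Real.pi)
      rw [div_self hc] at hR2
      refine hR2.congr' ?_
      filter_upwards [hpos] with n hn
      obtain ⟨h1, h2⟩ := hd n hn
      have hn' : (0 : ℝ) < n := by exact_mod_cast hn
      have e : (d n ^ 2 * (n : ℝ)) ^ ((3 : ℝ) / 2) = d n ^ 3 * (n : ℝ) ^ ((3 : ℝ) / 2) := by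
        rw [Real.mul_rpow (by positivity) hn'.le]
        congr 1
        rw [← Real.rpow_natCast, ← Real.rpow_natCast, ← Real.rpow_mul h1.le]
        norm_num
      simp only [Function.comp, Pi.div_apply]
      rw [h2, e]
      have : (0 : ℝ) < (n : ℝ) ^ ((3 : ℝ) / 2) := by positivity
      field_simp
end

section
/- For every fixed integer m ≥ 1, as d → 0⁺, F_m(e^{−d}) = Σ_{j=1}^∞ j^m e^{−jd}/(1 − e^{−jd}) ∼ d^{−m−1}·m!·ζ(m+1). -/
open Filter Asymptotics Topology

lemma aux_exp_lt {t : ℝ} (ht : 0 < t) : Real.exp (-t) < 1 := by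
  rw [Real.exp_lt_one_iff]; linarith

lemma aux_term (m j : ℕ) (t : ℝ) :
    (j + 1 : ℝ) ^ m * Real.exp (-(j + 1) * t) = (j + 1 : ℝ) ^ m * Real.exp (-t) ^ (j + 1) := by
  rw [← Real.exp_nat_mul]; congr 2; push_cast; ring

lemma aux_hasSum (m : ℕ) {t : ℝ} (ht : 0 < t) :
    HasSum (fun j : ℕ => (((j + m).choose m : ℕ) : ℝ) * Real.exp (-t) ^ j)
      (1 / (1 - Real.exp (-t)) ^ (m + 1)) := by
  apply hasSum_choose_mul_geometric_of_norm_lt_one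
  rw [Real.norm_eq_abs, abs_of_pos (Real.exp_pos _)]
  exact aux_exp_lt ht

lemma aux_upper_term (m j : ℕ) (t : ℝ) :
    (j + 1 : ℝ) ^ m * Real.exp (-(j + 1) * t) ≤
      (m.factorial * Real.exp (-t)) * ((((j + m).choose m : ℕ) : ℝ) * Real.exp (-t) ^ j) := by
  rw [aux_term]
  have h : (j + 1) ^ m ≤ m.factorial * (j + m).choose m := by
    rw [← Nat.ascFactorial_eq_factorial_mul_choose]
    exact Nat.pow_succ_le_ascFactorial (j + 1) m
  have h' : (j + 1 : ℝ) ^ m ≤ m.factorial * ((j + m).choose m : ℕ) := by exact_mod_cast h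
  calc _ ≤ (m.factorial * ((j + m).choose m : ℕ) : ℝ) * Real.exp (-t) ^ (j + 1) := by
        gcongr
    _ = _ := by ring

lemma aux_summable (m : ℕ) {t : ℝ} (ht : 0 < t) :
    Summable (fun j : ℕ => (j + 1 : ℝ) ^ m * Real.exp (-(j + 1) * t)) :=
  Summable.of_nonneg_of_le (fun j => by positivity) (fun j => aux_upper_term m j t)
    ((aux_hasSum m ht).summable.mul_left _)

lemma aux_upper (m : ℕ) {t : ℝ} (ht : 0 < t) :
    ∑' j : ℕ, (j + 1 : ℝ) ^ m * Real.exp (-(j + 1) * t) ≤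
      (m.factorial * Real.exp (-t)) * (1 / (1 - Real.exp (-t)) ^ (m + 1)) := by
  rw [← (aux_hasSum m ht).tsum_eq, ← tsum_mul_left]
  exact (aux_summable m ht).tsum_le_tsum (fun j => aux_upper_term m j t)
    ((aux_hasSum m ht).summable.mul_left _)

lemma aux_lower (m : ℕ) (hm : 1 ≤ m) {t : ℝ} (ht : 0 < t) :
    (m.factorial * Real.exp (-t) ^ m) * (1 / (1 - Real.exp (-t)) ^ (m + 1)) ≤
    ∑' j : ℕ, (j + 1 : ℝ) ^ m * Real.exp (-(j + 1) * t) := by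
  obtain ⟨n, rfl⟩ : ∃ n, m = n + 1 := ⟨m - 1, by omega⟩
  rw [← (aux_hasSum (n + 1) ht).tsum_eq, ← tsum_mul_left,
    ← (aux_summable (n + 1) ht).sum_add_tsum_nat_add n]
  have h0 : 0 ≤ ∑ i ∈ Finset.range n,
      ((i : ℝ) + 1) ^ (n + 1) * Real.exp (-((i : ℝ) + 1) * t) :=
    Finset.sum_nonneg fun i _ => by positivity
  refine le_trans ?_ (le_add_of_nonneg_left h0)
  refine ((aux_hasSum (n + 1) ht).summable.mul_left _).tsum_le_tsum (fun j => ?_)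
    ((summable_nat_add_iff n).2 (aux_summable (n + 1) ht))
  rw [aux_term]
  have h : (n + 1).factorial * (j + (n + 1)).choose (n + 1) ≤ (j + n + 1) ^ (n + 1) := by
    rw [← Nat.descFactorial_eq_factorial_mul_choose]
    exact Nat.descFactorial_le_pow _ _
  have h' : ((n + 1).factorial * ((j + (n + 1)).choose (n + 1) : ℕ) : ℝ)
      ≤ (((j + n : ℕ) : ℝ) + 1) ^ (n + 1) := by exact_mod_cast h
  calc _ = ((n + 1).factorial * ((j + (n + 1)).choose (n + 1) : ℕ) : ℝ) *
        Real.exp (-t) ^ (j + n + 1) := by ring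
    _ ≤ _ := by gcongr

lemma aux_ratio_le {t : ℝ} (ht : 0 < t) : t / (1 - Real.exp (-t)) ≤ 1 + t := by
  have h1 := aux_exp_lt ht
  rw [div_le_iff₀ (by linarith)]
  have h2 : (1 + t) * Real.exp (-t) ≤ 1 := by
    rw [Real.exp_neg, ← div_eq_mul_inv, div_le_one (Real.exp_pos _)]
    linarith [Real.add_one_le_exp t]
  nlinarith

lemma aux_bound (m : ℕ) {t : ℝ} (ht : 0 < t) :
    t ^ (m + 1) * ∑' j : ℕ, (j + 1 : ℝ) ^ m * Real.exp (-(j + 1) * t) ≤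
      m.factorial * ((m + 1).factorial * Real.exp 1) := by
  have h1 := aux_exp_lt ht
  have h3 : 0 ≤ t / (1 - Real.exp (-t)) := div_nonneg ht.le (by linarith)
  have h4 : (1 + t) ^ (m + 1) ≤ (m + 1).factorial * Real.exp (1 + t) := by
    have := Real.pow_div_factorial_le_exp (1 + t) (by linarith) (m + 1)
    rw [div_le_iff₀ (by positivity)] at this
    linarith
  calc _ ≤ t ^ (m + 1) * ((m.factorial * Real.exp (-t)) *
          (1 / (1 - Real.exp (-t)) ^ (m + 1))) := by
        gcongr; exact aux_upper m ht
    _ = m.factorial * ((t / (1 - Real.exp (-t))) ^ (m + 1) * Real.exp (-t)) := by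
        rw [div_pow]; ring
    _ ≤ m.factorial * ((1 + t) ^ (m + 1) * Real.exp (-t)) := by
        gcongr; exact aux_ratio_le ht
    _ ≤ m.factorial * (((m + 1).factorial * Real.exp (1 + t)) * Real.exp (-t)) := by
        gcongr
    _ = _ := by
        rw [mul_assoc ((m + 1).factorial : ℝ), ← Real.exp_add]; congr 3; ring

lemma aux_ratio_tendsto :
    Tendsto (fun t : ℝ => t / (1 - Real.exp (-t))) (𝓝[>] 0) (𝓝 1) := by
  refine tendsto_of_tendsto_of_tendsto_of_le_of_le' (g := fun _ => (1 : ℝ))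
    (h := fun t => 1 + t) tendsto_const_nhds ?_ ?_ ?_
  · have : Tendsto (fun t : ℝ => 1 + t) (𝓝 0) (𝓝 (1 + 0)) :=
      (continuous_const.add continuous_id).tendsto 0
    rw [add_zero] at this
    exact this.mono_left nhdsWithin_le_nhds
  · filter_upwards [self_mem_nhdsWithin] with t ht
    have h1 := aux_exp_lt (Set.mem_Ioi.1 ht)
    rw [one_le_div (by linarith)]
    linarith [Real.add_one_le_exp (-t)]
  · filter_upwards [self_mem_nhdsWithin] with t ht
    exact aux_ratio_le ht

lemma aux_tendsto (m : ℕ) (hm : 1 ≤ m) :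
    Tendsto (fun t : ℝ => t ^ (m + 1) *
      ∑' j : ℕ, (j + 1 : ℝ) ^ m * Real.exp (-(j + 1) * t)) (𝓝[>] 0) (𝓝 m.factorial) := by
  have hE : Tendsto (fun t : ℝ => Real.exp (-t)) (𝓝[>] 0) (𝓝 1) := by
    have : Tendsto (fun t : ℝ => Real.exp (-t)) (𝓝 0) (𝓝 (Real.exp (-0))) :=
      (Real.continuous_exp.comp continuous_neg).tendsto 0
    rw [neg_zero, Real.exp_zero] at this
    exact this.mono_left nhdsWithin_le_nhds
  have hl := ((hE.pow m).mul (aux_ratio_tendsto.pow (m + 1))).const_mul (m.factorial : ℝ)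
  have hu := (hE.mul (aux_ratio_tendsto.pow (m + 1))).const_mul (m.factorial : ℝ)
  simp only [one_pow, mul_one] at hl hu
  refine tendsto_of_tendsto_of_tendsto_of_le_of_le' hl hu ?_ ?_
  · filter_upwards [self_mem_nhdsWithin] with t ht
    have ht : 0 < t := ht
    calc _ = t ^ (m + 1) * ((m.factorial * Real.exp (-t) ^ m) *
          (1 / (1 - Real.exp (-t)) ^ (m + 1))) := by rw [div_pow]; ring
      _ ≤ _ := by gcongr; exact aux_lower m hm ht
  · filter_upwards [self_mem_nhdsWithin] with t ht
    have ht : 0 < t := ht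
    calc _ ≤ t ^ (m + 1) * ((m.factorial * Real.exp (-t)) *
          (1 / (1 - Real.exp (-t)) ^ (m + 1))) := by gcongr; exact aux_upper m ht
      _ = _ := by rw [div_pow]; ring

lemma aux_zeta_summable (m : ℕ) (hm : 1 ≤ m) :
    Summable (fun j : ℕ => (1 : ℝ) / (j + 1) ^ (m + 1)) := by
  have := (summable_nat_add_iff 1).2 (Real.summable_one_div_nat_pow.2 (show 1 < m + 1 by omega))
  simpa using this

lemma aux_swap_s10 (m : ℕ) (hm : 1 ≤ m) {d : ℝ} (hd : 0 < d) :
    ∑' j : ℕ, (j + 1 : ℝ) ^ m * Real.exp (-(j + 1) * d) / (1 - Real.exp (-(j + 1) * d)) =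
    ∑' k : ℕ, ∑' j : ℕ, (j + 1 : ℝ) ^ m * Real.exp (-(j + 1) * ((k + 1) * d)) := by
  have hS : Summable (Function.uncurry fun (k j : ℕ) =>
      (j + 1 : ℝ) ^ m * Real.exp (-(j + 1) * ((k + 1) * d))) := by
    rw [summable_prod_of_nonneg (fun p => by simp only [Function.uncurry, Pi.zero_apply]; positivity)]
    simp only [Function.uncurry_apply_pair]
    refine ⟨fun k => ?_, ?_⟩
    · have hk : 0 < ((k : ℝ) + 1) * d := by positivity
      exact aux_summable m hk
    refine Summable.of_nonneg_of_le
      (fun k => tsum_nonneg fun j => by positivity) (fun k => ?_)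
      ((aux_zeta_summable m hm).mul_left
        (m.factorial * ((m + 1).factorial * Real.exp 1) / d ^ (m + 1)))
    have hk : 0 < ((k : ℝ) + 1) * d := by positivity
    have := aux_bound m hk
    rw [mul_comm, ← le_div_iff₀ (by positivity)] at this
    refine this.trans (le_of_eq ?_)
    rw [mul_pow]; field_simp
  rw [← hS.tsum_comm]
  refine tsum_congr fun j => ?_
  have hlt : Real.exp (-(j + 1) * d) < 1 := by
    rw [neg_mul]; exact aux_exp_lt (by positivity)
  have hg := tsum_geometric_of_lt_one (Real.exp_pos (-(j + 1) * d)).le hlt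
  rw [div_eq_mul_inv, ← hg, ← tsum_mul_left]
  refine tsum_congr fun k => ?_
  rw [mul_assoc, ← pow_succ', ← Real.exp_nat_mul]
  congr 2; push_cast; ring

/-- **Asymptotics of `F_m(e^{−d})`** (formula (31) of the paper): for every fixed `m ≥ 1`,
as `d → 0⁺`, `F_m(e^{−d}) = Σ_{j≥1} j^m e^{−jd}/(1 − e^{−jd}) ∼ d^{−m−1}·m!·ζ(m+1)`. -/
theorem Fm_at_saddle_asymptotics (m : ℕ) (hm : 1 ≤ m) :
    Asymptotics.IsEquivalent (nhdsWithin 0 (Set.Ioi 0))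
      (fun d : ℝ =>
        ∑' j : ℕ, (j + 1 : ℝ) ^ m * Real.exp (-(j + 1) * d) / (1 - Real.exp (-(j + 1) * d)))
      (fun d : ℝ =>
        ((m.factorial : ℝ) * ∑' j : ℕ, (1 : ℝ) / (j + 1) ^ (m + 1)) / d ^ (m + 1)) := by
  have hz := aux_zeta_summable m hm
  have hpos : 0 < ∑' j : ℕ, (1 : ℝ) / (j + 1) ^ (m + 1) :=
    hz.tsum_pos (fun j => by positivity) 0 (by positivity)
  have key : Tendsto (fun d : ℝ => ∑' k : ℕ, (1 : ℝ) / (k + 1) ^ (m + 1) *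
      (((k + 1) * d) ^ (m + 1) *
        ∑' j : ℕ, (j + 1 : ℝ) ^ m * Real.exp (-(j + 1) * ((k + 1) * d)))) (𝓝[>] 0)
      (𝓝 (∑' k : ℕ, (1 : ℝ) / (k + 1) ^ (m + 1) * m.factorial)) := by
    refine tendsto_tsum_of_dominated_convergence
      (hz.mul_right (m.factorial * ((m + 1).factorial * Real.exp 1))) (fun k => ?_) ?_
    · refine Tendsto.const_mul _ ((aux_tendsto m hm).comp ?_)
      refine tendsto_nhdsWithin_iff.2 ⟨?_, ?_⟩
      · have : Tendsto (fun d : ℝ => ((k : ℝ) + 1) * d) (𝓝 0) (𝓝 (((k : ℝ) + 1) * 0)) :=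
          (continuous_const.mul continuous_id).tendsto 0
        rw [mul_zero] at this
        exact this.mono_left nhdsWithin_le_nhds
      · filter_upwards [self_mem_nhdsWithin] with d hd
        have hd : 0 < d := hd
        exact Set.mem_Ioi.2 (by positivity)
    · filter_upwards [self_mem_nhdsWithin] with d hd k
      have hd : 0 < d := hd
      have h0 : 0 ≤ ∑' j : ℕ, (j + 1 : ℝ) ^ m * Real.exp (-(j + 1) * ((k + 1) * d)) :=
        tsum_nonneg fun j => by positivity
      rw [Real.norm_of_nonneg (by positivity)]
      have hk : 0 < ((k : ℝ) + 1) * d := by positivity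
      exact mul_le_mul_of_nonneg_left (aux_bound m hk) (by positivity)
  rw [tsum_mul_right, mul_comm] at key
  have h1 := (isEquivalent_const_iff_tendsto (by positivity)).2 key
  have h2 := h1.div (IsEquivalent.refl (u := fun d : ℝ => d ^ (m + 1)))
  refine h2.congr_left ?_
  filter_upwards [self_mem_nhdsWithin] with d hd
  have hd : 0 < d := hd
  simp only [Pi.div_apply]
  rw [aux_swap_s10 m hm hd, ← tsum_div_const]
  refine tsum_congr fun k => ?_
  generalize ∑' j : ℕ, (j + 1 : ℝ) ^ m * Real.exp (-(j + 1) * ((k + 1) * d)) = S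
  rw [mul_pow]
  field_simp
end

section
/- Let d_n be the unique positive solution of Σ_{j=1}^∞ j·e^{−jd}/(1 − e^{−jd}) = n, and let b_n = Σ_{j=1}^∞ j²·e^{−j d_n}/(1 − e^{−j d_n})². Then, as n → ∞, p(n) ∼ e^{n d_n}·g(e^{−d_n}) / √(2π·b_n). -/
open Filter Asymptotics Topology

/-- `gR x = ∏_{j≥1} (1 − x^j)⁻¹`, the Euler partition generating function, for `|x| < 1`. -/
noncomputable def gR (x : ℝ) : ℝ := ∏' j : ℕ, (1 - x ^ (j + 1))⁻¹

/-- `m (j,k) = (j+1)(k+1)`. -/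
noncomputable def mm (x : ℕ × ℕ) : ℝ := ((x.1 : ℝ) + 1) * ((x.2 : ℝ) + 1)

/-- weights `e^{-(j+1)(k+1)d}/(k+1)`. -/
noncomputable def ww (d : ℝ) (x : ℕ × ℕ) : ℝ := Real.exp (-(mm x * d)) / ((x.2 : ℝ) + 1)

lemma mm_pos (x : ℕ × ℕ) : 0 < mm x := by unfold mm; positivity

lemma ww_pos (d : ℝ) (x : ℕ × ℕ) : 0 < ww d x := by unfold ww; positivity

lemma geom_hasSum {x : ℝ} (hx : 0 < x) :
    HasSum (fun j : ℕ => Real.exp (-(((j : ℝ) + 1) * x)))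
      (Real.exp (-x) / (1 - Real.exp (-x))) := by
  have h1 : Real.exp (-x) < 1 := by rw [Real.exp_lt_one_iff]; linarith
  have h := (hasSum_geometric_of_lt_one (Real.exp_pos (-x)).le h1).mul_left (Real.exp (-x))
  rw [← div_eq_mul_inv] at h
  convert! h using 2 with j
  rw [← Real.exp_nat_mul, ← Real.exp_add]
  congr 1; ring

lemma geomE_le {x : ℝ} (hx : 0 < x) : Real.exp (-x) / (1 - Real.exp (-x)) ≤ 1 / x := by
  have h1 : Real.exp (-x) < 1 := by rw [Real.exp_lt_one_iff]; linarith
  rw [div_le_div_iff₀ (by linarith) hx]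
  have h2 := Real.add_one_le_exp x
  have h3 : Real.exp (-x) * Real.exp x = 1 := by rw [← Real.exp_add]; simp
  nlinarith [Real.exp_pos (-x)]

lemma summable_sq : Summable (fun k : ℕ => 1 / ((k : ℝ) + 1) ^ 2) := by
  have := (summable_nat_add_iff 1).2 (Real.summable_one_div_nat_pow.2 (by norm_num : 1 < 2))
  simpa using this

/-- The constant `ζ(2)`. -/
noncomputable def cz : ℝ := ∑' k : ℕ, 1 / ((k : ℝ) + 1) ^ 2

lemma ww_summable_and {d : ℝ} (hd : 0 < d) :
    Summable (ww d) ∧ ∑' x, ww d x ≤ cz / d := by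
  have key : ∀ k : ℕ, HasSum (fun j : ℕ => ww d (j, k))
      (Real.exp (-(((k : ℝ) + 1) * d)) / (1 - Real.exp (-(((k : ℝ) + 1) * d))) / ((k : ℝ) + 1)) := by
    intro k
    have h := (geom_hasSum (x := ((k : ℝ) + 1) * d) (by positivity)).div_const ((k : ℝ) + 1)
    convert! h using 2 with j
    unfold ww mm
    simp only
    congr 3; ring
  have bd : ∀ k : ℕ, Real.exp (-(((k : ℝ) + 1) * d)) / (1 - Real.exp (-(((k : ℝ) + 1) * d)))
      / ((k : ℝ) + 1) ≤ 1 / ((k : ℝ) + 1) ^ 2 / d := by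
    intro k
    have h := geomE_le (x := ((k : ℝ) + 1) * d) (by positivity)
    have : 1 / ((k : ℝ) + 1) ^ 2 / d = 1 / (((k : ℝ) + 1) * d) / ((k : ℝ) + 1) := by
      field_simp
    rw [this]
    gcongr
  have s2 : Summable (fun k : ℕ => ∑' j, ww d (j, k)) := by
    refine Summable.of_nonneg_of_le (fun k => tsum_nonneg fun j => (ww_pos d _).le) (fun k => ?_)
      (summable_sq.div_const d)
    rw [(key k).tsum_eq]; exact bd k
  have s3 : Summable (fun x : ℕ × ℕ => ww d x.swap) := by
    rw [summable_prod_of_nonneg (fun x => (ww_pos d _).le)]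
    exact ⟨fun k => (key k).summable, s2⟩
  have s4 : Summable (ww d) := (Equiv.prodComm ℕ ℕ).summable_iff.1 s3
  refine ⟨s4, ?_⟩
  rw [← (Equiv.prodComm ℕ ℕ).tsum_eq (ww d)]
  have e1 := s3.tsum_prod
  have e2 : ∑' x, ww d (Equiv.prodComm ℕ ℕ x) = ∑' x : ℕ × ℕ, ww d x.swap := rfl
  rw [e2, e1, cz, ← tsum_div_const]
  refine Summable.tsum_le_tsum (fun k => ?_) s2 (summable_sq.div_const d)
  simp only [Prod.swap_prod_mk]
  rw [(key k).tsum_eq]; exact bd k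

lemma moment_term {d : ℝ} (hd : 0 < d) (p : ℕ) (x : ℕ × ℕ) :
    mm x ^ p * ww d x ≤ (p.factorial * 2 ^ p / d ^ p) * ww (d / 2) x := by
  have hm := mm_pos x
  have h := Real.pow_div_factorial_le_exp (mm x * d / 2) (by positivity) p
  have e : Real.exp (-(mm x * d)) = Real.exp (-(mm x * (d / 2))) * Real.exp (-(mm x * (d / 2))) := by
    rw [← Real.exp_add]; congr 1; ring
  have e3 : Real.exp (mm x * d / 2) * Real.exp (-(mm x * (d / 2))) = 1 := by
    rw [← Real.exp_add]; simp; ring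
  have hf : (0 : ℝ) < p.factorial := by positivity
  have h2 : mm x ^ p * Real.exp (-(mm x * (d / 2))) ≤ p.factorial * 2 ^ p / d ^ p := by
    rw [div_le_iff₀ hf] at h
    have h4 := mul_le_mul_of_nonneg_right h (Real.exp_pos (-(mm x * (d / 2)))).le
    rw [mul_right_comm, e3, one_mul] at h4
    rw [le_div_iff₀ (by positivity)]
    have : mm x ^ p * Real.exp (-(mm x * (d / 2))) * d ^ p =
      ((mm x * d / 2) ^ p * Real.exp (-(mm x * (d / 2)))) * 2 ^ p := by
      rw [div_pow, mul_pow]; field_simp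
    rw [this]
    gcongr
  unfold ww
  have h5 : (0 : ℝ) ≤ (x.2 : ℝ) + 1 := by positivity
  have h6 := div_le_div_of_nonneg_right
    (mul_le_mul_of_nonneg_right h2 (Real.exp_pos (-(mm x * (d / 2)))).le) h5
  calc _ = mm x ^ p * Real.exp (-(mm x * (d / 2))) * Real.exp (-(mm x * (d / 2))) / (x.2 + 1) := by
        rw [e]; ring
    _ ≤ _ := h6
    _ = _ := by ring

lemma moment_summable {d : ℝ} (hd : 0 < d) (p : ℕ) : Summable (fun x => mm x ^ p * ww d x) :=
  Summable.of_nonneg_of_le (fun x => mul_nonneg (pow_nonneg (mm_pos x).le p) (ww_pos d x).le)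
    (moment_term hd p) ((ww_summable_and (half_pos hd)).1.mul_left _)

lemma cz_pos : 0 < cz := by
  refine summable_sq.tsum_pos (fun k => by positivity) 0 (by norm_num)

lemma moment_le {d : ℝ} (hd : 0 < d) (p : ℕ) :
    ∑' x, mm x ^ p * ww d x ≤ (p.factorial * 2 ^ (p + 1) * cz) / d ^ (p + 1) := by
  have h := (moment_summable hd p).tsum_le_tsum (moment_term hd p)
    ((ww_summable_and (half_pos hd)).1.mul_left _)
  rw [tsum_mul_left] at h
  have h2 := (ww_summable_and (half_pos hd)).2
  refine h.trans ?_
  have : (p.factorial * 2 ^ (p + 1) * cz) / d ^ (p + 1) =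
    (p.factorial * 2 ^ p / d ^ p) * (cz / (d / 2)) := by
    field_simp; ring
  rw [this]
  gcongr

lemma aFun_eq_s13 {d : ℝ} (hd : 0 < d) : aFun d = ∑' x, mm x * ww d x := by
  have s := moment_summable hd 1
  simp only [pow_one] at s
  rw [s.tsum_prod]
  unfold aFun
  congr 1; ext j
  have h := (geom_hasSum (x := ((j : ℝ) + 1) * d) (by positivity)).mul_left ((j : ℝ) + 1)
  rw [show -((j : ℝ) + 1) * d = -(((j : ℝ) + 1) * d) by ring, mul_div_assoc, ← h.tsum_eq]
  congr 1; ext k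
  unfold mm ww mm
  simp only
  field_simp

lemma bFun_eq {d : ℝ} (hd : 0 < d) : bFun d = ∑' x, mm x ^ 2 * ww d x := by
  have s := moment_summable hd 2
  rw [s.tsum_prod]
  unfold bFun
  congr 1; ext j
  have h1 : ‖Real.exp (-(((j : ℝ) + 1) * d))‖ < 1 := by
    rw [Real.norm_eq_abs, abs_of_pos (Real.exp_pos _), Real.exp_lt_one_iff]
    have : 0 < ((j : ℝ) + 1) * d := by positivity
    linarith
  have h := ((hasSum_coe_mul_geometric_of_norm_lt_one h1))
  rw [← hasSum_nat_add_iff' 1] at h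
  simp only [Finset.range_one, Finset.sum_singleton, Nat.cast_zero, zero_mul, sub_zero] at h
  have h2 := h.mul_left (((j : ℝ) + 1) ^ 2)
  rw [show -((j : ℝ) + 1) * d = -(((j : ℝ) + 1) * d) by ring, mul_div_assoc, ← h2.tsum_eq]
  congr 1; ext k
  unfold mm ww mm
  simp only
  rw [← Real.exp_nat_mul]
  push_cast
  rw [show ((k : ℝ) + 1) * -((↑j + 1) * d) = -((↑j + 1) * (↑k + 1) * d) by ring]
  field_simp

section genfun
open PowerSeries
open scoped PowerSeries.WithPiTopology

/-- geometric power series in `X^(i+1)` -/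
noncomputable def qq (i : ℕ) : ℝ⟦X⟧ := PowerSeries.mk fun n => if (i + 1) ∣ n then 1 else 0

lemma qq_hasSum (i : ℕ) : HasSum (fun j : ℕ => (X : ℝ⟦X⟧) ^ ((i + 1) * j)) (qq i) := by
  rw [PowerSeries.WithPiTopology.hasSum_iff_hasSum_coeff]
  intro n
  simp only [qq, coeff_mk, coeff_X_pow]
  by_cases h : (i + 1) ∣ n
  · obtain ⟨c, rfl⟩ := h
    simp only [dvd_mul_right, if_true]
    have := hasSum_ite_eq c (1 : ℝ)
    convert! this using 2 with j
    simp [eq_comm]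
  · simp only [h, if_false]
    convert! hasSum_zero using 2 with j
    rw [if_neg]
    rintro rfl
    exact h (dvd_mul_right _ _)

lemma qq_hasProd : HasProd qq (PowerSeries.mk fun n => (Fintype.card (Nat.Partition n) : ℝ)) := by
  have h := Nat.Partition.hasProd_powerSeriesMk_card_restricted ℝ (fun _ => True)
  convert! h using 1
  · ext1 i
    simp [(qq_hasSum i).tsum_eq]
  · ext n
    simp [Nat.Partition.restricted]

/-- partial products -/
noncomputable def pp (M : ℕ) : ℝ⟦X⟧ := ∏ i ∈ Finset.range M, qq i

lemma pp_tendsto (n : ℕ) :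
    Tendsto (fun M => coeff n (pp M)) atTop (𝓝 (Fintype.card (Nat.Partition n) : ℝ)) := by
  have h := qq_hasProd.tendsto_prod_nat
  have h2 := ((PowerSeries.WithPiTopology.continuous_coeff ℝ n).tendsto _).comp h
  simpa [Function.comp_def, pp] using h2

lemma qq_nonneg (i n : ℕ) : 0 ≤ coeff n (qq i) := by
  simp only [qq, coeff_mk]; split_ifs <;> norm_num

lemma pp_nonneg (M : ℕ) : ∀ n, 0 ≤ coeff n (pp M) := by
  induction M with
  | zero => intro n; simp only [pp, Finset.range_zero, Finset.prod_empty, coeff_one]; split_ifs <;> norm_num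
  | succ M ih =>
    intro n
    rw [pp, Finset.prod_range_succ, coeff_mul]
    exact Finset.sum_nonneg fun x _ => mul_nonneg (ih _) (qq_nonneg _ _)

lemma pp_mono (n : ℕ) : Monotone (fun M => coeff n (pp M)) := by
  refine monotone_nat_of_le_succ fun M => ?_
  rw [show pp (M + 1) = pp M * qq M from Finset.prod_range_succ _ _, coeff_mul]
  have : coeff n (pp M) = coeff n (pp M) * coeff 0 (qq M) := by simp [qq]
  rw [this]
  exact Finset.single_le_sum (f := fun p : ℕ × ℕ => coeff p.1 (pp M) * coeff p.2 (qq M))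
    (fun x _ => mul_nonneg (pp_nonneg _ _) (qq_nonneg _ _)) (a := (n, 0)) (by simp)

lemma pp_le (M n : ℕ) : coeff n (pp M) ≤ (Fintype.card (Nat.Partition n) : ℝ) :=
  (pp_mono n).ge_of_tendsto (pp_tendsto n) M

/-- evaluation of a power series at `z`, absolutely convergent -/
def Ev (P : ℝ⟦X⟧) (z w : ℂ) : Prop :=
  Summable (fun n => ‖((coeff n P : ℝ) : ℂ) * z ^ n‖) ∧ ∑' n, ((coeff n P : ℝ) : ℂ) * z ^ n = w

lemma Ev.mul {P Q : ℝ⟦X⟧} {z a b : ℂ} (h1 : Ev P z a) (h2 : Ev Q z b) : Ev (P * Q) z (a * b) := by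
  have e : ∀ n, ((coeff n (P * Q) : ℝ) : ℂ) * z ^ n = ∑ kl ∈ Finset.HasAntidiagonal.antidiagonal n,
      (((coeff kl.1 P : ℝ) : ℂ) * z ^ kl.1) * (((coeff kl.2 Q : ℝ) : ℂ) * z ^ kl.2) := by
    intro n
    rw [coeff_mul, Complex.ofReal_sum, Finset.sum_mul]
    refine Finset.sum_congr rfl fun x hx => ?_
    rw [← Finset.HasAntidiagonal.mem_antidiagonal.1 hx, pow_add]
    push_cast; ring
  have hs := summable_norm_sum_mul_antidiagonal_of_summable_norm h1.1 h2.1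
  have ht := tsum_mul_tsum_eq_tsum_sum_antidiagonal_of_summable_norm h1.1 h2.1
  constructor
  · exact hs.congr fun n => by rw [e n]
  · rw [tsum_congr e, ← ht, h1.2, h2.2]

lemma Ev_one (z : ℂ) : Ev 1 z 1 := by
  have : ∀ n, n ≠ 0 → ((coeff n (1 : ℝ⟦X⟧) : ℝ) : ℂ) * z ^ n = 0 := by
    intro n hn; simp [coeff_one, hn]
  constructor
  · refine summable_of_ne_finset_zero (s := {0}) fun n hn => ?_
    rw [this n (by simpa using hn), norm_zero]
  · rw [tsum_eq_single 0 this]; simp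

lemma Ev_qq (i : ℕ) {z : ℂ} (hz : ‖z‖ < 1) : Ev (qq i) z (1 - z ^ (i + 1))⁻¹ := by
  have hinj : Function.Injective (fun j : ℕ => (i + 1) * j) := fun a b h =>
    Nat.eq_of_mul_eq_mul_left (Nat.succ_pos i) h
  have hz' : ‖z ^ (i + 1)‖ < 1 := by
    rw [norm_pow]; exact pow_lt_one₀ (norm_nonneg _) hz (by simp)
  have hs := hasSum_geometric_of_norm_lt_one hz'
  have h0 : ∀ n ∉ Set.range (fun j : ℕ => (i + 1) * j),
      ((coeff n (qq i) : ℝ) : ℂ) * z ^ n = 0 := by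
    intro n hn
    simp only [qq, coeff_mk]
    rw [if_neg]; · simp
    rintro ⟨c, rfl⟩; exact hn ⟨c, rfl⟩
  have h := (hinj.hasSum_iff (a := (1 - z ^ (i + 1))⁻¹) h0).1 (by
    convert! hs using 2 with j
    simp [qq, pow_mul])
  exact ⟨h.summable.norm, h.tsum_eq⟩

lemma Ev_pp (M : ℕ) {z : ℂ} (hz : ‖z‖ < 1) :
    Ev (pp M) z (∏ i ∈ Finset.range M, (1 - z ^ (i + 1))⁻¹) := by
  induction M with
  | zero => simpa [pp] using Ev_one z
  | succ M ih =>
    rw [pp, Finset.prod_range_succ, Finset.prod_range_succ]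
    exact ih.mul (Ev_qq M hz)

/-- terms of the double log series -/
noncomputable def lz (z : ℂ) (x : ℕ × ℕ) : ℂ := z ^ ((x.1 + 1) * (x.2 + 1)) / ((x.2 : ℂ) + 1)

lemma norm_lz {z : ℂ} {d : ℝ} (hz : ‖z‖ = Real.exp (-d)) (x : ℕ × ℕ) : ‖lz z x‖ = ww d x := by
  unfold lz ww mm
  rw [norm_div, norm_pow, hz, ← Real.exp_nat_mul]
  have : ‖(x.2 : ℂ) + 1‖ = (x.2 : ℝ) + 1 := by
    have := Complex.norm_natCast (x.2 + 1)
    push_cast at this; exact this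
  rw [this]
  push_cast
  congr 2; ring

lemma lz_summable {z : ℂ} {d : ℝ} (hd : 0 < d) (hz : ‖z‖ = Real.exp (-d)) : Summable (lz z) := by
  refine Summable.of_norm ?_
  simp_rw [norm_lz hz]
  exact (ww_summable_and hd).1

lemma lz_hasProd {z : ℂ} {d : ℝ} (hd : 0 < d) (hz : ‖z‖ = Real.exp (-d)) :
    HasProd (fun i : ℕ => (1 - z ^ (i + 1))⁻¹) (Complex.exp (∑' x, lz z x)) := by
  have hz1 : ‖z‖ < 1 := by rw [hz, Real.exp_lt_one_iff]; linarith
  have hpow : ∀ i : ℕ, ‖z ^ (i + 1)‖ < 1 := fun i => by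
    rw [norm_pow]; exact pow_lt_one₀ (norm_nonneg _) hz1 (by simp)
  have hrow : ∀ i : ℕ, HasSum (fun k => lz z (i, k)) (-Complex.log (1 - z ^ (i + 1))) := by
    intro i
    have h := Complex.hasSum_taylorSeries_neg_log (hpow i)
    rw [← hasSum_nat_add_iff' 1] at h
    simp only [Finset.range_one, Finset.sum_singleton, pow_zero, Nat.cast_zero, div_zero,
      sub_zero] at h
    convert! h using 2 with k
    simp [lz, pow_mul]
  have hs := (lz_summable hd hz).hasSum.prod_fiberwise hrow
  have h := hs.cexp
  convert! h using 1
  ext1 i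
  have hne : (1 - z ^ (i + 1)) ≠ 0 := by
    intro h0
    have : z ^ (i + 1) = 1 := (sub_eq_zero.1 h0).symm
    have h2 := hpow i
    rw [this] at h2; simp at h2
  simp [Complex.exp_neg, Complex.exp_log hne]

lemma partition_summable {d : ℝ} (hd : 0 < d) :
    Summable (fun n => (Fintype.card (Nat.Partition n) : ℝ) * Real.exp (-d) ^ n) := by
  set z : ℂ := ((Real.exp (-d) : ℝ) : ℂ) with hzdef
  have hz : ‖z‖ = Real.exp (-d) := by simp [hzdef, Complex.norm_exp]
  have hz1 : ‖z‖ < 1 := by rw [hz, Real.exp_lt_one_iff]; linarith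
  have ht := (lz_hasProd hd hz).tendsto_prod_nat
  obtain ⟨C, hC⟩ := ht.norm.bddAbove_range
  have hC' : ∀ M, ‖∏ i ∈ Finset.range M, (1 - z ^ (i + 1))⁻¹‖ ≤ C := fun M =>
    hC ⟨M, rfl⟩
  have hpos : ∀ n, 0 ≤ (Fintype.card (Nat.Partition n) : ℝ) * Real.exp (-d) ^ n := fun n => by
    positivity
  refine summable_of_sum_range_le hpos (c := C) fun K => ?_
  have hlim : Tendsto (fun M => ∑ n ∈ Finset.range K, coeff n (pp M) * Real.exp (-d) ^ n) atTop
      (𝓝 (∑ n ∈ Finset.range K, (Fintype.card (Nat.Partition n) : ℝ) * Real.exp (-d) ^ n)) :=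
    tendsto_finsetSum _ fun n _ => (pp_tendsto n).mul_const _
  refine le_of_tendsto hlim (Eventually.of_forall fun M => ?_)
  have hE := Ev_pp M hz1
  have e : ∀ n, ((coeff n (pp M) : ℝ) : ℂ) * z ^ n
      = ((coeff n (pp M) * Real.exp (-d) ^ n : ℝ) : ℂ) := by
    intro n; push_cast [hzdef]; rfl
  have hnn : ∀ n, 0 ≤ coeff n (pp M) * Real.exp (-d) ^ n := fun n =>
    mul_nonneg (pp_nonneg M n) (by positivity)
  have hsum : Summable (fun n => coeff n (pp M) * Real.exp (-d) ^ n) := by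
    have := hE.1
    simp_rw [e, Complex.norm_real, Real.norm_eq_abs, abs_of_nonneg (hnn _)] at this
    exact this
  have h2 := hE.2
  simp_rw [e] at h2
  rw [← Complex.ofReal_tsum] at h2
  refine (hsum.sum_le_tsum _ fun n _ => hnn n).trans ?_
  refine le_trans (le_abs_self _) ?_
  rw [← Real.norm_eq_abs, ← Complex.norm_real, h2]
  exact hC' M

lemma partition_hasSum {z : ℂ} {d : ℝ} (hd : 0 < d) (hz : ‖z‖ = Real.exp (-d)) :
    HasSum (fun n => (Fintype.card (Nat.Partition n) : ℂ) * z ^ n)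
      (Complex.exp (∑' x, lz z x)) := by
  have hz1 : ‖z‖ < 1 := by rw [hz, Real.exp_lt_one_iff]; linarith
  have ht := (lz_hasProd hd hz).tendsto_prod_nat
  have hd := tendsto_tsum_of_dominated_convergence (𝓕 := atTop)
    (f := fun M n => ((coeff n (pp M) : ℝ) : ℂ) * z ^ n)
    (g := fun n => (Fintype.card (Nat.Partition n) : ℂ) * z ^ n)
    (partition_summable hd)
    (fun n => by
      have := (Complex.continuous_ofReal.tendsto _).comp (pp_tendsto n)
      have := this.mul_const (z ^ n)
      simpa [Function.comp_def] using this)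
    (Eventually.of_forall fun M n => by
      rw [norm_mul, norm_pow, hz, Complex.norm_real, Real.norm_eq_abs, abs_of_nonneg (pp_nonneg M n)]
      gcongr
      exact pp_le M n)
  simp_rw [fun M => (Ev_pp M hz1).2] at hd
  rw [tendsto_nhds_unique ht hd]
  refine Summable.hasSum (Summable.of_norm ?_)
  have := partition_summable ‹0 < d›
  convert! this using 2 with n
  simp [hz]

lemma gR_eq {d : ℝ} (hd : 0 < d) : gR (Real.exp (-d)) = Real.exp (∑' x, ww d x) := by
  have hq : ∀ i : ℕ, Real.exp (-d) ^ (i + 1) < 1 := fun i =>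
    pow_lt_one₀ (Real.exp_pos _).le (by rw [Real.exp_lt_one_iff]; linarith) (by simp)
  have hrow : ∀ i : ℕ, HasSum (fun k => ww d (i, k)) (-Real.log (1 - Real.exp (-d) ^ (i + 1))) := by
    intro i
    have h := Real.hasSum_pow_div_log_of_abs_lt_one (x := Real.exp (-d) ^ (i + 1)) (by
      rw [abs_of_pos (by positivity)]; exact hq i)
    convert! h using 2 with k
    unfold ww mm
    rw [← pow_mul, ← Real.exp_nat_mul]
    push_cast
    congr 2; ring
  have hs := (ww_summable_and hd).1.hasSum.prod_fiberwise hrow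
  have h := hs.rexp
  unfold gR
  rw [← h.tprod_eq]
  congr 1
  ext1 i
  rw [Function.comp_apply, Real.exp_neg (Real.log _), Real.exp_log (sub_pos.2 (hq i))]

end genfun

section cauchy
open Complex

lemma integral_exp_int (c : ℤ) :
    ∫ θ in (-Real.pi)..Real.pi, Complex.exp (c * I * (θ : ℂ)) =
      if c = 0 then 2 * (Real.pi : ℂ) else 0 := by
  split_ifs with h
  · subst h
    simp
    ring
  · have hc : (c : ℂ) * I ≠ 0 := mul_ne_zero (by exact_mod_cast h) I_ne_zero
    rw [integral_exp_mul_complex hc]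
    have : Complex.exp (c * I * (Real.pi : ℂ)) = Complex.exp (c * I * ((-Real.pi : ℝ) : ℂ)) := by
      rw [Complex.exp_eq_exp_iff_exists_int]
      exact ⟨c, by push_cast; ring⟩
    rw [this, sub_self, zero_div]

/-- the point `e^{-d+iθ}` -/
noncomputable def zz (d θ : ℝ) : ℂ := Complex.exp (-(d : ℂ) + θ * I)

lemma norm_zz (d θ : ℝ) : ‖zz d θ‖ = Real.exp (-d) := by
  simp [zz, Complex.norm_exp]

lemma cauchy_partition {d : ℝ} (hd : 0 < d) (n : ℕ) :
    ∫ θ in (-Real.pi)..Real.pi, Complex.exp (∑' x, lz (zz d θ) x) * Complex.exp (-(n : ℂ) * I * θ) =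
      2 * Real.pi * ((Fintype.card (Nat.Partition n) : ℂ) * (Real.exp (-(n * d)) : ℝ)) := by
  have hzc : Continuous (fun θ => zz d θ) := by unfold zz; fun_prop
  have h := intervalIntegral.hasSum_integral_of_dominated_convergence (μ := MeasureTheory.volume)
    (a := -Real.pi) (b := Real.pi) (ι := ℕ)
    (F := fun k θ => ((Fintype.card (Nat.Partition k) : ℂ) * zz d θ ^ k) *
      Complex.exp (-(n : ℂ) * I * θ))
    (f := fun θ => Complex.exp (∑' x, lz (zz d θ) x) * Complex.exp (-(n : ℂ) * I * θ))
    (fun k _ => (Fintype.card (Nat.Partition k) : ℝ) * Real.exp (-d) ^ k)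
    (fun k => by
      apply Continuous.aestronglyMeasurable
      fun_prop)
    (fun k => Eventually.of_forall fun θ _ => by
      have : ‖Complex.exp (-(n : ℂ) * I * θ)‖ = 1 := by
        rw [show -(n : ℂ) * I * θ = ((-(n : ℝ) * θ : ℝ) : ℂ) * I by push_cast; ring,
          Complex.norm_exp_ofReal_mul_I]
      rw [norm_mul, this, norm_mul, norm_pow, norm_zz]
      simp)
    (Eventually.of_forall fun θ _ => partition_summable hd)
    (by simp)
    (Eventually.of_forall fun θ _ => (partition_hasSum hd (norm_zz d θ)).mul_right _)
  rw [← h.tsum_eq]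
  have e : ∀ k : ℕ, ∫ θ in (-Real.pi)..Real.pi, ((Fintype.card (Nat.Partition k) : ℂ) * zz d θ ^ k) *
      Complex.exp (-(n : ℂ) * I * θ) =
      (Fintype.card (Nat.Partition k) : ℂ) * (Real.exp (-(k * d)) : ℝ) *
        (if ((k : ℤ) - n) = 0 then 2 * (Real.pi : ℂ) else 0) := by
    intro k
    rw [← integral_exp_int, ← intervalIntegral.integral_const_mul]
    congr 1
    ext1 θ
    rw [zz, ← Complex.exp_nat_mul, Complex.ofReal_exp, mul_assoc, ← Complex.exp_add,
      mul_assoc _ (Complex.exp _) (Complex.exp _), ← Complex.exp_add]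
    congr 2
    push_cast; ring
  simp_rw [e]
  rw [tsum_eq_single n]
  · simp; ring
  · intro k hk
    rw [if_neg, mul_zero]
    omega

/-- summand of the centred log characteristic function -/
noncomputable def ee (d θ : ℝ) (x : ℕ × ℕ) : ℂ :=
  (ww d x : ℂ) * (Complex.exp (((mm x * θ : ℝ) : ℂ) * I) - 1 - ((mm x * θ : ℝ) : ℂ) * I)

/-- centred characteristic function -/
noncomputable def hh (d θ : ℝ) : ℂ := Complex.exp (∑' x, ee d θ x)

lemma lz_zz (d θ : ℝ) (x : ℕ × ℕ) :
    lz (zz d θ) x = (ww d x : ℂ) * Complex.exp (((mm x * θ : ℝ) : ℂ) * I) := by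
  unfold lz zz ww mm
  rw [← Complex.exp_nat_mul]
  push_cast
  rw [div_mul_eq_mul_div, ← Complex.exp_add]
  congr 2; ring

lemma ee_summable {d : ℝ} (hd : 0 < d) (θ : ℝ) : Summable (ee d θ) := by
  have h1 := lz_summable hd (norm_zz d θ)
  have h2 := (ww_summable_and hd).1
  have h3 := moment_summable hd 1
  have h2' : Summable (fun x => ((ww d x : ℝ) : ℂ)) := Complex.summable_ofReal.2 h2
  have h3' : Summable (fun x => ((mm x ^ 1 * ww d x : ℝ) : ℂ)) := Complex.summable_ofReal.2 h3
  refine ((h1.sub h2').sub (h3'.mul_right (θ * I))).congr fun x => ?_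
  rw [lz_zz, ee]; push_cast; ring

lemma hh_eq {d : ℝ} (hd : 0 < d) (θ : ℝ) :
    Complex.exp (∑' x, lz (zz d θ) x) * Complex.exp (-(aFun d : ℂ) * I * θ) =
      (Real.exp (∑' x, ww d x) : ℝ) * hh d θ := by
  have h1 := lz_summable hd (norm_zz d θ)
  have h2 := (ww_summable_and hd).1
  have h3 := moment_summable hd 1
  simp only [pow_one] at h3
  have h2' : Summable (fun x => ((ww d x : ℝ) : ℂ)) := Complex.summable_ofReal.2 h2
  have h3' : Summable (fun x => ((mm x * ww d x : ℝ) : ℂ)) := Complex.summable_ofReal.2 h3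
  have : ∑' x, lz (zz d θ) x = ∑' x, ee d θ x + ∑' x, ((ww d x : ℝ) : ℂ)
      + (∑' x, ((mm x * ww d x : ℝ) : ℂ)) * (θ * I) := by
    rw [← tsum_mul_right, ← (ee_summable hd θ).tsum_add h2',
      ← ((ee_summable hd θ).add h2').tsum_add (h3'.mul_right _)]
    congr 1; ext1 x
    rw [lz_zz, ee]; push_cast; ring
  rw [this, aFun_eq_s13 hd, hh, Complex.ofReal_exp, ← Complex.exp_add, ← Complex.exp_add,
    Complex.ofReal_tsum, Complex.ofReal_tsum]
  congr 1; ring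

lemma partition_integral {d : ℝ} (hd : 0 < d) {n : ℕ} (hn : aFun d = n) :
    2 * Real.pi * ((Fintype.card (Nat.Partition n) : ℂ) * (Real.exp (-(n * d)) : ℝ)) =
    (gR (Real.exp (-d)) : ℝ) * ∫ θ in (-Real.pi)..Real.pi, hh d θ := by
  rw [gR_eq hd, ← intervalIntegral.integral_const_mul, ← cauchy_partition hd]
  congr 1; ext1 θ
  rw [← hh_eq hd, hn]; simp

lemma norm_hh {d : ℝ} (hd : 0 < d) (θ : ℝ) :
    ‖hh d θ‖ = Real.exp (-∑' x, ww d x * (1 - Real.cos (mm x * θ))) := by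
  rw [hh, Complex.norm_exp, Complex.re_tsum (ee_summable hd θ), ← tsum_neg]
  congr 2; ext1 x
  rw [ee, Complex.re_ofReal_mul]
  simp only [Complex.sub_re, Complex.exp_ofReal_mul_I_re, Complex.one_re, Complex.re_ofReal_mul,
    Complex.I_re]
  ring

lemma hh_continuous {d : ℝ} (hd : 0 < d) : Continuous (hh d) := by
  have e : hh d = fun θ => (Real.exp (-∑' x, ww d x) : ℝ) * (Complex.exp (∑' x, lz (zz d θ) x) *
      Complex.exp (-(aFun d : ℂ) * I * θ)) := by
    ext1 θ
    rw [hh_eq hd, ← mul_assoc, ← Complex.ofReal_mul, ← Real.exp_add]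
    simp
  rw [e]
  have : Continuous (fun θ => ∑' x, lz (zz d θ) x) := by
    refine continuous_tsum (fun x => ?_) (ww_summable_and hd).1 (fun x θ => (norm_lz (norm_zz d θ) x).le)
    unfold lz zz
    fun_prop
  fun_prop

end cauchy

section bounds

lemma floor_facts {d : ℝ} (hd : 0 < d) (hd1 : d ≤ 1) :
    ∃ N : ℕ, 1 ≤ N ∧ (N : ℝ) * d ≤ 1 ∧ 1 ≤ 2 * N * d := by
  have h1 : (1 : ℝ) ≤ 1 / d := by rw [le_div_iff₀ hd]; linarith
  have hN : 1 ≤ ⌊1 / d⌋₊ := by rw [Nat.one_le_floor_iff]; exact h1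
  refine ⟨⌊1 / d⌋₊, hN, ?_, ?_⟩
  · have := Nat.floor_le (a := 1 / d) (by positivity)
    rwa [le_div_iff₀ hd] at this
  · have := Nat.lt_floor_add_one (1 / d)
    rw [div_lt_iff₀ hd] at this
    have h2 : (1 : ℝ) ≤ (⌊1 / d⌋₊ : ℝ) := by exact_mod_cast hN
    nlinarith

lemma row_le {d : ℝ} (hd : 0 < d) {N : ℕ} (hN : (N : ℝ) * d ≤ 1) {f : ℝ → ℝ} (hf : ∀ y, 0 ≤ f y)
    (hs : Summable (fun x => ww d x * f (mm x))) :
    Real.exp (-1) * ∑ j ∈ Finset.range N, f ((j : ℝ) + 1) ≤ ∑' x, ww d x * f (mm x) := by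
  have h := hs.sum_le_tsum (Finset.range N ×ˢ {0}) (fun x _ => mul_nonneg (ww_pos d x).le (hf _))
  refine le_trans ?_ h
  rw [Finset.sum_product, Finset.mul_sum]
  refine Finset.sum_le_sum fun j hj => ?_
  rw [Finset.sum_singleton]
  have e : mm (j, 0) = (j : ℝ) + 1 := by simp [mm]
  have e2 : ww d (j, 0) = Real.exp (-(((j : ℝ) + 1) * d)) := by simp [ww, mm]
  rw [e, e2]
  refine mul_le_mul_of_nonneg_right ?_ (hf _)
  rw [Real.exp_le_exp]
  have : (j : ℝ) + 1 ≤ N := by exact_mod_cast Finset.mem_range.1 hj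
  nlinarith

lemma sum_sq_ge (N : ℕ) : (N : ℝ) ^ 3 / 3 ≤ ∑ j ∈ Finset.range N, ((j : ℝ) + 1) ^ 2 := by
  induction N with
  | zero => simp
  | succ N ih =>
    rw [Finset.sum_range_succ]; push_cast
    have : (0 : ℝ) ≤ N := Nat.cast_nonneg N
    nlinarith

lemma bFun_ge {d : ℝ} (hd : 0 < d) {N : ℕ} (hN : (N : ℝ) * d ≤ 1) :
    Real.exp (-1) * ((N : ℝ) ^ 3 / 3) ≤ bFun d := by
  have hs := moment_summable hd 2
  have h := row_le hd hN (f := fun y => y ^ 2) (fun y => sq_nonneg y) (by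
    refine hs.congr fun x => by ring)
  rw [bFun_eq hd]
  have e : ∑' x, mm x ^ 2 * ww d x = ∑' x, ww d x * mm x ^ 2 := by
    congr 1; ext1 x; ring
  rw [e]
  refine le_trans ?_ h
  have := sum_sq_ge N
  gcongr

lemma bFun_le {d : ℝ} (hd : 0 < d) {N : ℕ} (hN : 1 ≤ 2 * N * d) :
    bFun d ≤ 128 * cz * (N : ℝ) ^ 3 := by
  rw [bFun_eq hd]
  refine (moment_le hd 2).trans ?_
  rw [div_le_iff₀ (by positivity)]
  have h : (1 : ℝ) ≤ (2 * N * d) ^ 3 := one_le_pow₀ hN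
  have hc := cz_pos
  norm_num [Nat.factorial]
  nlinarith

lemma cos_sum (N : ℕ) (θ : ℝ) :
    2 * Real.sin (θ / 2) * ∑ j ∈ Finset.range N, (1 - Real.cos (((j : ℝ) + 1) * θ)) =
      2 * N * Real.sin (θ / 2) + Real.sin (θ / 2) - Real.sin (((N : ℝ) + 1 / 2) * θ) := by
  induction N with
  | zero =>
    simp
    rw [show (2 : ℝ)⁻¹ * θ = θ / 2 by ring]; ring
  | succ N ih =>
    rw [Finset.sum_range_succ, mul_add, ih]
    have h1 : Real.sin (((N : ℝ) + 1 / 2) * θ) =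
      Real.sin (((N : ℝ) + 1) * θ) * Real.cos (θ / 2) - Real.cos (((N : ℝ) + 1) * θ) * Real.sin (θ / 2) := by
      rw [← Real.sin_sub]; congr 1; ring
    have h2 : Real.sin ((((N + 1 : ℕ) : ℝ) + 1 / 2) * θ) =
      Real.sin (((N : ℝ) + 1) * θ) * Real.cos (θ / 2) + Real.cos (((N : ℝ) + 1) * θ) * Real.sin (θ / 2) := by
      rw [← Real.sin_add]; congr 1; push_cast; ring
    rw [h1, h2]; push_cast; ring

lemma cos_sum_large {N : ℕ} (hN : 1 ≤ N) {θ : ℝ} (h1 : Real.pi / N ≤ θ) (h2 : θ ≤ Real.pi) :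
    (N : ℝ) / 2 ≤ ∑ j ∈ Finset.range N, (1 - Real.cos (((j : ℝ) + 1) * θ)) := by
  have hNp : (1 : ℝ) ≤ N := by exact_mod_cast hN
  have hpi := Real.pi_pos
  have hθ : 0 < θ := lt_of_lt_of_le (by positivity) h1
  have hs := Real.mul_le_sin (x := θ / 2) (by positivity) (by linarith)
  have hs2 : 1 / (N : ℝ) ≤ Real.sin (θ / 2) := by
    refine le_trans ?_ hs
    have : 2 / Real.pi * (θ / 2) = θ / Real.pi := by ring
    rw [this, le_div_iff₀ hpi]
    calc 1 / (N : ℝ) * Real.pi = Real.pi / N := by ring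
      _ ≤ θ := h1
  have hs3 : 1 ≤ N * Real.sin (θ / 2) := by
    rw [div_le_iff₀ (by positivity)] at hs2; linarith
  have hsp : 0 < Real.sin (θ / 2) := lt_of_lt_of_le (by positivity) hs2
  have h := cos_sum N θ
  have h4 := Real.sin_le_one (((N : ℝ) + 1 / 2) * θ)
  by_contra hcon
  push Not at hcon
  have := mul_lt_mul_of_pos_left hcon (by positivity : 0 < 2 * Real.sin (θ / 2))
  nlinarith

lemma cos_sum_small {N : ℕ} (hN : 1 ≤ N) {θ : ℝ} (h1 : |θ| ≤ Real.pi / N) :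
    2 / Real.pi ^ 2 * θ ^ 2 * ((N : ℝ) ^ 3 / 3) ≤
      ∑ j ∈ Finset.range N, (1 - Real.cos (((j : ℝ) + 1) * θ)) := by
  have hNp : (1 : ℝ) ≤ N := by exact_mod_cast hN
  have hpi := Real.pi_pos
  refine le_trans (mul_le_mul_of_nonneg_left (sum_sq_ge N) (by positivity)) ?_
  rw [Finset.mul_sum]
  refine Finset.sum_le_sum fun j hj => ?_
  have hj' : (j : ℝ) + 1 ≤ N := by exact_mod_cast Finset.mem_range.1 hj
  have := Real.cos_le_one_sub_mul_cos_sq (x := ((j : ℝ) + 1) * θ) (by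
    rw [abs_mul, abs_of_pos (by positivity)]
    rw [le_div_iff₀ (by positivity)] at h1
    nlinarith [abs_nonneg θ])
  nlinarith

lemma norm_hh_le {d : ℝ} (hd : 0 < d) {N : ℕ} (hN : (N : ℝ) * d ≤ 1) (θ : ℝ) :
    ‖hh d θ‖ ≤ Real.exp (-(Real.exp (-1) *
      ∑ j ∈ Finset.range N, (1 - Real.cos (((j : ℝ) + 1) * |θ|)))) := by
  rw [norm_hh hd, Real.exp_le_exp, neg_le_neg_iff]
  have e : ∀ x, Real.cos (mm x * θ) = Real.cos (mm x * |θ|) := fun x => by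
    rcases abs_choice θ with h | h <;> rw [h]
    rw [mul_neg, Real.cos_neg]
  simp_rw [e]
  refine row_le hd hN (f := fun y => 1 - Real.cos (y * |θ|))
    (fun y => sub_nonneg.2 (Real.cos_le_one _)) ?_
  refine Summable.of_nonneg_of_le (fun x => mul_nonneg (ww_pos d x).le
    (sub_nonneg.2 (Real.cos_le_one _))) (fun x => ?_) ((ww_summable_and hd).1.mul_right 2)
  have := Real.neg_one_le_cos (mm x * |θ|)
  exact mul_le_mul_of_nonneg_left (by linarith) (ww_pos d x).le

lemma hh_dominated : ∃ C : ℝ, ∀ d : ℝ, 0 < d → d ≤ 1 → ∀ θ : ℝ, |θ| ≤ Real.pi →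
    ‖hh d θ‖ ≤ C * (1 + θ ^ 2 * bFun d)⁻¹ := by
  have hpi := Real.pi_pos
  have hcz := cz_pos
  set e1 := Real.exp (-1) with he1
  have he : 0 < e1 := Real.exp_pos _
  set K := 128 * cz with hK
  have hKp : 0 < K := by positivity
  set c1 := e1 * (2 / Real.pi ^ 2 / 3) with hc1
  have hc1p : 0 < c1 := by positivity
  refine ⟨(1 + K / c1) + (1 + Real.pi ^ 2 * K * (6 / (e1 / 2) ^ 3)), ?_⟩
  intro d hd hd1 θ hθ
  obtain ⟨N, hN1, hNd, hNd2⟩ := floor_facts hd hd1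
  have hNp : (1 : ℝ) ≤ N := by exact_mod_cast hN1
  have hb := bFun_le hd hNd2
  have hb0 : 0 ≤ bFun d := le_trans (by positivity) (bFun_ge hd hNd)
  have hn := norm_hh_le hd hNd θ
  have hden : 0 < 1 + θ ^ 2 * bFun d := by positivity
  rw [← div_eq_mul_inv, le_div_iff₀ hden]
  have fin : ∀ u A : ℝ, ∀ S : ℝ, 0 ≤ A → u ≤ e1 * S →
      ‖hh d θ‖ ≤ Real.exp (-(e1 * S)) → 1 + θ ^ 2 * bFun d ≤ A * Real.exp u →
      ‖hh d θ‖ * (1 + θ ^ 2 * bFun d) ≤ A := by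
    intro u A S hA h1 h2 h3
    have h4 : ‖hh d θ‖ ≤ Real.exp (-u) := h2.trans (Real.exp_le_exp.2 (by linarith))
    calc _ ≤ Real.exp (-u) * (A * Real.exp u) := by gcongr
      _ = A * (Real.exp (-u) * Real.exp u) := by ring
      _ = A := by rw [← Real.exp_add]; simp
  rcases le_total |θ| (Real.pi / N) with hc | hc
  · have hs := cos_sum_small hN1 (θ := |θ|) (by rwa [abs_abs])
    have := fin (c1 * (θ ^ 2 * N ^ 3)) (1 + K / c1) _ (by positivity) (by
        refine le_trans (le_of_eq ?_) (mul_le_mul_of_nonneg_left hs he.le)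
        rw [sq_abs, hc1]; ring) hn (by
        have hu : 0 ≤ c1 * (θ ^ 2 * N ^ 3) := by positivity
        have h5 : θ ^ 2 * bFun d ≤ K / c1 * (c1 * (θ ^ 2 * N ^ 3)) := by
          have : K / c1 * (c1 * (θ ^ 2 * N ^ 3)) = θ ^ 2 * (K * N ^ 3) := by field_simp
          rw [this]; gcongr
        have h6 := Real.add_one_le_exp (c1 * (θ ^ 2 * N ^ 3))
        have hq : 0 < K / c1 := by positivity
        nlinarith)
    have h7 : 0 ≤ (1 + Real.pi ^ 2 * K * (6 / (e1 / 2) ^ 3)) := by positivity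
    linarith
  · have hs := cos_sum_large hN1 hc hθ
    have := fin (e1 / 2 * N) (1 + Real.pi ^ 2 * K * (6 / (e1 / 2) ^ 3)) _ (by positivity) (by
        refine le_trans (le_of_eq ?_) (mul_le_mul_of_nonneg_left hs he.le)
        ring) hn (by
        have hθ2 : θ ^ 2 ≤ Real.pi ^ 2 := by
          rw [← sq_abs θ]; gcongr
        have h5 : θ ^ 2 * bFun d ≤ Real.pi ^ 2 * (K * N ^ 3) := by gcongr
        have h6 := Real.pow_div_factorial_le_exp (e1 / 2 * N) (by positivity) 3
        have h8 := Real.one_le_exp (x := e1 / 2 * N) (by positivity)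
        have h9 : Real.pi ^ 2 * (K * N ^ 3) =
          Real.pi ^ 2 * K * (6 / (e1 / 2) ^ 3) * ((e1 / 2 * N) ^ 3 / (Nat.factorial 3 : ℕ)) := by
          norm_num [Nat.factorial]; field_simp
        rw [h9] at h5
        have h10 : 0 ≤ Real.pi ^ 2 * K * (6 / (e1 / 2) ^ 3) := by positivity
        have := mul_le_mul_of_nonneg_left h6 h10
        linarith)
    have h7 : 0 ≤ (1 + K / c1) := by positivity
    linarith

lemma taylor3 (y : ℝ) : ‖Complex.exp ((y : ℂ) * Complex.I) - 1 - (y : ℂ) * Complex.I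
    + ((y ^ 2 / 2 : ℝ) : ℂ)‖ ≤ 4 * |y| ^ 3 := by
  have hny : ‖(y : ℂ) * Complex.I‖ = |y| := by simp
  rcases le_total |y| 1 with h | h
  · have h1 := Complex.norm_exp_sub_sum_le_norm_mul_exp ((y : ℂ) * Complex.I) 3
    rw [hny] at h1
    have e : Complex.exp ((y : ℂ) * Complex.I) - 1 - (y : ℂ) * Complex.I + ((y ^ 2 / 2 : ℝ) : ℂ) =
      Complex.exp ((y : ℂ) * Complex.I) -
        ∑ m ∈ Finset.range 3, ((y : ℂ) * Complex.I) ^ m / (m.factorial : ℂ) := by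
      simp [Finset.sum_range_succ, mul_pow]; ring
    rw [e]
    refine h1.trans ?_
    have h2 : Real.exp |y| ≤ 4 := by
      have := Real.exp_one_lt_d9
      have h3 := Real.exp_le_exp.2 h
      linarith
    nlinarith [pow_nonneg (abs_nonneg y) 3]
  · have h1 : ‖Complex.exp ((y : ℂ) * Complex.I)‖ = 1 := Complex.norm_exp_ofReal_mul_I y
    have h2 : ‖((y ^ 2 / 2 : ℝ) : ℂ)‖ = |y| ^ 2 / 2 := by
      rw [Complex.norm_real, Real.norm_eq_abs, abs_of_nonneg (by positivity), sq_abs]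
    have h3 := norm_add_le (Complex.exp ((y : ℂ) * Complex.I) - 1 - (y : ℂ) * Complex.I)
      ((y ^ 2 / 2 : ℝ) : ℂ)
    have h4 := norm_sub_le (Complex.exp ((y : ℂ) * Complex.I) - 1) ((y : ℂ) * Complex.I)
    have h5 := norm_sub_le (Complex.exp ((y : ℂ) * Complex.I)) 1
    rw [h1, norm_one] at h5
    rw [hny] at h4
    rw [h2] at h3
    have h6 : 1 ≤ |y| ^ 2 := one_le_pow₀ h
    have h7 : |y| ^ 2 ≤ |y| ^ 3 := pow_le_pow_right₀ h (by norm_num)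
    have h8 : |y| ≤ |y| ^ 2 := by nlinarith
    linarith

lemma log_hh_approx {d : ℝ} (hd : 0 < d) (θ : ℝ) :
    ‖∑' x, ee d θ x + ((bFun d * θ ^ 2 / 2 : ℝ) : ℂ)‖ ≤ 4 * (96 * cz / d ^ 4) * |θ| ^ 3 := by
  have h2 := moment_summable hd 2
  have h3 := moment_summable hd 3
  have h2' : Summable (fun x => ((mm x ^ 2 * ww d x : ℝ) : ℂ)) := Complex.summable_ofReal.2 h2
  have e : ∑' x, ee d θ x + ((bFun d * θ ^ 2 / 2 : ℝ) : ℂ) =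
      ∑' x, (ee d θ x + ((mm x ^ 2 * ww d x : ℝ) : ℂ) * ((θ ^ 2 / 2 : ℝ) : ℂ)) := by
    rw [(ee_summable hd θ).tsum_add (h2'.mul_right _), tsum_mul_right, bFun_eq hd,
      ← Complex.ofReal_tsum]
    push_cast; ring
  have hb : ∀ x, ‖ee d θ x + ((mm x ^ 2 * ww d x : ℝ) : ℂ) * ((θ ^ 2 / 2 : ℝ) : ℂ)‖ ≤
      mm x ^ 3 * ww d x * (4 * |θ| ^ 3) := by
    intro x
    have e2 : ee d θ x + ((mm x ^ 2 * ww d x : ℝ) : ℂ) * ((θ ^ 2 / 2 : ℝ) : ℂ) =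
      (ww d x : ℂ) * (Complex.exp (((mm x * θ : ℝ) : ℂ) * Complex.I) - 1
        - ((mm x * θ : ℝ) : ℂ) * Complex.I + (((mm x * θ) ^ 2 / 2 : ℝ) : ℂ)) := by
      rw [ee]; push_cast; ring
    rw [e2, norm_mul, Complex.norm_real, Real.norm_eq_abs, abs_of_pos (ww_pos d x)]
    have := mul_le_mul_of_nonneg_left (taylor3 (mm x * θ)) (ww_pos d x).le
    refine this.trans (le_of_eq ?_)
    rw [abs_mul, abs_of_pos (mm_pos x)]; ring
  rw [e]
  refine (tsum_of_norm_bounded (h3.mul_right _).hasSum hb).trans ?_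
  rw [tsum_mul_right]
  have h4 := moment_le hd 3
  norm_num [Nat.factorial] at h4
  have h5 : 0 ≤ 4 * |θ| ^ 3 := by positivity
  have := mul_le_mul_of_nonneg_right h4 h5
  refine this.trans (le_of_eq ?_)
  ring

end bounds

section final

lemma sqrt_b_ge {d : ℝ} (hd : 0 < d) (hd1 : d ≤ 1) :
    Real.sqrt (Real.exp (-1) / 24) / Real.sqrt d ^ 3 ≤ Real.sqrt (bFun d) := by
  obtain ⟨N, hN1, hNd, hNd2⟩ := floor_facts hd hd1
  have h := bFun_ge hd hNd
  apply Real.le_sqrt_of_sq_le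
  rw [div_pow, Real.sq_sqrt (by positivity), ← pow_mul, mul_comm 3 2, pow_mul, Real.sq_sqrt hd.le]
  refine le_trans ?_ h
  rw [div_le_iff₀ (by positivity)]
  have h1 : (1 : ℝ) ≤ (2 * N * d) ^ 3 := one_le_pow₀ hNd2
  have := Real.exp_pos (-1)
  nlinarith

lemma sqrt_b_tendsto : Tendsto (fun d => Real.sqrt (bFun d)) (𝓝[>] 0) atTop := by
  have hs : Tendsto (fun d : ℝ => Real.sqrt d ^ 3) (𝓝[>] 0) (𝓝[>] 0) := by
    refine tendsto_nhdsWithin_iff.2 ⟨?_, ?_⟩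
    · have : Continuous (fun d : ℝ => Real.sqrt d ^ 3) := by fun_prop
      have h := (this.tendsto 0).mono_left (nhdsWithin_le_nhds (s := Set.Ioi 0))
      simpa using h
    · filter_upwards [self_mem_nhdsWithin] with d hd
      have : 0 < d := hd
      simp only [Set.mem_Ioi]; positivity
  have h2 := (tendsto_inv_nhdsGT_zero.comp hs).const_mul_atTop
    (r := Real.sqrt (Real.exp (-1) / 24)) (by positivity)
  refine tendsto_atTop_mono' _ ?_ h2
  filter_upwards [Ioc_mem_nhdsGT (zero_lt_one' ℝ)] with d hd
  have := sqrt_b_ge hd.1 hd.2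
  rwa [div_eq_mul_inv] at this

lemma hh_pointwise (t : ℝ) :
    Tendsto (fun d => hh d (t / Real.sqrt (bFun d))) (𝓝[>] 0)
      (𝓝 ((Real.exp (-(1 / 2) * t ^ 2) : ℝ) : ℂ)) := by
  set c := Real.sqrt (Real.exp (-1) / 24) with hc
  have hcp : 0 < c := by positivity
  have key : Tendsto (fun d => ∑' x, ee d (t / Real.sqrt (bFun d)) x) (𝓝[>] 0)
      (𝓝 ((-(1 / 2) * t ^ 2 : ℝ) : ℂ)) := by
    rw [tendsto_iff_norm_sub_tendsto_zero]
    have hlim : Tendsto (fun d : ℝ => 384 * cz * |t| ^ 3 / c ^ 3 * Real.sqrt d) (𝓝[>] 0) (𝓝 0) := by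
      have : Continuous (fun d : ℝ => 384 * cz * |t| ^ 3 / c ^ 3 * Real.sqrt d) := by fun_prop
      have h := (this.tendsto 0).mono_left (nhdsWithin_le_nhds (s := Set.Ioi 0))
      simpa using h
    refine tendsto_of_tendsto_of_tendsto_of_le_of_le' tendsto_const_nhds hlim
      (Eventually.of_forall fun d => norm_nonneg _) ?_
    filter_upwards [Ioc_mem_nhdsGT (zero_lt_one' ℝ)] with d hd
    have hd0 : 0 < d := hd.1
    have hs := sqrt_b_ge hd.1 hd.2
    have hsd : 0 < Real.sqrt d := Real.sqrt_pos.2 hd0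
    have hsb : 0 < Real.sqrt (bFun d) := lt_of_lt_of_le (by positivity) hs
    have hb : 0 < bFun d := Real.sqrt_pos.1 hsb
    have h := log_hh_approx hd0 (t / Real.sqrt (bFun d))
    have e : bFun d * (t / Real.sqrt (bFun d)) ^ 2 / 2 = -(-(1 / 2) * t ^ 2) := by
      rw [div_pow, Real.sq_sqrt hb.le]; field_simp
    rw [e, Complex.ofReal_neg, ← sub_eq_add_neg] at h
    refine h.trans ?_
    rw [abs_div, abs_of_pos hsb, div_pow]
    have h3 : (c / Real.sqrt d ^ 3) ^ 3 ≤ Real.sqrt (bFun d) ^ 3 := by gcongr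
    have hcz := cz_pos
    calc 4 * (96 * cz / d ^ 4) * (|t| ^ 3 / Real.sqrt (bFun d) ^ 3)
        ≤ 4 * (96 * cz / d ^ 4) * (|t| ^ 3 / (c / Real.sqrt d ^ 3) ^ 3) := by gcongr
      _ = 384 * cz * |t| ^ 3 / c ^ 3 * Real.sqrt d := by
        have hd4 : d ^ 4 = Real.sqrt d ^ 8 := by
          rw [show 8 = 2 * 4 by norm_num, pow_mul, Real.sq_sqrt hd0.le]
        rw [hd4]
        field_simp
        ring
  have := (Complex.continuous_exp.tendsto _).comp key
  rw [Complex.ofReal_exp]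
  exact this

lemma integral_limit :
    Tendsto (fun d => (Real.sqrt (bFun d) : ℂ) * ∫ θ in (-Real.pi)..Real.pi, hh d θ) (𝓝[>] 0)
      (𝓝 ((Real.sqrt (2 * Real.pi) : ℝ) : ℂ)) := by
  have hpi := Real.pi_pos
  obtain ⟨C, hC⟩ := hh_dominated
  have hlimval : ((Real.sqrt (2 * Real.pi) : ℝ) : ℂ) =
      ∫ t : ℝ, ((Real.exp (-(1 / 2) * t ^ 2) : ℝ) : ℂ) := by
    rw [integral_complex_ofReal, integral_gaussian]
    congr 2; ring
  have hdom := MeasureTheory.tendsto_integral_filter_of_dominated_convergence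
    (μ := MeasureTheory.volume) (l := 𝓝[>] (0 : ℝ))
    (F := fun d t => Set.indicator (Set.Ioc (-Real.pi * Real.sqrt (bFun d))
      (Real.pi * Real.sqrt (bFun d))) (fun t => hh d (t / Real.sqrt (bFun d))) t)
    (f := fun t => ((Real.exp (-(1 / 2) * t ^ 2) : ℝ) : ℂ))
    (fun t => C * (1 + t ^ 2)⁻¹) ?_ ?_ (integrable_inv_one_add_sq.const_mul C) ?_
  · rw [hlimval]
    refine hdom.congr' ?_
    filter_upwards [Ioc_mem_nhdsGT (zero_lt_one' ℝ)] with d hd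
    have hs := sqrt_b_ge hd.1 hd.2
    have hsd : 0 < Real.sqrt d := Real.sqrt_pos.2 hd.1
    have hsb : 0 < Real.sqrt (bFun d) := lt_of_lt_of_le (by positivity) hs
    rw [MeasureTheory.integral_indicator measurableSet_Ioc,
      ← intervalIntegral.integral_of_le (by nlinarith),
      intervalIntegral.integral_comp_div _ hsb.ne', mul_div_cancel_right₀ _ hsb.ne',
      mul_div_cancel_right₀ _ hsb.ne', Complex.real_smul]
  · filter_upwards [self_mem_nhdsWithin] with d hd
    have hc := hh_continuous (show 0 < d from hd)
    refine (Continuous.aestronglyMeasurable ?_).indicator measurableSet_Ioc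
    fun_prop
  · filter_upwards [Ioc_mem_nhdsGT (zero_lt_one' ℝ)] with d hd
    have hs := sqrt_b_ge hd.1 hd.2
    have hsd : 0 < Real.sqrt d := Real.sqrt_pos.2 hd.1
    have hsb : 0 < Real.sqrt (bFun d) := lt_of_lt_of_le (by positivity) hs
    have hb : 0 < bFun d := Real.sqrt_pos.1 hsb
    have hC0 : 0 ≤ C := by
      have := hC d hd.1 hd.2 0 (by simpa using hpi.le)
      simp only [ne_eq, OfNat.ofNat_ne_zero, not_false_eq_true, zero_pow, zero_mul, add_zero,
        inv_one, mul_one] at this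
      exact (norm_nonneg _).trans this
    refine Eventually.of_forall fun t => ?_
    by_cases ht : t ∈ Set.Ioc (-Real.pi * Real.sqrt (bFun d)) (Real.pi * Real.sqrt (bFun d))
    · rw [Set.indicator_of_mem ht]
      have h := hC d hd.1 hd.2 (t / Real.sqrt (bFun d)) (by
        rw [abs_div, abs_of_pos hsb, div_le_iff₀ hsb, abs_le]
        exact ⟨by linarith [ht.1], ht.2⟩)
      rwa [div_pow, Real.sq_sqrt hb.le, div_mul_cancel₀ _ hb.ne'] at h
    · rw [Set.indicator_of_notMem ht, norm_zero]
      positivity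
  · refine Eventually.of_forall fun t => ?_
    refine (hh_pointwise t).congr' ?_
    filter_upwards [sqrt_b_tendsto.eventually_gt_atTop (|t| / Real.pi)] with d hd
    rw [Set.indicator_of_mem]
    rw [div_lt_iff₀ hpi] at hd
    have := abs_lt.1 hd
    exact ⟨by linarith, by linarith⟩

end final


/-- **Saddle point formula for `p(n)`** (formula (25) of the paper, Hayman's theorem
applied to the Euler product): with `d_n` the unique positive solution of
`Σ_{j≥1} j·e^{−jd}/(1 − e^{−jd}) = n` and `b_n = Σ_{j≥1} j²·e^{−j d_n}/(1 − e^{−j d_n})²`,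
`p(n) ∼ e^{n d_n}·g(e^{−d_n})/√(2π·b_n)` as `n → ∞`. -/
theorem partition_count_saddle_point (d : ℕ → ℝ)
    (hd : ∀ n : ℕ, 0 < n → 0 < d n ∧ aFun (d n) = n) :
    Asymptotics.IsEquivalent atTop
      (fun n : ℕ => (Fintype.card (Nat.Partition n) : ℝ))
      (fun n : ℕ =>
        Real.exp (n * d n) * gR (Real.exp (-(d n))) /
          Real.sqrt (2 * Real.pi * bFun (d n))) := by
  have hpi := Real.pi_pos
  have hcz := cz_pos
  -- d n → 0+
  have hle : ∀ n : ℕ, 0 < n → d n ≤ Real.sqrt (4 * cz / n) := by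
    intro n hn
    obtain ⟨h1, h2⟩ := hd n hn
    have hnp : (0 : ℝ) < n := by exact_mod_cast hn
    have h3 := moment_le h1 1
    simp only [pow_one] at h3
    rw [← aFun_eq_s13 h1, h2, le_div_iff₀ (by positivity)] at h3
    norm_num at h3
    apply Real.le_sqrt_of_sq_le
    rw [le_div_iff₀ hnp]
    linarith
  have hd0 : Tendsto d atTop (𝓝[>] 0) := by
    refine tendsto_nhdsWithin_iff.2 ⟨?_, ?_⟩
    · have hl : Tendsto (fun n : ℕ => Real.sqrt (4 * cz / n)) atTop (𝓝 0) := by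
        have := (Real.continuous_sqrt.tendsto 0).comp (tendsto_const_div_atTop_nhds_zero_nat (4 * cz))
        simpa [Function.comp_def] using this
      refine tendsto_of_tendsto_of_tendsto_of_le_of_le' tendsto_const_nhds hl ?_ ?_
      · filter_upwards [eventually_gt_atTop 0] with n hn using (hd n hn).1.le
      · filter_upwards [eventually_gt_atTop 0] with n hn using hle n hn
    · filter_upwards [eventually_gt_atTop 0] with n hn using (hd n hn).1
  have hI := integral_limit.comp hd0
  have hI2 := (Complex.continuous_re.tendsto _).comp (hI.div_const ((Real.sqrt (2 * Real.pi) : ℝ) : ℂ))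
  have hs0 : 0 < Real.sqrt (2 * Real.pi) := by positivity
  rw [div_self (by exact_mod_cast hs0.ne'), Complex.one_re] at hI2
  refine isEquivalent_of_tendsto_one (hI2.congr' ?_)
  filter_upwards [eventually_gt_atTop 0] with n hn
  obtain ⟨h1, h2⟩ := hd n hn
  have hp := partition_integral h1 h2
  have hg : 0 < gR (Real.exp (-(d n))) := by rw [gR_eq h1]; exact Real.exp_pos _
  have hgc : ((gR (Real.exp (-(d n))) : ℝ) : ℂ) ≠ 0 := by exact_mod_cast hg.ne'
  have hint : ∫ θ in (-Real.pi)..Real.pi, hh (d n) θ =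
      ((2 * Real.pi * (Fintype.card (Nat.Partition n) * Real.exp (-(n * d n))) /
        gR (Real.exp (-(d n))) : ℝ) : ℂ) := by
    rw [eq_comm]
    push_cast at hp ⊢
    rw [hp]
    field_simp
  simp only [Function.comp_apply, Pi.div_apply]
  rw [hint, ← Complex.ofReal_mul, ← Complex.ofReal_div, Complex.ofReal_re, Real.exp_neg,
    Real.sqrt_mul (by positivity) (bFun (d n))]
  have hsq : Real.sqrt (2 * Real.pi) ^ 2 = 2 * Real.pi := Real.sq_sqrt (by positivity)
  have hex := Real.exp_pos (n * d n)
  field_simp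
  rw [hsq]
  ring
end
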